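/- Let a ≥ 0 and let (q,r) be an a-admissible pair, with conjugate exponents q', r'. There exists a constant C(a,r) > 0 such that for every φ ∈ 𝒮⁺ and F ∈ 𝕊⁺, the function u(x,t) = ∫₀^∞ S_a(x,y,t) φ(y) y^a dy + ∫₀^t ∫₀^∞ S_a(x,y,t−s) F(y,s) y^a dy ds satisfies the Strichartz estimate ‖u‖_{L^q_t L^r_a} ≤ C(a,r) (‖φ‖_{L²_a} + ‖F‖_{L^{q'}_t L^{r'}_a}). -/

import Mathlib

open MeasureTheory Filter Set

noncomputable def besselJ (ν : ℂ) (z : ℝ) : ℂ :=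
  ∑' k : ℕ, ((-1 : ℂ) ^ k / (Complex.Gamma (k + 1) * Complex.Gamma (ν + k + 1))) *
    ((z : ℂ) / 2) ^ (2 * (k : ℂ) + ν)

noncomputable def DIter : ℕ → (ℝ → ℂ) → (ℝ → ℂ)
  | 0, φ => φ
  | k + 1, φ => fun x => (1 / (x : ℂ)) * deriv (DIter k φ) x

def SPlus (φ : ℝ → ℂ) : Prop :=
  ContDiffOn ℝ (⊤ : ℕ∞) φ (Ioi 0) ∧
  ∀ m k : ℕ, ∃ C : ℝ, ∀ x > (0:ℝ), ‖(x : ℂ) ^ m * DIter k φ x‖ ≤ C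

noncomputable def Skernel (a x y t : ℝ) : ℂ :=
  if 0 < t then
    Complex.exp (-(Complex.I) * (((a + 1) * Real.pi / 4 : ℝ) : ℂ)) *
      (((2 * |t|) ^ (-(a + 1) / 2) : ℝ) : ℂ) *
      (((x * y / (2 * |t|)) ^ ((1 - a) / 2) : ℝ) : ℂ) *
      besselJ (((a - 1) / 2 : ℝ) : ℂ) (x * y / (2 * |t|)) *
      Complex.exp (Complex.I * ((((x ^ 2 + y ^ 2) / (4 * |t|)) : ℝ) : ℂ))
  else
    Complex.exp ((Complex.I) * (((a + 1) * Real.pi / 4 : ℝ) : ℂ)) *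
      (((2 * |t|) ^ (-(a + 1) / 2) : ℝ) : ℂ) *
      (((x * y / (2 * |t|)) ^ ((1 - a) / 2) : ℝ) : ℂ) *
      besselJ (((a - 1) / 2 : ℝ) : ℂ) (x * y / (2 * |t|)) *
      Complex.exp (-(Complex.I) * ((((x ^ 2 + y ^ 2) / (4 * |t|)) : ℝ) : ℂ))

noncomputable def Sop (a t : ℝ) (φ : ℝ → ℂ) (x : ℝ) : ℂ :=
  ∫ y in Ioi (0:ℝ), Skernel a x y t * φ y * ((y ^ a : ℝ) : ℂ)

noncomputable def LrA (a r : ℝ) (f : ℝ → ℂ) : ℝ :=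
  (∫ x in Ioi (0:ℝ), ‖f x‖ ^ r * x ^ a) ^ (1 / r)

noncomputable def mixedNorm (a q r : ℝ) (u : ℝ → ℝ → ℂ) : ℝ :=
  (∫ t : ℝ, LrA a r (fun x => u x t) ^ q) ^ (1 / q)

def Admissible (a q r : ℝ) : Prop :=
  2 < r ∧ (1 < a → r < 2 * (a + 1) / (a - 1)) ∧ 2 / q = (a + 1) * (1 / 2 - 1 / r)

noncomputable def DxIter : ℕ → (ℝ → ℝ → ℂ) → (ℝ → ℝ → ℂ)
  | 0, F => F
  | k + 1, F => fun x t => (1 / (x : ℂ)) * deriv (fun x' => DxIter k F x' t) x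

noncomputable def DtIter (l : ℕ) (F : ℝ → ℝ → ℂ) : ℝ → ℝ → ℂ :=
  fun x t => iteratedDeriv l (fun t' => F x t') t

def SPlusT (F : ℝ → ℝ → ℂ) : Prop :=
  ContDiffOn ℝ (⊤ : ℕ∞) (fun p : ℝ × ℝ => F p.1 p.2) (Ioi 0 ×ˢ univ) ∧
  ∀ p : ℕ, ∃ C : ℝ, ∀ k l : ℕ, k + l ≤ p → ∀ x > (0:ℝ), ∀ t : ℝ,
    (1 + x ^ 2 + t ^ 2) ^ ((p : ℝ) / 2) * ‖DxIter k (DtIter l F) x t‖ ≤ C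

open scoped ENNReal NNReal Topology ComplexConjugate

/-!
For `a ≥ 0` Poisson's integral bounds the normalised Bessel function on the real axis, hence the
Schrödinger kernel by a multiple of `|t| ^ (-(a + 1) / 2)`, and more precisely on the complex plane,
which makes the same bound survive a Gaussian regularisation of `U_t U_s = U_{t+s}`. Weber's second
exponential integral evaluates the regularised `TT*` kernel of the Hankel transform, and Schur's
test with this positive kernel gives the `L²` bound. Real interpolation between the two bounds
yields `L^{r'} → L^r` decay of order `|t| ^ (-2 / q)`, and the Hardy–Littlewood–Sobolev inequality
in time integrates it because `2 < q`.

The `TT*` argument then controls `U_t φ`. Time truncation of the source by `∫₀ᵗ` costs nothing: the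
decay estimate is an absolute bound, so the mixed-norm duality is applied once to the majorant
`|U_t φ| + ∫ |U_{t-s} F_s| ds` over the whole line.
-/

section BesselClifford

open scoped Nat

/-- The Bessel–Clifford function `z ↦ ∑ zᵏ / (k! Γ(ν + k + 1))`, the entire function for which
`J_ν(z) = (z / 2) ^ ν * besselClifford ν (-(z / 2) ^ 2)`. -/
noncomputable def besselClifford (ν z : ℂ) : ℂ :=
  Complex.regularizedHGFun 0 {ν + 1} z

theorem summable_norm_besselClifford (ν z : ℂ) :
    Summable fun k : ℕ => ‖z ^ k / (k ! * Complex.Gamma (ν + 1 + k))‖ := by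
  have hz : z ∈ Metric.eball 0 (Complex.regularizedHGFunSeries 0 {ν + 1}).radius := by
    rw [Complex.radius_regularizedHGFunSeries_eq_top (by simp), Metric.eball_top]
    exact mem_univ z
  refine (FormalMultilinearSeries.summable_norm_apply _ hz).congr fun k => ?_
  simp [Complex.regularizedHGFunSeries, Complex.regularizedHGFunCoeff, div_eq_mul_inv, mul_comm]

theorem hasSum_besselClifford (ν z : ℂ) :
    HasSum (fun k : ℕ => z ^ k / (k ! * Complex.Gamma (ν + 1 + k))) (besselClifford ν z) := by
  convert! (summable_norm_besselClifford ν z).of_norm.hasSum using 1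
  simp [besselClifford, Complex.regularizedHGFun, Complex.regularizedHGFunSeries,
    Complex.regularizedHGFunCoeff, FormalMultilinearSeries.sum, div_eq_mul_inv, mul_comm]

theorem measurable_besselClifford (ν : ℂ) : Measurable (besselClifford ν) :=
  measurable_of_tendsto_metrizable
    (f := fun n z => ∑ k ∈ Finset.range n, z ^ k / (k ! * Complex.Gamma (ν + 1 + k)))
    (fun n => by fun_prop)
    (tendsto_pi_nhds.2 fun z => (hasSum_besselClifford ν z).tendsto_sum_nat)

theorem besselClifford_zero (ν : ℂ) : besselClifford ν 0 = 1 / Complex.Gamma (ν + 1) := by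
  refine (hasSum_besselClifford ν 0).unique ?_
  have h_single := hasSum_single (f := fun k : ℕ => (0 : ℂ) ^ k / (k ! * Complex.Gamma (ν + 1 + k)))
    0 fun k hk => by simp [hk]
  simpa using h_single

theorem conj_besselClifford (ν z : ℂ) :
    conj (besselClifford ν z) = besselClifford (conj ν) (conj z) := by
  rw [← (hasSum_besselClifford _ _).tsum_eq, ← (hasSum_besselClifford _ _).tsum_eq,
    Complex.conj_tsum]
  simp [← Complex.Gamma_conj]

theorem hasSum_besselClifford_ofReal (ν x : ℝ) :
    HasSum (fun k : ℕ => x ^ k / (k ! * Real.Gamma (ν + 1 + k))) (besselClifford ν x).re := by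
  convert! Complex.hasSum_re (hasSum_besselClifford ν x) using 2 with k
  norm_cast
  rw [Complex.Gamma_ofReal]
  norm_cast

theorem besselClifford_ofReal {ν x : ℝ} (hν : -1 < ν) (hx : 0 ≤ x) :
    besselClifford ν x = ‖besselClifford ν x‖ := by
  have h_re : 0 ≤ (besselClifford ν x).re :=
    (hasSum_besselClifford_ofReal ν x).nonneg fun k => by
      have := Real.Gamma_pos_of_pos (show 0 < ν + 1 + k by positivity [neg_lt_iff_pos_add.1 hν])
      positivity
  have h_conj : conj (besselClifford ν x) = besselClifford ν x := by
    rw [conj_besselClifford, Complex.conj_ofReal, Complex.conj_ofReal]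
  obtain ⟨y, hy⟩ := Complex.conj_eq_iff_real.1 h_conj
  rw [hy, Complex.ofReal_re] at h_re
  rw [hy, Complex.norm_of_nonneg h_re]

end BesselClifford

section ChuVandermonde

open scoped Nat

theorem Gamma_add_natCast_eq_mul_choose {s : ℂ} (hs : ∀ k : ℕ, s ≠ -k) (n : ℕ) :
    Complex.Gamma (s + n) = Complex.Gamma s * (n ! * Ring.choose (s + n - 1) n) := by
  rw [← Ring.multichoose_eq, ← nsmul_eq_mul, Ring.factorial_nsmul_multichoose_eq_ascPochhammer,
    Polynomial.ascPochhammer_smeval_eq_eval, ← Complex.Gamma_add_nat_div_Gamma_eq s hs,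
    mul_div_cancel₀ _ (Complex.Gamma_ne_zero hs)]

theorem sum_factorial_mul_choose_mul_choose_div_Gamma {s : ℂ} (hs : ∀ k : ℕ, s ≠ -k) (m n : ℕ) :
    ∑ k ∈ Finset.range (n + 1), (k ! * m.choose k * n.choose k : ℂ) / Complex.Gamma (s + k) =
      Complex.Gamma (s + (m + n : ℕ)) / (Complex.Gamma (s + m) * Complex.Gamma (s + n)) := by
  have hs_add (j : ℕ) : ∀ k : ℕ, s + j ≠ -k := fun k h =>
    hs (j + k) (by push_cast; linear_combination h)
  have h_vandermonde := Ring.add_choose_eq n (Commute.all (m : ℂ) (s + n - 1))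
  have h_sum := Gamma_add_natCast_eq_mul_choose (hs_add m) n
  rw [show s + m + n - 1 = m + (s + n - 1) by ring, h_vandermonde,
    Finset.Nat.sum_antidiagonal_eq_sum_range_succ fun i j =>
      Ring.choose (m : ℂ) i * Ring.choose (s + n - 1) j] at h_sum
  rw [Nat.cast_add, ← add_assoc, h_sum, mul_div_mul_left _ _ (Complex.Gamma_ne_zero (hs_add m)),
    Finset.mul_sum, Finset.sum_div]
  refine Finset.sum_congr rfl fun k hk => ?_
  obtain ⟨j, rfl⟩ := Nat.exists_eq_add_of_le (Finset.mem_range_succ_iff.1 hk)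
  have h_term := Gamma_add_natCast_eq_mul_choose (hs_add k) j
  rw [Nat.cast_add, ← add_assoc, add_tsub_cancel_left, Ring.choose_natCast, div_eq_div_iff
    (Complex.Gamma_ne_zero (hs_add k))
    (by simpa [add_assoc] using Complex.Gamma_ne_zero (hs_add (k + j))), h_term]
  have h_choose : ((k + j).choose k * k ! * j ! : ℂ) = (k + j)! := by
    have h := Nat.add_choose_mul_factorial_mul_factorial k j
    rw [← Nat.choose_symm_add] at h
    exact_mod_cast h
  rw [← h_choose]
  ring

/-- The binomial coefficients extend the triple product series by zero off the range of the index
shift `((i, j), k) ↦ ((i + k, j + k), k)`. -/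
theorem hasSum_exp_mul_besselClifford_triple (ν x y : ℂ) :
    HasSum (fun t : (ℕ × ℕ) × ℕ => x ^ t.1.1 * y ^ t.1.2 / (t.1.1 ! * t.1.2 !) *
      ((t.2 ! * t.1.1.choose t.2 * t.1.2.choose t.2 : ℂ) / Complex.Gamma (ν + 1 + t.2)))
      (Complex.exp (x + y) * besselClifford ν (x * y)) := by
  have h_exp (z : ℂ) : HasSum (fun i : ℕ => z ^ i / i !) (Complex.exp z) := by
    simpa only [Complex.exp_eq_exp_ℂ] using NormedSpace.expSeries_div_hasSum_exp z
  have h_exp_norm (z : ℂ) : Summable fun i : ℕ => ‖z ^ i / (i ! : ℂ)‖ :=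
    NormedSpace.norm_expSeries_div_summable z
  have h_xy_norm := (h_exp_norm x).mul_norm (h_exp_norm y)
  have h_norm := h_xy_norm.mul_norm (summable_norm_besselClifford ν (x * y))
  have h_prod := ((h_exp x).mul (h_exp y) h_xy_norm.of_norm).mul
    (hasSum_besselClifford ν (x * y)) h_norm.of_norm
  rw [← Complex.exp_add] at h_prod
  let shift : (ℕ × ℕ) × ℕ → (ℕ × ℕ) × ℕ := fun t => ((t.1.1 + t.2, t.1.2 + t.2), t.2)
  have h_shift : Function.Injective shift := by
    rintro ⟨⟨i, j⟩, k⟩ ⟨⟨i', j'⟩, k'⟩ h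
    simp only [shift, Prod.mk.injEq] at h ⊢
    omega
  refine (h_shift.hasSum_iff fun t ht => ?_).1 (h_prod.congr_fun fun t => ?_)
  · have h_lt : t.1.1 < t.2 ∨ t.1.2 < t.2 := by
      contrapose! ht
      exact ⟨((t.1.1 - t.2, t.1.2 - t.2), t.2), by
        simp [shift, Nat.sub_add_cancel ht.1, Nat.sub_add_cancel ht.2]⟩
    rcases h_lt with h | h <;> simp [Nat.choose_eq_zero_of_lt h]
  · obtain ⟨⟨i, j⟩, k⟩ := t
    have h_choose (l : ℕ) : ((l + k).choose k : ℂ) = (l + k)! / (l ! * k !) := by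
      rw [← Nat.choose_symm_add, Nat.cast_add_choose]
    have h_ne (l : ℕ) : (l ! : ℂ) ≠ 0 := by exact_mod_cast l.factorial_ne_zero
    have h_ne_i := h_ne (i + k)
    have h_ne_j := h_ne (j + k)
    simp only [Function.comp_apply, shift, h_choose]
    field_simp
    ring

theorem hasSum_exp_mul_besselClifford {ν : ℂ} (hν : ∀ k : ℕ, ν + 1 ≠ -k) (x y : ℂ) :
    HasSum (fun mn : ℕ × ℕ =>
      Complex.Gamma (ν + 1 + (mn.1 + mn.2 : ℕ)) *
        (x ^ mn.1 / (mn.1 ! * Complex.Gamma (ν + 1 + mn.1)) *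
          (y ^ mn.2 / (mn.2 ! * Complex.Gamma (ν + 1 + mn.2)))))
      (Complex.exp (x + y) * besselClifford ν (x * y)) := by
  refine (hasSum_exp_mul_besselClifford_triple ν x y).prod_fiberwise fun ⟨m, n⟩ => ?_
  have h_coeff : Complex.Gamma (ν + 1 + (m + n : ℕ)) *
      (x ^ m / (m ! * Complex.Gamma (ν + 1 + m)) * (y ^ n / (n ! * Complex.Gamma (ν + 1 + n)))) =
      ∑ k ∈ Finset.range (n + 1), x ^ m * y ^ n / (m ! * n !) *
        ((k ! * m.choose k * n.choose k : ℂ) / Complex.Gamma (ν + 1 + k)) := by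
    rw [← Finset.mul_sum, sum_factorial_mul_choose_mul_choose_div_Gamma hν]
    simp only [div_eq_mul_inv, mul_inv]
    ring
  rw [h_coeff]
  refine hasSum_sum_of_ne_finset_zero fun k hk => ?_
  have h_lt : n < k := by simpa [Nat.lt_succ_iff] using hk
  simp [Nat.choose_eq_zero_of_lt h_lt]

end ChuVandermonde

section PoissonRepresentation

open scoped Nat

open ProbabilityTheory in
theorem integral_pow_betaMeasure {α β : ℝ} (hα : 0 < α) (hβ : 0 < β) (k : ℕ) :
    ∫ v, v ^ k ∂betaMeasure α β = beta (α + k) β / beta α β := by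
  have h_integral {α β : ℝ} (f : ℝ → ℝ) :
      ∫ v, f v ∂betaMeasure α β = ∫ v, (betaPDF α β v).toReal * f v := by
    have h_meas : Measurable (betaPDF α β) := (measurable_betaPDFReal α β).ennreal_ofReal
    rw [betaMeasure, integral_withDensity_eq_integral_toReal_smul h_meas
      (ae_of_all _ fun _ => ENNReal.ofReal_lt_top)]
    rfl
  have hαk : 0 < α + k := by positivity
  have h_density (v : ℝ) : (betaPDF α β v).toReal * v ^ k =
      beta (α + k) β / beta α β * ((betaPDF (α + k) β v).toReal * 1) := by
    by_cases hv : 0 < v ∧ v < 1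
    · have h_beta := beta_pos hα hβ
      have h_beta_k := beta_pos hαk hβ
      have h_compl : 0 < 1 - v := sub_pos.2 hv.2
      have hv0 := hv.1
      rw [betaPDF_of_pos_lt_one hv.1 hv.2, betaPDF_of_pos_lt_one hv.1 hv.2,
        ENNReal.toReal_ofReal (by positivity), ENNReal.toReal_ofReal (by positivity),
        add_sub_right_comm, Real.rpow_add hv.1, Real.rpow_natCast]
      field_simp
    · simp [betaPDF_eq, hv]
  have := isProbabilityMeasureBeta hαk hβ
  rw [h_integral, integral_congr_ae (ae_of_all _ h_density), integral_const_mul, ← h_integral]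
  simp

open ProbabilityTheory in
theorem ae_mem_Icc_betaMeasure (α β : ℝ) : ∀ᵐ v ∂betaMeasure α β, v ∈ Icc (0 : ℝ) 1 := by
  refine (ae_withDensity_iff (measurable_betaPDFReal α β).ennreal_ofReal).2 (ae_of_all _ ?_)
  intro v hv
  contrapose! hv
  rw [← betaPDF, betaPDF_eq, if_neg fun h => hv ⟨h.1.le, h.2.le⟩, ENNReal.ofReal_zero]

theorem Gamma_natCast_add_half_eq (k : ℕ) :
    Real.Gamma (k + 1 / 2) = (2 * k)! * √Real.pi / (4 ^ k * k !) := by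
  have h := Real.Gamma_mul_Gamma_add_half (k + 1 / 2)
  rw [show (k + 1 / 2 + 1 / 2 : ℝ) = k + 1 by ring, Real.Gamma_nat_eq_factorial,
    show (2 * (k + 1 / 2) : ℝ) = (2 * k : ℕ) + 1 by push_cast; ring,
    Real.Gamma_nat_eq_factorial, show (1 - ((2 * k : ℕ) + 1) : ℝ) = -(2 * k : ℕ) by ring,
    Real.rpow_neg two_pos.le, Real.rpow_natCast, pow_mul] at h
  generalize Real.Gamma (k + 1 / 2) = G at h ⊢
  norm_num at h
  field_simp at h ⊢
  exact h

theorem exists_probabilityMeasure_moment_eq {ν : ℝ} (hν : -1 / 2 ≤ ν) :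
    ∃ μ : Measure ℝ, IsProbabilityMeasure μ ∧ (∀ᵐ v ∂μ, v ∈ Icc (0 : ℝ) 1) ∧
      ∀ k : ℕ, ∫ v, v ^ k ∂μ =
        (2 * k)! * Real.Gamma (ν + 1) / (4 ^ k * k ! * Real.Gamma (ν + 1 + k)) := by
  rcases hν.eq_or_lt with rfl | hν
  · refine ⟨Measure.dirac 1, inferInstance, by simp [ae_dirac_eq], fun k => ?_⟩
    rw [integral_dirac, one_pow, show (-1 / 2 + 1 : ℝ) = 1 / 2 by norm_num,
      Real.Gamma_one_half_eq, add_comm (1 / 2 : ℝ), Gamma_natCast_add_half_eq]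
    field_simp
  · have hβ : 0 < ν + 1 / 2 := by linarith
    refine ⟨ProbabilityTheory.betaMeasure (1 / 2) (ν + 1 / 2),
      ProbabilityTheory.isProbabilityMeasureBeta one_half_pos hβ,
      ae_mem_Icc_betaMeasure _ _, fun k => ?_⟩
    have h_pos : 0 < Real.Gamma (ν + 1 / 2) := Real.Gamma_pos_of_pos hβ
    rw [integral_pow_betaMeasure one_half_pos hβ, ProbabilityTheory.beta, ProbabilityTheory.beta,
      show (1 / 2 + k + (ν + 1 / 2) : ℝ) = ν + 1 + k by ring,
      show (1 / 2 + (ν + 1 / 2) : ℝ) = ν + 1 by ring, Real.Gamma_one_half_eq,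
      add_comm (1 / 2 : ℝ), Gamma_natCast_add_half_eq]
    generalize Real.Gamma (ν + 1 / 2) = G at h_pos ⊢
    field_simp

theorem hasSum_integral_cosh_mul_sqrt {μ : Measure ℝ} [IsProbabilityMeasure μ]
    (h_supp : ∀ᵐ v ∂μ, v ∈ Icc (0 : ℝ) 1) (z : ℂ) :
    HasSum (fun k : ℕ => z ^ (2 * k) / (2 * k)! * ((∫ v, v ^ k ∂μ : ℝ) : ℂ))
      (∫ v, Complex.cosh (z * (√v : ℝ)) ∂μ) := by
  let term : ℕ → ℝ → ℂ := fun k v => z ^ (2 * k) / (2 * k)! * (v ^ k : ℝ)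
  have h_norm_le (k : ℕ) : ∀ᵐ v ∂μ, ‖term k v‖ ≤ ‖z‖ ^ (2 * k) / (2 * k)! := by
    filter_upwards [h_supp] with v hv
    have h_pow : ‖v ^ k‖ ≤ 1 := by
      rw [norm_pow, Real.norm_of_nonneg hv.1]
      exact pow_le_one₀ hv.1 hv.2
    simpa [term] using mul_le_of_le_one_right (by positivity : 0 ≤ ‖z‖ ^ (2 * k) / (2 * k)!)
      (by simpa using h_pow)
  have h_int (k : ℕ) : Integrable (term k) μ :=
    Integrable.of_bound (by fun_prop) _ (h_norm_le k)
  have h_summable : Summable fun k => ∫ v, ‖term k v‖ ∂μ := by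
    refine .of_nonneg_of_le (fun k => by positivity) (fun k => ?_) (Real.hasSum_cosh ‖z‖).summable
    simpa using integral_mono_ae (h_int k).norm (integrable_const _) (h_norm_le k)
  have h_cosh : ∀ᵐ v ∂μ, ∑' k, term k v = Complex.cosh (z * (√v : ℝ)) := by
    filter_upwards [h_supp] with v hv
    rw [← (Complex.hasSum_cosh _).tsum_eq]
    refine tsum_congr fun k => ?_
    rw [mul_pow, pow_mul ((√v : ℝ) : ℂ), ← Complex.ofReal_pow, Real.sq_sqrt hv.1]
    simp only [term, Complex.ofReal_pow]
    ring
  rw [← integral_congr_ae h_cosh]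
  refine (hasSum_integral_of_summable_integral_norm h_int h_summable).congr_fun fun k => ?_
  rw [integral_const_mul, integral_complex_ofReal]

/-- Poisson's integral for `J_ν`; `μ` is the Beta(1/2, ν + 1/2) distribution of `v = t ^ 2` (a Dirac
mass at `1` for `ν = -1/2`). -/
theorem exists_besselClifford_sq_eq_integral_cosh {ν : ℝ} (hν : -1 / 2 ≤ ν) :
    ∃ μ : Measure ℝ, IsProbabilityMeasure μ ∧ (∀ᵐ v ∂μ, v ∈ Icc (0 : ℝ) 1) ∧
      ∀ w : ℂ, besselClifford ν (w ^ 2) =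
        besselClifford ν 0 * ∫ v, Complex.cosh (2 * w * (√v : ℝ)) ∂μ := by
  obtain ⟨μ, h_prob, h_supp, h_moment⟩ := exists_probabilityMeasure_moment_eq hν
  refine ⟨μ, h_prob, h_supp, fun w => ?_⟩
  have h_sum := (hasSum_integral_cosh_mul_sqrt h_supp (2 * w)).mul_left (besselClifford ν 0)
  refine (hasSum_besselClifford ν (w ^ 2)).unique (h_sum.congr_fun fun k => ?_)
  have h_Gamma : Complex.Gamma (ν + 1) ≠ 0 := by
    refine Complex.Gamma_ne_zero_of_re_pos ?_
    simpa using (by linarith : 0 < ν + 1)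
  rw [h_moment k, besselClifford_zero]
  push_cast [← Complex.Gamma_ofReal]
  have h_fact : ((2 * k)! : ℂ) ≠ 0 := Nat.cast_ne_zero.2 (Nat.factorial_ne_zero _)
  have h_four : (4 ^ k : ℂ) = 2 ^ (2 * k) := by rw [pow_mul]; norm_num
  rw [mul_pow, pow_mul w, h_four]
  field_simp

theorem norm_cosh_le_exp_abs_re (z : ℂ) : ‖Complex.cosh z‖ ≤ Real.exp |z.re| := by
  rw [Complex.cosh, norm_div, Complex.norm_ofNat, div_le_iff₀ two_pos]
  calc ‖Complex.exp z + Complex.exp (-z)‖ ≤ Real.exp z.re + Real.exp (-z.re) := by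
        simpa only [Complex.norm_exp, Complex.neg_re] using
          norm_add_le (Complex.exp z) (Complex.exp (-z))
    _ ≤ Real.exp |z.re| + Real.exp |z.re| := by
        gcongr
        exacts [le_abs_self _, neg_le_abs _]
    _ = Real.exp |z.re| * 2 := by ring

theorem norm_besselClifford_sq_le {ν : ℝ} (hν : -1 / 2 ≤ ν) (w : ℂ) :
    ‖besselClifford ν (w ^ 2)‖ ≤ ‖besselClifford ν 0‖ * Real.exp (2 * |w.re|) := by
  obtain ⟨μ, h_prob, h_supp, h_eq⟩ := exists_besselClifford_sq_eq_integral_cosh hν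
  rw [h_eq, norm_mul]
  gcongr
  suffices h : ∀ᵐ v ∂μ, ‖Complex.cosh (2 * w * (√v : ℝ))‖ ≤ Real.exp (2 * |w.re|) by
    simpa using norm_integral_le_of_norm_le_const h
  filter_upwards [h_supp] with v hv
  refine (norm_cosh_le_exp_abs_re _).trans (Real.exp_le_exp.2 ?_)
  simpa [abs_mul, abs_of_nonneg (Real.sqrt_nonneg v)] using
    mul_le_of_le_one_right (by positivity : 0 ≤ 2 * |w.re|) (Real.sqrt_le_one.2 hv.2)

end PoissonRepresentation

section PowMeasure

/-- The measure `x ^ a dx` on the half-line, with respect to which `‖f‖_{L^r_a}` is an `L^r`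
norm. -/
noncomputable def powMeasure (a : ℝ) : Measure ℝ :=
  (volume.restrict (Ioi 0)).withDensity fun x => ENNReal.ofReal (x ^ a)

variable {a : ℝ}

instance : SFinite (powMeasure a) := by unfold powMeasure; infer_instance

instance : SigmaFinite (powMeasure a) :=
  SigmaFinite.withDensity_of_ne_top (ae_of_all _ fun _ => ENNReal.ofReal_ne_top)

theorem ae_powMeasure_pos (a : ℝ) : ∀ᵐ x ∂powMeasure a, 0 < x :=
  withDensity_absolutelyContinuous _ _ (ae_restrict_mem measurableSet_Ioi)

variable {E : Type*} [NormedAddCommGroup E] [NormedSpace ℝ E]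

theorem integral_powMeasure (a : ℝ) (f : ℝ → E) :
    ∫ x, f x ∂powMeasure a = ∫ x in Ioi 0, x ^ a • f x := by
  rw [powMeasure, integral_withDensity_eq_integral_toReal_smul (by fun_prop)
    (ae_of_all _ fun _ => ENNReal.ofReal_lt_top)]
  refine setIntegral_congr_fun measurableSet_Ioi fun x hx => ?_
  simp only [ENNReal.toReal_ofReal (Real.rpow_nonneg (le_of_lt hx) a)]

theorem integrable_powMeasure_iff {f : ℝ → E} :
    Integrable f (powMeasure a) ↔ IntegrableOn (fun x => x ^ a • f x) (Ioi 0) := by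
  rw [powMeasure, integrable_withDensity_iff_integrable_smul' (by fun_prop)
    (ae_of_all _ fun _ => ENNReal.ofReal_lt_top)]
  refine integrableOn_congr_fun (fun x hx => ?_) measurableSet_Ioi
  simp only [ENNReal.toReal_ofReal (Real.rpow_nonneg (le_of_lt hx) a)]

end PowMeasure

section GaussianMoments

open ProbabilityTheory

variable {a : ℝ}

theorem integrable_exp_neg_mul_sq_powMeasure (ha : -1 < a) {b : ℝ} (hb : 0 < b) :
    Integrable (fun x : ℝ => Real.exp (-b * x ^ 2)) (powMeasure a) :=
  integrable_powMeasure_iff.2 <| by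
    simpa only [smul_eq_mul] using integrableOn_rpow_mul_exp_neg_mul_sq hb ha

theorem integral_exp_neg_mul_sq_powMeasure (ha : -1 < a) {b : ℝ} (hb : 0 < b) :
    ∫ x, Real.exp (-b * x ^ 2) ∂powMeasure a =
      1 / 2 * Real.Gamma ((a + 1) / 2) * b ^ (-((a + 1) / 2)) := by
  have h := integral_rpow_mul_exp_neg_mul_rpow two_pos ha hb
  simp only [Real.rpow_two] at h
  simp only [integral_powMeasure, smul_eq_mul, h, neg_div]
  ring

theorem complexMGF_sq_powMeasure_neg_ofReal (ha : -1 < a) {b : ℝ} (hb : 0 < b) :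
    complexMGF (· ^ 2) (powMeasure a) (-b) =
      1 / 2 * Complex.Gamma ((a + 1) / 2) * (b : ℂ) ^ (-((a + 1) / 2) : ℂ) := by
  have h : complexMGF (· ^ 2) (powMeasure a) (-b) =
      ((∫ x, Real.exp (-b * x ^ 2) ∂powMeasure a : ℝ) : ℂ) := by
    rw [complexMGF, ← integral_complex_ofReal]
    push_cast
    rfl
  rw [h, integral_exp_neg_mul_sq_powMeasure ha hb]
  push_cast [Complex.ofReal_cpow hb.le, ← Complex.Gamma_ofReal]
  rfl

theorem analyticOnNhd_complexMGF_sq_powMeasure (ha : -1 < a) :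
    AnalyticOnNhd ℂ (complexMGF (· ^ 2) (powMeasure a)) {z | z.re < 0} := by
  refine fun z hz => analyticAt_complexMGF (mem_interior.2 ⟨Iio 0, fun s hs => ?_, isOpen_Iio, hz⟩)
  simpa [integrableExpSet] using integrable_exp_neg_mul_sq_powMeasure ha (neg_pos.2 hs)

/-- The identity theorem reduces a complex rate to a real one. -/
theorem integral_cexp_neg_mul_sq_powMeasure (ha : -1 < a) {p : ℂ} (hp : 0 < p.re) :
    ∫ x : ℝ, Complex.exp (-p * x ^ 2) ∂powMeasure a =
      1 / 2 * Complex.Gamma ((a + 1) / 2) * p ^ (-((a + 1) / 2) : ℂ) := by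
  let moment : ℂ → ℂ := fun z => 1 / 2 * Complex.Gamma ((a + 1) / 2) * (-z) ^ (-((a + 1) / 2) : ℂ)
  have h_analytic : AnalyticOnNhd ℂ moment {z | z.re < 0} := by
    refine DifferentiableOn.analyticOnNhd (fun z hz => ?_)
      (isOpen_Iio.preimage Complex.continuous_re)
    exact ((differentiableAt_id.neg.cpow_const (.inl (by simpa using hz))).const_mul
      _).differentiableWithinAt
  have h_real : ∀ᶠ b : ℝ in 𝓝[≠] (-1),
      complexMGF (· ^ 2) (powMeasure a) b = moment b := by
    filter_upwards [mem_nhdsWithin_of_mem_nhds (Iio_mem_nhds (neg_one_lt_zero (R := ℝ)))] with b hb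
    simpa [moment] using complexMGF_sq_powMeasure_neg_ofReal ha (neg_pos.2 hb)
  have h_ofReal : Tendsto ((↑) : ℝ → ℂ) (𝓝[≠] (-1)) (𝓝[≠] (-1)) := by
    have h_mapsTo : MapsTo ((↑) : ℝ → ℂ) {-1}ᶜ {((-1 : ℝ) : ℂ)}ᶜ :=
      fun b hb => Complex.ofReal_injective.ne hb
    simpa using (Complex.continuous_ofReal.continuousWithinAt (x := -1)).tendsto_nhdsWithin h_mapsTo
  have h_eqOn := (analyticOnNhd_complexMGF_sq_powMeasure ha).eqOn_of_preconnected_of_frequently_eq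
    h_analytic (convex_halfSpace_re_lt 0).isPreconnected (z₀ := -1) (by simp)
    (h_ofReal.frequently h_real.frequently)
  simpa [complexMGF, moment] using h_eqOn (show -p ∈ {z : ℂ | z.re < 0} by simpa using hp)

theorem integrable_cexp_neg_mul_sq_powMeasure (ha : -1 < a) {p : ℂ} (hp : 0 < p.re) :
    Integrable (fun x : ℝ => Complex.exp (-p * x ^ 2)) (powMeasure a) := by
  refine (integrable_exp_neg_mul_sq_powMeasure ha hp).mono' (by fun_prop) (ae_of_all _ fun x => ?_)
  rw [Complex.norm_exp, ← Complex.ofReal_pow, Complex.re_mul_ofReal, Complex.neg_re]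

theorem rpow_smul_sq_pow_mul (a : ℝ) (n : ℕ) {x : ℝ} (hx : 0 < x) (z : ℂ) :
    x ^ a • (((x : ℂ) ^ 2) ^ n * z) = x ^ (a + 2 * n) • z := by
  have h : x ^ (a + 2 * n) = x ^ a * (x ^ 2) ^ n := by
    rw [Real.rpow_add hx, ← pow_mul, ← Real.rpow_natCast x (2 * n)]
    push_cast
    rfl
  rw [h, mul_smul]
  simp

theorem integrable_sq_pow_mul_cexp_powMeasure (ha : -1 < a) {p : ℂ} (hp : 0 < p.re) (n : ℕ) :
    Integrable (fun x : ℝ => ((x : ℂ) ^ 2) ^ n * Complex.exp (-p * x ^ 2)) (powMeasure a) := by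
  have ha' : -1 < a + 2 * n := by linarith [n.cast_nonneg' (α := ℝ)]
  have h := integrable_cexp_neg_mul_sq_powMeasure ha' hp
  rw [integrable_powMeasure_iff] at h ⊢
  exact (integrableOn_congr_fun (fun x hx => rpow_smul_sq_pow_mul a n hx _) measurableSet_Ioi).2 h

theorem integral_sq_pow_mul_cexp_powMeasure (ha : -1 < a) {p : ℂ} (hp : 0 < p.re) (n : ℕ) :
    ∫ x : ℝ, ((x : ℂ) ^ 2) ^ n * Complex.exp (-p * x ^ 2) ∂powMeasure a =
      1 / 2 * Complex.Gamma ((a + 1) / 2 + n) * (p ^ (-((a + 1) / 2) : ℂ) / p ^ n) := by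
  have h_p : p ≠ 0 := by rintro rfl; simp at hp
  have ha' : -1 < a + 2 * n := by linarith [n.cast_nonneg' (α := ℝ)]
  have h := integral_cexp_neg_mul_sq_powMeasure ha' hp
  rw [integral_powMeasure] at h ⊢
  rw [setIntegral_congr_fun measurableSet_Ioi fun x hx => rpow_smul_sq_pow_mul a n hx _, h,
    ← Complex.cpow_natCast, ← Complex.cpow_sub _ _ h_p]
  push_cast
  congr 2
  · congr 1; ring
  · ring

theorem integral_norm_sq_pow_mul_cexp_powMeasure (p : ℂ) (n : ℕ) :
    ∫ x : ℝ, ‖((x : ℂ) ^ 2) ^ n * Complex.exp (-p * x ^ 2)‖ ∂powMeasure a =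
      ‖∫ x : ℝ, ((x : ℂ) ^ 2) ^ n * Complex.exp (-p.re * x ^ 2) ∂powMeasure a‖ := by
  have h (x : ℝ) : ((x : ℂ) ^ 2) ^ n * Complex.exp (-p.re * x ^ 2) =
      (‖((x : ℂ) ^ 2) ^ n * Complex.exp (-p * x ^ 2)‖ : ℝ) := by
    rw [norm_mul, Complex.norm_exp, ← Complex.ofReal_pow x 2, Complex.re_mul_ofReal]
    simp
  simp_rw [h]
  rw [integral_complex_ofReal, Complex.norm_of_nonneg (by positivity)]

end GaussianMoments

section Weber

open scoped Nat

variable {ν : ℝ}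

theorem hasSum_besselClifford_mul_besselClifford_mul (ν A B y e : ℂ) :
    HasSum (fun mn : ℕ × ℕ => A ^ mn.1 / (mn.1 ! * Complex.Gamma (ν + 1 + mn.1)) *
      (B ^ mn.2 / (mn.2 ! * Complex.Gamma (ν + 1 + mn.2))) * (y ^ (mn.1 + mn.2) * e))
      (besselClifford ν (A * y) * besselClifford ν (B * y) * e) := by
  refine (((hasSum_besselClifford ν (A * y)).mul (hasSum_besselClifford ν (B * y))
    ((summable_norm_besselClifford ν _).mul_norm
      (summable_norm_besselClifford ν _)).of_norm).mul_right e).congr_fun fun mn => ?_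
  simp only [mul_pow, pow_add]
  ring

/-- Weber's second exponential integral, in terms of `besselClifford`. -/
theorem integral_besselClifford_mul_besselClifford_mul_cexp (hν : -1 < ν) (A B : ℂ) {p : ℂ}
    (hp : 0 < p.re) :
    ∫ x : ℝ, besselClifford ν (A * x ^ 2) * besselClifford ν (B * x ^ 2) *
      Complex.exp (-p * x ^ 2) ∂powMeasure (2 * ν + 1) =
    1 / 2 * p ^ (-(ν + 1) : ℂ) *
      (Complex.exp (A / p + B / p) * besselClifford ν (A / p * (B / p))) := by
  have ha : -1 < 2 * ν + 1 := by linarith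
  have hν' (k : ℕ) : (ν + 1 : ℂ) ≠ -k := by
    have h_ne : ν + 1 ≠ -k := by linarith [k.cast_nonneg' (α := ℝ)]
    exact_mod_cast h_ne
  let c : ℕ × ℕ → ℂ := fun mn => A ^ mn.1 / (mn.1 ! * Complex.Gamma (ν + 1 + mn.1)) *
    (B ^ mn.2 / (mn.2 ! * Complex.Gamma (ν + 1 + mn.2)))
  let term : ℕ × ℕ → ℝ → ℂ := fun mn x =>
    c mn * (((x : ℂ) ^ 2) ^ (mn.1 + mn.2) * Complex.exp (-p * x ^ 2))
  have h_pointwise (x : ℝ) : HasSum (term · x) (besselClifford ν (A * x ^ 2) *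
      besselClifford ν (B * x ^ 2) * Complex.exp (-p * x ^ 2)) :=
    hasSum_besselClifford_mul_besselClifford_mul ν A B (x ^ 2) _
  have h_integral {s : ℂ} (hs : 0 < s.re) (mn : ℕ × ℕ) :
      c mn * ∫ x : ℝ, ((x : ℂ) ^ 2) ^ (mn.1 + mn.2) * Complex.exp (-s * x ^ 2)
        ∂powMeasure (2 * ν + 1) =
      1 / 2 * s ^ (-(ν + 1) : ℂ) * (Complex.Gamma (ν + 1 + (mn.1 + mn.2 : ℕ)) *
        ((A / s) ^ mn.1 / (mn.1 ! * Complex.Gamma (ν + 1 + mn.1)) *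
          ((B / s) ^ mn.2 / (mn.2 ! * Complex.Gamma (ν + 1 + mn.2))))) := by
    rw [integral_sq_pow_mul_cexp_powMeasure ha hs]
    push_cast
    rw [show (2 * ν + 1 + 1 : ℂ) / 2 = ν + 1 by ring]
    simp only [c, div_pow, pow_add]
    ring
  have h_summable : Summable fun mn => ∫ x, ‖term mn x‖ ∂powMeasure (2 * ν + 1) := by
    refine ((hasSum_exp_mul_besselClifford hν' (A / p.re) (B / p.re)).summable.mul_left
      (1 / 2 * (p.re : ℂ) ^ (-(ν + 1) : ℂ))).norm.congr fun mn => ?_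
    rw [← h_integral (by simpa using hp) mn, norm_mul,
      ← integral_norm_sq_pow_mul_cexp_powMeasure, ← integral_const_mul]
    simp only [term, norm_mul]
  have h_sum := hasSum_integral_of_summable_integral_norm
    (fun mn => (integrable_sq_pow_mul_cexp_powMeasure ha hp _).const_mul (c mn)) h_summable
  simp only [integral_const_mul, h_integral hp] at h_sum
  rw [← integral_congr_ae (ae_of_all _ fun x => (h_pointwise x).tsum_eq)]
  exact h_sum.unique ((hasSum_exp_mul_besselClifford hν' (A / p) (B / p)).mul_left _)

theorem integral_besselClifford_mul_cexp (hν : -1 < ν) (A : ℂ) {p : ℂ} (hp : 0 < p.re) :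
    ∫ x : ℝ, besselClifford ν (A * x ^ 2) * Complex.exp (-p * x ^ 2) ∂powMeasure (2 * ν + 1) =
      1 / 2 * p ^ (-(ν + 1) : ℂ) * Complex.exp (A / p) := by
  have h_zero : besselClifford ν 0 ≠ 0 := by
    rw [besselClifford_zero]
    refine one_div_ne_zero (Complex.Gamma_ne_zero_of_re_pos ?_)
    simpa using neg_lt_iff_pos_add.1 hν
  have h := integral_besselClifford_mul_besselClifford_mul_cexp hν A 0 hp
  simp only [zero_mul, zero_div, mul_zero, add_zero, mul_right_comm _ (besselClifford ν 0),
    integral_mul_const] at h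
  rw [← mul_assoc] at h
  exact mul_right_cancel₀ h_zero h

theorem lintegral_enorm_eq_enorm_integral {X : Type*} [MeasurableSpace X] {μ : Measure X}
    {f : X → ℂ} (hf : Integrable f μ) (h_nonneg : ∀ x, f x = ‖f x‖) :
    ∫⁻ x, ‖f x‖ₑ ∂μ = ‖∫ x, f x ∂μ‖ₑ := by
  rw [← ofReal_integral_norm_eq_lintegral_enorm hf, funext h_nonneg, integral_complex_ofReal,
    ← ofReal_norm, Complex.norm_of_nonneg (by positivity), ← funext h_nonneg]

theorem lintegral_enorm_besselClifford_mul_cexp (hν : -1 < ν) {A p : ℝ} (hA : 0 ≤ A)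
    (hp : 0 < p) :
    ∫⁻ x : ℝ, ‖besselClifford ν (A * x ^ 2) * Complex.exp (-p * x ^ 2)‖ₑ
      ∂powMeasure (2 * ν + 1) =
      ‖1 / 2 * (p : ℂ) ^ (-(ν + 1) : ℂ) * Complex.exp (A / p)‖ₑ := by
  have h_integral := integral_besselClifford_mul_cexp hν A (p := p) (by simpa using hp)
  rw [← h_integral]
  refine lintegral_enorm_eq_enorm_integral (.of_integral_ne_zero ?_) fun x => ?_
  · rw [h_integral]
    have h_p : (p : ℂ) ≠ 0 := Complex.ofReal_ne_zero.2 hp.ne'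
    simp [Complex.cpow_eq_zero_iff, h_p, Complex.exp_ne_zero]
  · have h_nonneg := besselClifford_ofReal hν (by positivity : 0 ≤ A * x ^ 2)
    rw [norm_mul, Complex.ofReal_mul]
    push_cast at h_nonneg
    congr 1
    rw [Complex.norm_exp]
    norm_cast

end Weber

section KernelL2

variable {X Y : Type*} [MeasurableSpace X] [MeasurableSpace Y] {μ : Measure X} {ρ : Measure Y}

theorem aestronglyMeasurable_integral_kernel [SFinite μ] [SFinite ρ] {k : X → Y → ℂ}
    (hk : Measurable (Function.uncurry k)) {f : Y → ℂ} (hf : AEStronglyMeasurable f ρ) :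
    AEStronglyMeasurable (fun x => ∫ y, k x y * f y ∂ρ) μ :=
  (hk.aestronglyMeasurable.mul hf.comp_snd).integral_prod_right'

theorem enorm_integral_mul_le {g f : Y → ℂ} {A : ℝ≥0∞} (hg : ∀ y, ‖g y‖ₑ ≤ A)
    (hf : AEStronglyMeasurable f ρ) : ‖∫ y, g y * f y ∂ρ‖ₑ ≤ A * ∫⁻ y, ‖f y‖ₑ ∂ρ := by
  rw [← lintegral_const_mul'' _ hf.enorm]
  refine (enorm_integral_le_lintegral_enorm _).trans (lintegral_mono fun y => ?_)
  rw [enorm_mul]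
  gcongr
  exact hg y

theorem lintegral_mul_mul_symm_kernel_le [SFinite ρ] {k : Y → Y → ℝ≥0∞}
    (hk : Measurable (Function.uncurry k)) (h_symm : ∀ y z, k y z = k z y) {C : ℝ≥0∞}
    (hC : ∀ y, ∫⁻ z, k y z ∂ρ ≤ C) {f : Y → ℝ≥0∞} (hf : AEMeasurable f ρ) :
    ∫⁻ yz : Y × Y, f yz.1 * f yz.2 * k yz.1 yz.2 ∂ρ.prod ρ ≤ C * ∫⁻ y, f y ^ (2 : ℝ) ∂ρ := by
  have h_meas : AEMeasurable (fun yz : Y × Y => f yz.1 ^ (2 : ℝ) * k yz.1 yz.2) (ρ.prod ρ) :=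
    (hf.comp_fst.pow_const _).mul hk.aemeasurable
  have h_fst : ∫⁻ yz : Y × Y, f yz.1 ^ (2 : ℝ) * k yz.1 yz.2 ∂ρ.prod ρ ≤
      C * ∫⁻ y, f y ^ (2 : ℝ) ∂ρ := by
    rw [lintegral_prod _ h_meas, ← lintegral_const_mul'' _ (hf.pow_const _)]
    refine lintegral_mono fun y => ?_
    simp only [lintegral_const_mul _ (hk.of_uncurry_left (x := y))]
    rw [mul_comm]
    gcongr
    exact hC y
  have h_snd : ∫⁻ yz : Y × Y, f yz.2 ^ (2 : ℝ) * k yz.1 yz.2 ∂ρ.prod ρ =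
      ∫⁻ yz : Y × Y, f yz.1 ^ (2 : ℝ) * k yz.1 yz.2 ∂ρ.prod ρ := by
    rw [← lintegral_prod_swap]
    simp only [Prod.fst_swap, Prod.snd_swap, h_symm]
  have h_young (yz : Y × Y) : f yz.1 * f yz.2 * k yz.1 yz.2 ≤
      2⁻¹ * (f yz.1 ^ (2 : ℝ) * k yz.1 yz.2 + f yz.2 ^ (2 : ℝ) * k yz.1 yz.2) := by
    have h := ENNReal.young_inequality (f yz.1) (f yz.2) Real.HolderConjugate.two_two
    rw [ENNReal.ofReal_ofNat, ENNReal.div_eq_inv_mul, ENNReal.div_eq_inv_mul, ← mul_add] at h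
    rw [← add_mul, ← mul_assoc]
    gcongr
  calc ∫⁻ yz : Y × Y, f yz.1 * f yz.2 * k yz.1 yz.2 ∂ρ.prod ρ
      ≤ 2⁻¹ * (2 * ∫⁻ yz : Y × Y, f yz.1 ^ (2 : ℝ) * k yz.1 yz.2 ∂ρ.prod ρ) := by
        rw [two_mul]
        nth_rw 2 [← h_snd]
        rw [← lintegral_add_left' h_meas, ← lintegral_const_mul' _ _ (by simp)]
        exact lintegral_mono h_young
    _ ≤ C * ∫⁻ y, f y ^ (2 : ℝ) ∂ρ := by
        rwa [← mul_assoc, ENNReal.inv_mul_cancel (by simp) (by simp), one_mul]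

theorem integrable_kernel_mul_conj_kernel [IsFiniteMeasure μ] [SFinite ρ] {k : X → Y → ℂ}
    (hk : Measurable (Function.uncurry k)) {M : ℝ} (hM : ∀ x y, ‖k x y‖ ≤ M) {f : Y → ℂ}
    (hf : Integrable f ρ) :
    Integrable (Function.uncurry fun x (yz : Y × Y) =>
      k x yz.1 * f yz.1 * conj (k x yz.2 * f yz.2)) (μ.prod (ρ.prod ρ)) := by
  have h_conj : Integrable (fun y => conj (f y)) ρ :=
    Complex.conjCLE.toContinuousLinearMap.integrable_comp hf
  have h_meas : Measurable fun p : X × Y × Y => k p.1 p.2.1 * conj (k p.1 p.2.2) :=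
    (hk.comp (measurable_fst.prodMk measurable_snd.fst)).mul
      (Complex.continuous_conj.measurable.comp
        (hk.comp (measurable_fst.prodMk measurable_snd.snd)))
  refine (((integrable_const (1 : ℂ)).mul_prod (hf.mul_prod h_conj)).bdd_mul (c := M * M)
    h_meas.aestronglyMeasurable (ae_of_all _ fun p => ?_)).congr (ae_of_all _ fun p => ?_)
  · rw [norm_mul, RCLike.norm_conj]
    exact mul_le_mul (hM _ _) (hM _ _) (norm_nonneg _) ((norm_nonneg _).trans (hM p.1 p.2.1))
  · simp only [Function.uncurry, map_mul]
    ring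

/-- The square of `∫ k x y f y dy` is a double integral over `(y, z)`; integrate it in `x` first. -/
theorem lintegral_enorm_integral_kernel_sq_le [IsFiniteMeasure μ] [SFinite ρ] {k : X → Y → ℂ}
    (hk : Measurable (Function.uncurry k)) {M : ℝ} (hM : ∀ x y, ‖k x y‖ ≤ M) {f : Y → ℂ}
    (hf : Integrable f ρ) :
    ∫⁻ x, ‖∫ y, k x y * f y ∂ρ‖ₑ ^ (2 : ℝ) ∂μ ≤
      ∫⁻ yz : Y × Y, ‖f yz.1‖ₑ * ‖f yz.2‖ₑ * ‖∫ x, k x yz.1 * conj (k x yz.2) ∂μ‖ₑ ∂ρ.prod ρ := by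
  let F : X → Y × Y → ℂ := fun x yz => k x yz.1 * f yz.1 * conj (k x yz.2 * f yz.2)
  have h_sq (x : X) : ∫ yz, F x yz ∂ρ.prod ρ = (‖∫ y, k x y * f y ∂ρ‖ ^ 2 : ℝ) := by
    have h_prod : ∫ yz, F x yz ∂ρ.prod ρ = _ :=
      integral_prod_mul (fun y => k x y * f y) fun z => conj (k x z * f z)
    rw [h_prod, integral_conj, Complex.mul_conj, Complex.normSq_eq_norm_sq]
  have hF : Integrable (Function.uncurry F) (μ.prod (ρ.prod ρ)) :=
    integrable_kernel_mul_conj_kernel hk hM hf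
  have h_factor (yz : Y × Y) : ∫ x, F x yz ∂μ =
      f yz.1 * conj (f yz.2) * ∫ x, k x yz.1 * conj (k x yz.2) ∂μ := by
    rw [← integral_const_mul]
    refine integral_congr_ae (ae_of_all _ fun x => ?_)
    simp only [F, map_mul]
    ring
  calc ∫⁻ x, ‖∫ y, k x y * f y ∂ρ‖ₑ ^ (2 : ℝ) ∂μ
      = ∫⁻ x, ‖∫ yz, F x yz ∂ρ.prod ρ‖ₑ ∂μ := by
        simp only [h_sq, Complex.ofReal_pow, enorm_pow, ← ENNReal.rpow_two]
        simp only [← ofReal_norm, Complex.norm_real, norm_norm]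
    _ = ‖∫ x, ∫ yz, F x yz ∂ρ.prod ρ ∂μ‖ₑ :=
        lintegral_enorm_eq_enorm_integral hF.integral_prod_left fun x => by
          simp only [h_sq]
          rw [Complex.norm_of_nonneg (by positivity)]
    _ ≤ _ := by
        rw [integral_integral_swap hF]
        refine (enorm_integral_le_lintegral_enorm _).trans (lintegral_mono fun yz => ?_)
        rw [h_factor, enorm_mul, enorm_mul, RCLike.enorm_conj]

theorem lintegral_enorm_integral_sq_le_of_eq_zero [IsFiniteMeasure μ] [SFinite ρ] {k : X → Y → ℂ}
    (hk : Measurable (Function.uncurry k)) {M : ℝ} (hM : ∀ x y, ‖k x y‖ ≤ M) {A : Set Y}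
    (hA : MeasurableSet A) (hA_top : ρ A ≠ ∞) (hkA : ∀ x, ∀ y ∉ A, k x y = 0) :
    ∫⁻ x, ‖∫ y, k x y ∂ρ‖ₑ ^ (2 : ℝ) ∂μ ≤
      ∫⁻ y, ∫⁻ z, ‖∫ x, k x y * conj (k x z) ∂μ‖ₑ ∂ρ ∂ρ := by
  have h_mul (x : X) (y : Y) : k x y * A.indicator 1 y = k x y := by
    by_cases hy : y ∈ A
    · simp [hy]
    · simp [hkA x y hy]
  have h_le_one (y : Y) : ‖A.indicator (1 : Y → ℂ) y‖ₑ ≤ 1 := by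
    by_cases hy : y ∈ A <;> simp [hy]
  have h_int : Integrable (A.indicator (1 : Y → ℂ)) ρ :=
    (integrable_indicator_iff hA).2 (integrableOn_const hA_top)
  have h_sq := lintegral_enorm_integral_kernel_sq_le (μ := μ) hk hM h_int
  simp only [h_mul] at h_sq
  refine (h_sq.trans (lintegral_prod_le _)).trans
    (lintegral_mono fun y => lintegral_mono fun z => ?_)
  exact mul_le_of_le_one_left zero_le (mul_le_one' (h_le_one y) (h_le_one z))

end KernelL2

section GaussianRegularization

/-- The measure `e ^ (-ε x²) x ^ a dx` on the half-line: a finite measure approximating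
`powMeasure a` as `ε → 0`, against which products of kernels can be integrated. -/
noncomputable def gaussPowMeasure (a ε : ℝ) : Measure ℝ :=
  (powMeasure a).withDensity fun x => ENNReal.ofReal (Real.exp (-ε * x ^ 2))

variable {a ε : ℝ}

theorem integral_gaussPowMeasure (a ε : ℝ) (f : ℝ → ℂ) :
    ∫ x, f x ∂gaussPowMeasure a ε = ∫ x, f x * Complex.exp (-ε * x ^ 2) ∂powMeasure a := by
  rw [gaussPowMeasure, integral_withDensity_eq_integral_toReal_smul (by fun_prop)
    (ae_of_all _ fun _ => ENNReal.ofReal_lt_top)]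
  refine integral_congr_ae (ae_of_all _ fun x => ?_)
  simp only [ENNReal.toReal_ofReal (Real.exp_nonneg _), Complex.real_smul]
  push_cast
  ring

theorem isFiniteMeasure_gaussPowMeasure (ha : -1 < a) (hε : 0 < ε) :
    IsFiniteMeasure (gaussPowMeasure a ε) :=
  isFiniteMeasure_withDensity_ofReal (integrable_exp_neg_mul_sq_powMeasure ha hε).2

theorem lintegral_powMeasure_le_of_forall_gaussPowMeasure {g : ℝ → ℝ≥0∞}
    (hg : AEMeasurable g (powMeasure a)) {C : ℝ≥0∞}
    (h : ∀ ε : ℝ, 0 < ε → ∫⁻ x, g x ∂gaussPowMeasure a ε ≤ C) : ∫⁻ x, g x ∂powMeasure a ≤ C := by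
  let ε : ℕ → ℝ := fun n => 1 / ((n : ℝ) + 1)
  have hε : Tendsto ε atTop (𝓝 0) := tendsto_one_div_add_atTop_nhds_zero_nat
  let w : ℕ → ℝ → ℝ≥0∞ := fun n x => ENNReal.ofReal (Real.exp (-ε n * x ^ 2))
  have h_mono (x : ℝ) : Monotone fun n => w n x * g x := fun m n hmn => by
    have h_anti : ε n ≤ ε m := by simp only [ε]; gcongr
    simp only [w]
    gcongr
  have h_tendsto (x : ℝ) : Tendsto (fun n => w n x * g x) atTop (𝓝 (g x)) := by
    have h_w : Tendsto (fun n => w n x) atTop (𝓝 1) := by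
      have h_cont : Continuous fun s => ENNReal.ofReal (Real.exp (-s * x ^ 2)) :=
        ENNReal.continuous_ofReal.comp (by fun_prop)
      simpa [w, Function.comp_def] using (h_cont.tendsto 0).comp hε
    simpa using ENNReal.Tendsto.mul_const h_w (.inl one_ne_zero)
  refine le_of_tendsto' (lintegral_tendsto_of_tendsto_of_monotone
    (fun n => AEMeasurable.mul (by fun_prop) hg) (ae_of_all _ h_mono) (ae_of_all _ h_tendsto))
    fun n => ?_
  refine (le_of_eq ?_).trans (h (ε n) (by positivity))
  rw [gaussPowMeasure, lintegral_withDensity_eq_lintegral_mul_non_measurable _ (by fun_prop)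
    (ae_of_all _ fun _ => ENNReal.ofReal_lt_top)]

end GaussianRegularization

section Hankel

/-- The kernel of the (unnormalised, `l`-dilated) Hankel transform, a multiple of
`(lxy) ^ (-ν) * J_ν(2lxy)`. -/
noncomputable def hankelKernel (ν l x y : ℝ) : ℂ :=
  besselClifford ν (-(l * x * y) ^ 2)

variable {ν l : ℝ}

theorem hankelKernel_eq (ν l x y : ℝ) :
    hankelKernel ν l x y = besselClifford ν (-(l * y) ^ 2 * x ^ 2) := by
  rw [hankelKernel]
  congr 1
  ring

theorem hankelKernel_comm (ν l x y : ℝ) : hankelKernel ν l x y = hankelKernel ν l y x := by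
  rw [hankelKernel, hankelKernel, mul_right_comm]

theorem hankelKernel_neg (ν l x y : ℝ) : hankelKernel ν (-l) x y = hankelKernel ν l x y := by
  simp [hankelKernel]

theorem hankelKernel_abs (ν l x y : ℝ) : hankelKernel ν |l| x y = hankelKernel ν l x y := by
  rcases abs_choice l with h | h <;> simp only [h, hankelKernel_neg]

theorem norm_hankelKernel_le (hν : -1 / 2 ≤ ν) (l x y : ℝ) :
    ‖hankelKernel ν l x y‖ ≤ ‖besselClifford ν 0‖ := by
  have h := norm_besselClifford_sq_le hν (Complex.I * (l * x * y : ℝ))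
  rw [mul_pow, Complex.I_sq, neg_one_mul] at h
  simpa [hankelKernel] using h

theorem measurable_hankelKernel (ν : ℝ) {α : Type*} [MeasurableSpace α] {l x y : α → ℝ}
    (hl : Measurable l) (hx : Measurable x) (hy : Measurable y) :
    Measurable fun p => hankelKernel ν (l p) (x p) (y p) :=
  (measurable_besselClifford ν).comp (by fun_prop)

theorem conj_hankelKernel (ν l x y : ℝ) : conj (hankelKernel ν l x y) = hankelKernel ν l x y := by
  simp [hankelKernel, conj_besselClifford]

theorem integral_hankelKernel_mul_hankelKernel (hν : -1 < ν) {ε : ℝ} (hε : 0 < ε) (l y z : ℝ) :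
    ∫ x, hankelKernel ν l x y * hankelKernel ν l x z ∂gaussPowMeasure (2 * ν + 1) ε =
      1 / 2 * (ε : ℂ) ^ (-(ν + 1) : ℂ) * Complex.exp (-(l ^ 2 * y ^ 2 / ε)) *
        (besselClifford ν (((l ^ 2 * y / ε) ^ 2 : ℝ) * z ^ 2) *
          Complex.exp (-(l ^ 2 / ε : ℝ) * z ^ 2)) := by
  have h := integral_besselClifford_mul_besselClifford_mul_cexp hν (-(l * y) ^ 2) (-(l * z) ^ 2)
    (p := ε) (by simpa using hε)
  simp only [integral_gaussPowMeasure, hankelKernel_eq]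
  refine h.trans ?_
  rw [mul_assoc (_ * _), mul_left_comm (Complex.exp (-_)), ← Complex.exp_add,
    mul_comm (besselClifford _ _)]
  congr 3 <;> · push_cast; ring

theorem lintegral_enorm_integral_hankelKernel_mul_hankelKernel (hν : -1 < ν) {ε : ℝ} (hε : 0 < ε)
    (hl : 0 < l) (y : ℝ) :
    ∫⁻ z, ‖∫ x, hankelKernel ν l x y * hankelKernel ν l x z ∂gaussPowMeasure (2 * ν + 1) ε‖ₑ
      ∂powMeasure (2 * ν + 1) = ENNReal.ofReal (1 / 4 * (l ^ 2) ^ (-(ν + 1))) := by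
  simp only [integral_hankelKernel_mul_hankelKernel hν hε, enorm_mul _ (_ * _)]
  rw [lintegral_const_mul' _ _ enorm_ne_top,
    lintegral_enorm_besselClifford_mul_cexp hν (by positivity) (by positivity), ← enorm_mul]
  have h_base : ((l ^ 2 : ℝ) : ℂ) ^ (-(ν + 1) : ℂ) =
      (ε : ℂ) ^ (-(ν + 1) : ℂ) * ((l ^ 2 / ε : ℝ) : ℂ) ^ (-(ν + 1) : ℂ) := by
    rw [← Complex.mul_cpow_ofReal_nonneg hε.le (by positivity), ← Complex.ofReal_mul,
      mul_div_cancel₀ _ hε.ne']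
  have h_exp : Complex.exp (-(l ^ 2 * y ^ 2 / ε)) *
      Complex.exp (((l ^ 2 * y / ε) ^ 2 : ℝ) / (l ^ 2 / ε : ℝ)) = 1 := by
    rw [← Complex.exp_add, ← Complex.exp_zero]
    congr 1
    push_cast
    field_simp
    ring
  have h_value : 1 / 2 * (ε : ℂ) ^ (-(ν + 1) : ℂ) * Complex.exp (-(l ^ 2 * y ^ 2 / ε)) *
      (1 / 2 * ((l ^ 2 / ε : ℝ) : ℂ) ^ (-(ν + 1) : ℂ) *
        Complex.exp (((l ^ 2 * y / ε) ^ 2 : ℝ) / (l ^ 2 / ε : ℝ))) =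
      (1 / 4 * (l ^ 2) ^ (-(ν + 1)) : ℝ) := by
    rw [Complex.ofReal_mul, Complex.ofReal_cpow (by positivity)]
    push_cast at h_base h_exp ⊢
    rw [h_base]
    linear_combination 1 / 4 * (ε : ℂ) ^ (-(ν + 1) : ℂ) * ((l ^ 2 / ε : ℂ) ^ (-(ν + 1) : ℂ)) * h_exp
  rw [h_value, ← ofReal_norm, Complex.norm_of_nonneg (by positivity)]

theorem lintegral_enorm_integral_hankelKernel_sq_le (hν : -1 / 2 ≤ ν) (hl : 0 < l) {f : ℝ → ℂ}
    (hf : Integrable f (powMeasure (2 * ν + 1))) :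
    ∫⁻ x, ‖∫ y, hankelKernel ν l x y * f y ∂powMeasure (2 * ν + 1)‖ₑ ^ (2 : ℝ)
      ∂powMeasure (2 * ν + 1) ≤
    ENNReal.ofReal (1 / 4 * (l ^ 2) ^ (-(ν + 1))) *
      ∫⁻ y, ‖f y‖ₑ ^ (2 : ℝ) ∂powMeasure (2 * ν + 1) := by
  have h_meas : Measurable (Function.uncurry (hankelKernel ν l)) :=
    measurable_hankelKernel ν measurable_const measurable_fst measurable_snd
  refine lintegral_powMeasure_le_of_forall_gaussPowMeasure
    ((aestronglyMeasurable_integral_kernel h_meas hf.1).enorm.pow_const _) fun ε hε => ?_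
  have h_finite := isFiniteMeasure_gaussPowMeasure (by linarith : -1 < 2 * ν + 1) hε
  refine (lintegral_enorm_integral_kernel_sq_le h_meas (norm_hankelKernel_le hν l) hf).trans ?_
  simp only [conj_hankelKernel]
  have h_schur :=
    lintegral_enorm_integral_hankelKernel_mul_hankelKernel (by linarith : -1 < ν) hε hl
  refine lintegral_mul_mul_symm_kernel_le (k := fun y z =>
      ‖∫ x, hankelKernel ν l x y * hankelKernel ν l x z ∂gaussPowMeasure (2 * ν + 1) ε‖ₑ)
    (Measurable.enorm ?_) (fun y z => by simp only [mul_comm (hankelKernel ν l _ y)])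
    (fun y => (h_schur y).le) hf.1.enorm
  refine (StronglyMeasurable.integral_prod_right' (f := fun p : (ℝ × ℝ) × ℝ =>
    hankelKernel ν l p.2 p.1.1 * hankelKernel ν l p.2 p.1.2) ?_).measurable
  refine (Measurable.mul ?_ ?_).stronglyMeasurable
  · exact measurable_hankelKernel ν measurable_const measurable_snd measurable_fst.fst
  · exact measurable_hankelKernel ν measurable_const measurable_snd measurable_fst.snd

end Hankel

section Interpolation

variable {X Y E F : Type*} [MeasurableSpace X] [MeasurableSpace Y] {μ : Measure X} {ρ : Measure Y}
  [NormedAddCommGroup E] [NormedAddCommGroup F]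

theorem lintegral_Ioc_rpow {s : ℝ} (hs : -1 < s) {b : ℝ} (hb : 0 ≤ b) :
    ∫⁻ t in Ioc 0 b, ENNReal.ofReal (t ^ s) = ENNReal.ofReal (b ^ (s + 1) / (s + 1)) := by
  have h_int := intervalIntegral.intervalIntegrable_rpow' (a := 0) (b := b) hs
  rw [← ofReal_integral_eq_lintegral_ofReal
    ((intervalIntegrable_iff_integrableOn_Ioc_of_le hb).1 h_int)
    ((ae_restrict_mem measurableSet_Ioc).mono fun t ht => Real.rpow_nonneg ht.1.le _),
    ← intervalIntegral.integral_of_le hb, integral_rpow (.inl hs), Real.zero_rpow (by linarith),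
    sub_zero]

theorem ofReal_norm_rpow (x : E) {p : ℝ} (hp : 0 ≤ p) : ENNReal.ofReal (‖x‖ ^ p) = ‖x‖ₑ ^ p := by
  rw [← ENNReal.ofReal_rpow_of_nonneg (norm_nonneg x) hp, ofReal_norm]

theorem measure_lt_norm_le {g : X → F} (hg : AEStronglyMeasurable g μ) {l : ℝ} (hl : 0 < l) :
    μ {x | l < ‖g x‖} ≤ ENNReal.ofReal (l ^ (-2 : ℝ)) * ∫⁻ x, ‖g x‖ₑ ^ (2 : ℝ) ∂μ := by
  have h := meas_ge_le_lintegral_div (hg.enorm.pow_const (2 : ℝ))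
    (ε := ENNReal.ofReal (l ^ (2 : ℝ))) (by simpa using by positivity) ENNReal.ofReal_ne_top
  rw [Real.rpow_neg hl.le, ENNReal.ofReal_inv_of_pos (by positivity), mul_comm, ← div_eq_mul_inv]
  refine (measure_mono fun x (hx : l < ‖g x‖) => ?_).trans h
  rw [mem_ofPred, ← ofReal_norm_rpow _ zero_le_two]
  gcongr

variable {r p c : ℝ} {f : Y → E}

theorem lintegral_enorm_indicator_compl_le (hp : 1 < p) (hc : 0 < c) {l : ℝ} (hl : 0 < l) :
    ∫⁻ y, ‖{y | l * ‖f y‖ ^ (p - 1) ≤ c}ᶜ.indicator f y‖ₑ ∂ρ ≤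
      ENNReal.ofReal (l / c) * ∫⁻ y, ‖f y‖ₑ ^ p ∂ρ := by
  rw [← lintegral_const_mul' _ _ ENNReal.ofReal_ne_top]
  refine lintegral_mono fun y => ?_
  by_cases hy : l * ‖f y‖ ^ (p - 1) ≤ c
  · simp [hy]
  rw [indicator_of_mem (by simpa using hy), ← ofReal_norm_rpow _ (by linarith),
    ← ENNReal.ofReal_mul (by positivity), ← ofReal_norm]
  refine ENNReal.ofReal_le_ofReal ?_
  have h_pow : ‖f y‖ ^ p = ‖f y‖ ^ (p - 1) * ‖f y‖ := by
    rw [← Real.rpow_add_one' (norm_nonneg _) (by linarith), sub_add_cancel]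
  rw [h_pow, div_mul_eq_mul_div, le_div_iff₀ hc, ← mul_assoc, mul_comm]
  exact mul_le_mul_of_nonneg_right (not_le.1 hy).le (norm_nonneg _)

theorem lintegral_Ioi_rpow_mul_indicator (hr : 2 < r) (hp : r.HolderConjugate p) (hc : 0 < c)
    (v : E) :
    ∫⁻ l in Ioi (0 : ℝ), ENNReal.ofReal (l ^ (r - 3)) *
        {v : E | l * ‖v‖ ^ (p - 1) ≤ c}.indicator (fun v => ‖v‖ₑ ^ (2 : ℝ)) v =
      ENNReal.ofReal (c ^ (r - 2) / (r - 2)) * ‖v‖ₑ ^ p := by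
  rcases (norm_nonneg v).eq_or_lt with h_zero | h_pos
  · simp [indicator_apply, norm_eq_zero.1 h_zero.symm, hp.symm.pos]
  let b := c / ‖v‖ ^ (p - 1)
  have hb : 0 ≤ b := by positivity
  have h_set (l : ℝ) (hl : l ∈ Ioi (0 : ℝ)) : ENNReal.ofReal (l ^ (r - 3)) *
      {v : E | l * ‖v‖ ^ (p - 1) ≤ c}.indicator (fun v => ‖v‖ₑ ^ (2 : ℝ)) v =
      (Ioc 0 b).indicator (fun l => ENNReal.ofReal (l ^ (r - 3)) * ‖v‖ₑ ^ (2 : ℝ)) l := by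
    have h_iff : l * ‖v‖ ^ (p - 1) ≤ c ↔ l ∈ Ioc 0 b := by
      rw [← le_div_iff₀ (by positivity)]
      exact ⟨fun h => ⟨hl, h⟩, And.right⟩
    simp only [indicator_apply, mem_ofPred_eq, h_iff, mul_ite, mul_zero]
  rw [setLIntegral_congr_fun measurableSet_Ioi h_set, setLIntegral_indicator measurableSet_Ioc,
    inter_eq_left.2 fun l hl => hl.1, lintegral_mul_const _ (by fun_prop),
    lintegral_Ioc_rpow (by linarith) hb, ← ofReal_norm_rpow _ zero_le_two,
    ← ofReal_norm_rpow _ hp.symm.nonneg,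
    ← ENNReal.ofReal_mul (div_nonneg (Real.rpow_nonneg hb _) (by linarith)),
    ← ENNReal.ofReal_mul (div_nonneg (Real.rpow_nonneg hc.le _) (sub_pos.2 hr).le)]
  have h_exponent : (p - 1) * (r - 2) = 2 - p := by linear_combination hp.mul_eq_add
  have h_pow : ‖v‖ ^ p = ‖v‖ ^ (2 : ℝ) / (‖v‖ ^ (p - 1)) ^ (r - 2) := by
    rw [← Real.rpow_mul h_pos.le, ← Real.rpow_sub h_pos, h_exponent, sub_sub_cancel]
  rw [h_pow, show r - 3 + 1 = r - 2 by ring, Real.div_rpow hc.le (by positivity)]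
  congr 1
  ring

theorem lintegral_Ioi_lintegral_indicator [SFinite ρ] (hr : 2 < r) (hp : r.HolderConjugate p)
    (hc : 0 < c) (hf : StronglyMeasurable f) :
    ∫⁻ l in Ioi (0 : ℝ), ∫⁻ y, ENNReal.ofReal (l ^ (r - 3)) *
        {y | l * ‖f y‖ ^ (p - 1) ≤ c}.indicator (fun y => ‖f y‖ₑ ^ (2 : ℝ)) y ∂ρ =
      ENNReal.ofReal (c ^ (r - 2) / (r - 2)) * ∫⁻ y, ‖f y‖ₑ ^ p ∂ρ := by
  have h_meas : Measurable fun z : ℝ × Y => ENNReal.ofReal (z.1 ^ (r - 3)) *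
      {y | z.1 * ‖f y‖ ^ (p - 1) ≤ c}.indicator (fun y => ‖f y‖ₑ ^ (2 : ℝ)) z.2 := by
    have h_norm := hf.norm.measurable
    have := hf.enorm
    have h_set : MeasurableSet {z : ℝ × Y | z.1 * ‖f z.2‖ ^ (p - 1) ≤ c} :=
      measurableSet_le (measurable_fst.mul ((h_norm.comp measurable_snd).pow_const _))
        measurable_const
    exact .mul (by fun_prop) (.ite h_set (by fun_prop) measurable_const)
  rw [lintegral_lintegral_swap h_meas.aemeasurable,
    ← lintegral_const_mul' _ _ ENNReal.ofReal_ne_top]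
  exact lintegral_congr fun y => lintegral_Ioi_rpow_mul_indicator hr hp hc (f y)

variable {T : (Y → E) → X → F} {A : ℝ}

/-- Split `f` at a height depending on `l`: the high part contributes at most `l / 2` by the
`L¹ → L^∞` bound, and Chebyshev's inequality applies to the low part in `L²`. -/
theorem measure_lt_norm_le_lintegral_indicator (hp : 1 < p) (hA : 0 < A)
    (h_meas : ∀ g, Integrable g ρ → AEStronglyMeasurable (T g) μ)
    (h_add : ∀ g h, Integrable g ρ → Integrable h ρ → ∀ x, ‖T (g + h) x‖ ≤ ‖T g x‖ + ‖T h x‖)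
    (h_one : ∀ g, Integrable g ρ → ∀ x, ‖T g x‖ₑ ≤ ENNReal.ofReal A * ∫⁻ y, ‖g y‖ₑ ∂ρ)
    (h_two : ∀ g, Integrable g ρ →
      ∫⁻ x, ‖T g x‖ₑ ^ (2 : ℝ) ∂μ ≤ ∫⁻ y, ‖g y‖ₑ ^ (2 : ℝ) ∂ρ)
    (hfm : StronglyMeasurable f) (hf : Integrable f ρ) {N : ℝ} (hN : 0 < N)
    (hfN : ∫⁻ y, ‖f y‖ₑ ^ p ∂ρ = ENNReal.ofReal N) {l : ℝ} (hl : 0 < l) :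
    μ {x | l < ‖T f x‖} ≤ ENNReal.ofReal (4 * l ^ (-2 : ℝ)) *
      ∫⁻ y, {y | l * ‖f y‖ ^ (p - 1) ≤ 2 * A * N}.indicator (fun y => ‖f y‖ₑ ^ (2 : ℝ)) y ∂ρ := by
  let S := {y | l * ‖f y‖ ^ (p - 1) ≤ 2 * A * N}
  have hS : MeasurableSet S := measurableSet_le ((hfm.norm.measurable.pow_const _).const_mul _)
    measurable_const
  have h_low : Integrable (S.indicator f) ρ := hf.indicator hS
  have h_high : Integrable (Sᶜ.indicator f) ρ := hf.indicator hS.compl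
  have h_high_le (x : X) : ‖T (Sᶜ.indicator f) x‖ ≤ l / 2 := by
    have h_compl := lintegral_enorm_indicator_compl_le (f := f) (ρ := ρ) hp
      (show 0 < 2 * A * N by positivity) hl
    rw [hfN, ← ENNReal.ofReal_mul (by positivity)] at h_compl
    rw [← ENNReal.ofReal_le_ofReal_iff (by positivity), ofReal_norm]
    refine (h_one _ h_high x).trans ((mul_le_mul_right h_compl _).trans_eq ?_)
    rw [← ENNReal.ofReal_mul hA.le]
    congr 1
    field_simp
  have h_subset : {x | l < ‖T f x‖} ⊆ {x | l / 2 < ‖T (S.indicator f) x‖} := fun x hx => by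
    have h_split := h_add _ _ h_low h_high x
    rw [indicator_self_add_compl] at h_split
    simp only [mem_ofPred_eq] at hx ⊢
    linarith [h_high_le x]
  have h_const : (l / 2) ^ (-2 : ℝ) = 4 * l ^ (-2 : ℝ) := by
    rw [Real.div_rpow hl.le zero_le_two, Real.rpow_neg zero_le_two, div_inv_eq_mul]
    norm_num [mul_comm]
  rw [← h_const]
  refine (measure_mono h_subset).trans
    ((measure_lt_norm_le (h_meas _ h_low) (half_pos hl)).trans ?_)
  gcongr
  refine (h_two _ h_low).trans_eq (lintegral_congr fun y => ?_)
  by_cases hy : y ∈ S <;> simp [hy, S]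

theorem lintegral_enorm_rpow_le_of_layer [SFinite ρ] (hr : 2 < r) (hp : r.HolderConjugate p)
    (hfm : StronglyMeasurable f) (hc : 0 < c) {g : X → F} (hg : AEStronglyMeasurable g μ)
    (h_level : ∀ l, 0 < l → μ {x | l < ‖g x‖} ≤ ENNReal.ofReal (4 * l ^ (-2 : ℝ)) *
      ∫⁻ y, {y | l * ‖f y‖ ^ (p - 1) ≤ c}.indicator (fun y => ‖f y‖ₑ ^ (2 : ℝ)) y ∂ρ) :
    ∫⁻ x, ‖g x‖ₑ ^ r ∂μ ≤
      ENNReal.ofReal (4 * r * c ^ (r - 2) / (r - 2)) * ∫⁻ y, ‖f y‖ₑ ^ p ∂ρ := by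
  have : 0 < r - 2 := sub_pos.2 hr
  have h_weight {l : ℝ} (hl : 0 < l) :
      ENNReal.ofReal (4 * l ^ (-2 : ℝ)) * ENNReal.ofReal (l ^ (r - 1)) =
        4 * ENNReal.ofReal (l ^ (r - 3)) := by
    rw [← ENNReal.ofReal_mul (by positivity), mul_assoc, ← Real.rpow_add hl,
      ENNReal.ofReal_mul zero_le_four, ENNReal.ofReal_ofNat]
    ring_nf
  calc ∫⁻ x, ‖g x‖ₑ ^ r ∂μ
      = ENNReal.ofReal r * ∫⁻ l in Ioi 0, μ {x | l < ‖g x‖} * ENNReal.ofReal (l ^ (r - 1)) := by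
        rw [← lintegral_rpow_eq_lintegral_meas_lt_mul μ (ae_of_all _ fun x => norm_nonneg (g x))
          hg.norm.aemeasurable (by linarith)]
        exact lintegral_congr fun x => (ofReal_norm_rpow _ (by linarith)).symm
    _ ≤ ENNReal.ofReal r * ∫⁻ l in Ioi (0 : ℝ), 4 * ∫⁻ y, ENNReal.ofReal (l ^ (r - 3)) *
          {y | l * ‖f y‖ ^ (p - 1) ≤ c}.indicator (fun y => ‖f y‖ₑ ^ (2 : ℝ)) y ∂ρ := by
        gcongr ENNReal.ofReal r * ?_
        refine setLIntegral_mono' measurableSet_Ioi fun l hl => ?_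
        rw [lintegral_const_mul' _ _ ENNReal.ofReal_ne_top, ← mul_assoc, ← h_weight hl,
          mul_right_comm]
        gcongr
        exact h_level l hl
    _ = ENNReal.ofReal r *
          (4 * (ENNReal.ofReal (c ^ (r - 2) / (r - 2)) * ∫⁻ y, ‖f y‖ₑ ^ p ∂ρ)) := by
        rw [lintegral_const_mul' _ _ ENNReal.ofNat_ne_top,
          lintegral_Ioi_lintegral_indicator hr hp hc hfm]
    _ = _ := by
        rw [← mul_assoc, ← mul_assoc,
          ← ENNReal.ofReal_ofNat 4, ← ENNReal.ofReal_mul (by linarith),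
          ← ENNReal.ofReal_mul (by positivity)]
        ring_nf

theorem lintegral_enorm_rpow_le_of_interpolation [SFinite ρ] (hr : 2 < r)
    (hp : r.HolderConjugate p) (hA : 0 < A)
    (h_meas : ∀ g, Integrable g ρ → AEStronglyMeasurable (T g) μ)
    (h_add : ∀ g h, Integrable g ρ → Integrable h ρ → ∀ x, ‖T (g + h) x‖ ≤ ‖T g x‖ + ‖T h x‖)
    (h_one : ∀ g, Integrable g ρ → ∀ x, ‖T g x‖ₑ ≤ ENNReal.ofReal A * ∫⁻ y, ‖g y‖ₑ ∂ρ)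
    (h_two : ∀ g, Integrable g ρ →
      ∫⁻ x, ‖T g x‖ₑ ^ (2 : ℝ) ∂μ ≤ ∫⁻ y, ‖g y‖ₑ ^ (2 : ℝ) ∂ρ)
    (hfm : StronglyMeasurable f) (hf : Integrable f ρ) :
    ∫⁻ x, ‖T f x‖ₑ ^ r ∂μ ≤ ENNReal.ofReal (4 * r * (2 * A) ^ (r - 2) / (r - 2)) *
      (∫⁻ y, ‖f y‖ₑ ^ p ∂ρ) ^ (r - 1) := by
  have : 0 < r - 2 := sub_pos.2 hr
  have h_const : 0 < 4 * r * (2 * A) ^ (r - 2) / (r - 2) := by positivity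
  rcases eq_or_ne (∫⁻ y, ‖f y‖ₑ ^ p ∂ρ) 0 with h_zero | h_ne_zero
  · have hf_zero : ∫⁻ y, ‖f y‖ₑ ∂ρ = 0 := by
      rw [lintegral_eq_zero_iff (hfm.enorm.pow_const p)] at h_zero
      exact (lintegral_congr_ae (h_zero.mono fun y hy =>
        (ENNReal.rpow_eq_zero_iff_of_pos hp.symm.pos).1 hy)).trans lintegral_zero
    have h_image (x : X) : ‖T f x‖ₑ = 0 := by simpa [hf_zero] using h_one f hf x
    simp [h_image, ENNReal.zero_rpow_of_pos (show 0 < r by linarith)]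
  rcases eq_or_ne (∫⁻ y, ‖f y‖ₑ ^ p ∂ρ) ∞ with h_top | h_ne_top
  · rw [h_top, ENNReal.top_rpow_of_pos (by linarith), ENNReal.mul_top (by simpa using h_const)]
    exact le_top
  obtain ⟨N, hN, hfN⟩ : ∃ N : ℝ, 0 < N ∧ ∫⁻ y, ‖f y‖ₑ ^ p ∂ρ = ENNReal.ofReal N :=
    ⟨_, ENNReal.toReal_pos h_ne_zero h_ne_top, (ENNReal.ofReal_toReal h_ne_top).symm⟩
  refine (lintegral_enorm_rpow_le_of_layer hr hp hfm (show 0 < 2 * A * N by positivity)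
    (h_meas f hf) fun l hl => measure_lt_norm_le_lintegral_indicator hp.symm.lt hA h_meas h_add
      h_one h_two hfm hf hN hfN hl).trans_eq ?_
  have h_split : N ^ (r - 1) = N ^ (r - 2) * N := by
    rw [← Real.rpow_add_one hN.ne']
    ring_nf
  rw [hfN, ENNReal.ofReal_rpow_of_pos hN, ← ENNReal.ofReal_mul (by positivity),
    ← ENNReal.ofReal_mul h_const.le, h_split,
    Real.mul_rpow (by positivity) hN.le]
  ring_nf

/-- The factor lost in interpolating between `L¹ → L^∞` and `L² → L²` by real methods. -/
noncomputable def interpolationConst (r : ℝ) : ℝ := (4 * r * 2 ^ (r - 2) / (r - 2)) ^ (1 / r)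

theorem interpolationConst_nonneg (hr : 2 < r) : 0 ≤ interpolationConst r := by
  have := sub_pos.2 hr
  unfold interpolationConst
  positivity

theorem eLpNorm'_integral_kernel_le [SFinite μ] [SFinite ρ] (hr : 2 < r) (hp : r.HolderConjugate p)
    (hA : 0 < A) {k : X → Y → ℂ} (hk : Measurable (Function.uncurry k))
    (hkA : ∀ x y, ‖k x y‖ ≤ A)
    (h_two : ∀ g, Integrable g ρ →
      ∫⁻ x, ‖∫ y, k x y * g y ∂ρ‖ₑ ^ (2 : ℝ) ∂μ ≤ ∫⁻ y, ‖g y‖ₑ ^ (2 : ℝ) ∂ρ)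
    {f : Y → ℂ} (hf : Integrable f ρ) :
    eLpNorm' (fun x => ∫ y, k x y * f y ∂ρ) r μ ≤
      ENNReal.ofReal (interpolationConst r * A ^ (1 - 2 / r)) * eLpNorm' f p ρ := by
  have hr' : 0 < r - 2 := sub_pos.2 hr
  have hr0 : 0 < r := by linarith
  have h_mul {g : Y → ℂ} (hg : Integrable g ρ) (x : X) : Integrable (fun y => k x y * g y) ρ :=
    hg.bdd_mul hk.of_uncurry_left.aestronglyMeasurable (ae_of_all _ (hkA x))
  have h_interpolation := lintegral_enorm_rpow_le_of_interpolation (μ := μ)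
    (T := fun g x => ∫ y, k x y * g y ∂ρ) hr hp hA
    (fun g hg => aestronglyMeasurable_integral_kernel hk hg.1)
    (fun g h hg hh x => by
      simp only [Pi.add_apply, mul_add]
      rw [integral_add (h_mul hg x) (h_mul hh x)]
      exact norm_add_le _ _)
    (fun g hg x => enorm_integral_mul_le (fun y => by
      rw [← ofReal_norm]
      exact ENNReal.ofReal_le_ofReal (hkA x y)) hg.1) h_two
    hf.1.stronglyMeasurable_mk (hf.congr hf.1.ae_eq_mk)
  have h_congr (x : X) : ∫ y, k x y * hf.1.mk f y ∂ρ = ∫ y, k x y * f y ∂ρ :=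
    integral_congr_ae (hf.1.ae_eq_mk.mono fun y hy => by simp only [hy])
  have h_exponent : (r - 1) * (1 / r) = 1 / p := by
    rw [sub_mul, mul_one_div_cancel hr0.ne', one_div, one_div, one_mul, ← hp.inv_add_inv_eq_one,
      add_sub_cancel_left]
  rw [← eLpNorm'_congr_ae (hf.1.ae_eq_mk.symm)]
  simp only [h_congr, eLpNorm'_eq_lintegral_enorm] at h_interpolation ⊢
  refine (ENNReal.rpow_le_rpow h_interpolation (by positivity)).trans_eq ?_
  rw [ENNReal.mul_rpow_of_nonneg _ _ (by positivity), ← ENNReal.rpow_mul,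
    ENNReal.ofReal_rpow_of_pos (by positivity), interpolationConst,
    h_exponent,
    show 1 - 2 / r = (r - 2) * (1 / r) by field_simp, Real.rpow_mul hA.le,
    ← Real.mul_rpow (by positivity) (by positivity), Real.mul_rpow zero_le_two hA.le]
  ring_nf

end Interpolation

section FractionalIntegration

theorem lintegral_comp_abs (k : ℝ → ℝ≥0∞) : ∫⁻ u, k |u| = 2 * ∫⁻ u in Ioi 0, k u := by
  have h_pos : ∫⁻ u in Ioi 0, k |u| = ∫⁻ u in Ioi 0, k u :=
    setLIntegral_congr_fun measurableSet_Ioi fun u hu => by simp only [abs_of_pos hu.out]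
  have h_neg : ∫⁻ u in Iic 0, k |u| = ∫⁻ u in Ioi 0, k u := by
    rw [← (Measure.measurePreserving_neg volume).setLIntegral_comp_preimage_emb
      (Homeomorph.neg ℝ).measurableEmbedding]
    simp only [abs_neg, neg_preimage, neg_Iic, neg_zero]
    rw [setLIntegral_congr Ioi_ae_eq_Ici.symm, h_pos]
  rw [← lintegral_add_compl _ measurableSet_Ioi, compl_Ioi, h_pos, h_neg, two_mul]

theorem lintegral_comp_abs_sub (k : ℝ → ℝ≥0∞) (t : ℝ) :
    ∫⁻ s, k |t - s| = 2 * ∫⁻ u in Ioi 0, k u := by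
  rw [lintegral_sub_left_eq_self (fun u => k |u|) t, lintegral_comp_abs]

theorem lintegral_abs_sub_le_rpow_neg {b : ℝ} (hb : b < 1) {R : ℝ} (hR : 0 ≤ R) (t : ℝ) :
    ∫⁻ s in {s | |t - s| ≤ R}, ENNReal.ofReal (|t - s| ^ (-b)) =
      ENNReal.ofReal (2 / (1 - b) * R ^ (1 - b)) := by
  have h_set : MeasurableSet {s | |t - s| ≤ R} := measurableSet_le (by fun_prop) (by fun_prop)
  rw [← lintegral_indicator h_set]
  refine (lintegral_comp_abs_sub ((Iic R).indicator fun u => ENNReal.ofReal (u ^ (-b))) t).trans ?_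
  rw [setLIntegral_indicator measurableSet_Iic, inter_comm, Ioi_inter_Iic,
    lintegral_Ioc_rpow (by linarith) hR, ← ENNReal.ofReal_ofNat 2,
    ← ENNReal.ofReal_mul zero_le_two]
  ring_nf

theorem lintegral_lt_abs_sub_rpow_neg_two {R : ℝ} (hR : 0 < R) (t : ℝ) :
    ∫⁻ s in {s | R < |t - s|}, ENNReal.ofReal (|t - s| ^ (-2 : ℝ)) =
      ENNReal.ofReal (2 * R⁻¹) := by
  have h_set : MeasurableSet {s | R < |t - s|} := measurableSet_lt (by fun_prop) (by fun_prop)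
  rw [← lintegral_indicator h_set]
  refine (lintegral_comp_abs_sub
    ((Ioi R).indicator fun u => ENNReal.ofReal (u ^ (-2 : ℝ))) t).trans ?_
  rw [setLIntegral_indicator measurableSet_Ioi, inter_eq_left.2 (Ioi_subset_Ioi hR.le),
    ← ofReal_integral_eq_lintegral_ofReal (integrableOn_Ioi_rpow_of_lt (by norm_num) hR)
      ((ae_restrict_mem measurableSet_Ioi).mono fun u hu =>
        Real.rpow_nonneg (hR.trans hu).le _), integral_Ioi_rpow_of_lt (by norm_num) hR,
    ← ENNReal.ofReal_ofNat 2, ← ENNReal.ofReal_mul zero_le_two,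
    show (-2 : ℝ) + 1 = -1 by norm_num, Real.rpow_neg_one]
  ring_nf

variable {q p : ℝ} {f g : ℝ → ℝ≥0∞}

/-- The constant in the Hardy–Littlewood–Sobolev inequality below, half for each of the regions
`f ≤ g` and `g ≤ f`. -/
noncomputable def fractionalIntegrationConst (q : ℝ) : ℝ := 2 / (1 - 2 / q) + 2 ^ (1 / q)

theorem fractionalIntegrationConst_pos (hq : 2 < q) : 0 < fractionalIntegrationConst q := by
  have : 0 < 1 - 2 / q := sub_pos.2 ((div_lt_one (by linarith)).2 hq)
  unfold fractionalIntegrationConst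
  positivity

theorem lintegral_far_mul_abs_sub_rpow_neg_le (hq : 0 < q) (hp : q.HolderConjugate p)
    (hg : AEMeasurable g) (hg_one : ∫⁻ s, g s ^ p ≤ 1) {R : ℝ} (hR : 0 < R) (t : ℝ) :
    ∫⁻ s in {s | R < |t - s|}, g s * ENNReal.ofReal (|t - s| ^ (-(2 / q))) ≤
      ENNReal.ofReal (2 ^ (1 / q) * R ^ (-(1 / q))) := by
  have h_rpow (s : ℝ) : ENNReal.ofReal (|t - s| ^ (-(2 / q))) ^ q =
      ENNReal.ofReal (|t - s| ^ (-2 : ℝ)) := by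
    rw [ENNReal.ofReal_rpow_of_nonneg (by positivity) hq.le, ← Real.rpow_mul (abs_nonneg _)]
    field_simp
  refine (ENNReal.lintegral_mul_le_Lp_mul_Lq (volume.restrict {s | R < |t - s|}) hp.symm
    hg.restrict (by fun_prop)).trans ?_
  simp only [h_rpow, lintegral_lt_abs_sub_rpow_neg_two hR]
  have h_le_one := ENNReal.rpow_le_one
    ((setLIntegral_le_lintegral {s | R < |t - s|} _).trans hg_one)
    (one_div_nonneg.2 hp.symm.nonneg)
  refine (mul_le_of_le_one_left zero_le h_le_one).trans_eq ?_
  rw [ENNReal.ofReal_rpow_of_nonneg (by positivity) (by positivity),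
    Real.mul_rpow zero_le_two (by positivity), Real.rpow_neg hR.le, Real.inv_rpow hR.le]

theorem setLIntegral_near_mul_abs_sub_rpow_neg_le {b : ℝ} (hb : b < 1) (hg : Measurable g)
    (A : ℝ≥0) {R : ℝ} (hR : 0 ≤ R) (t : ℝ) :
    ∫⁻ s in {s | g s ≤ A} ∩ {s | |t - s| ≤ R}, g s * ENNReal.ofReal (|t - s| ^ (-b)) ≤
      ENNReal.ofReal (A * (2 / (1 - b) * R ^ (1 - b))) := by
  rw [ENNReal.ofReal_mul A.coe_nonneg, ENNReal.ofReal_coe_nnreal,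
    ← lintegral_abs_sub_le_rpow_neg hb hR t, ← lintegral_const_mul' _ _ ENNReal.coe_ne_top]
  refine (setLIntegral_mono' (?_ : MeasurableSet _) fun s hs => ?_).trans
    (lintegral_mono_set inter_subset_right)
  · exact (measurableSet_le hg measurable_const).inter
      (measurableSet_le (by fun_prop) measurable_const)
  · exact mul_le_mul_left hs.1 _

/-- Below the level `A`, bound `g` by `A` within distance `A ^ (-p)` of `t` and use Hölder's
inequality beyond. -/
theorem setLIntegral_le_mul_abs_sub_rpow_neg_le (hq : 2 < q) (hp : q.HolderConjugate p)
    (hg : Measurable g) (hg_one : ∫⁻ s, g s ^ p ≤ 1) (A : ℝ≥0∞) (t : ℝ) :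
    ∫⁻ s in {s | g s ≤ A}, g s * ENNReal.ofReal (|t - s| ^ (-(2 / q))) ≤
      ENNReal.ofReal (fractionalIntegrationConst q) * A ^ (p - 1) := by
  have hb : 2 / q < 1 := (div_lt_one (by linarith)).2 hq
  have h_const := fractionalIntegrationConst_pos hq
  induction A using ENNReal.recTopCoe with
  | top => simp [ENNReal.top_rpow_of_pos hp.symm.sub_one_pos, h_const]
  | coe a =>
    rcases eq_zero_or_pos a with rfl | ha
    · have h_set : MeasurableSet {s | g s = 0} := measurableSet_eq_fun hg measurable_const
      have h_zero : ∀ s ∈ {s | g s = 0}, g s * ENNReal.ofReal (|t - s| ^ (-(2 / q))) = 0 :=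
        fun s hs => by rw [hs.out, zero_mul]
      simp [setLIntegral_congr_fun h_set h_zero]
    have ha' : (0 : ℝ) < a := ha
    let R : ℝ := a ^ (-p)
    have hR : 0 < R := Real.rpow_pos_of_pos ha' _
    have h_near := setLIntegral_near_mul_abs_sub_rpow_neg_le hb hg a hR.le t
    have h_far := lintegral_far_mul_abs_sub_rpow_neg_le (by linarith) hp hg.aemeasurable hg_one hR t
    refine (lintegral_mono_set fun s hs => ?_).trans ((lintegral_union_le _ _ _).trans
      ((add_le_add h_near h_far).trans_eq ?_))
    · exact (le_or_gt |t - s| R).imp (⟨hs, ·⟩) id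
    have h_exponent_far : -p * -(1 / q) = p - 1 := by
      rw [neg_mul_neg, mul_one_div, hp.symm.div_conj_eq_sub_one]
    have h_exponent_near : 1 + -p * (1 - 2 / q) = p - 1 := by
      linear_combination 2 * h_exponent_far
    have h_pow_near : a * R ^ (1 - 2 / q) = (a : ℝ) ^ (p - 1) := by
      rw [← Real.rpow_mul ha'.le, ← Real.rpow_one_add' ha'.le
        (h_exponent_near.trans_ne hp.symm.sub_one_ne_zero), h_exponent_near]
    have h_pow_far : R ^ (-(1 / q)) = (a : ℝ) ^ (p - 1) := by
      rw [← Real.rpow_mul ha'.le, h_exponent_far]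
    rw [← ENNReal.ofReal_coe_nnreal, ENNReal.ofReal_rpow_of_pos ha',
      ← ENNReal.ofReal_add (by have := sub_pos.2 hb; positivity) (by positivity),
      ← ENNReal.ofReal_mul h_const.le, mul_left_comm, h_pow_near, h_pow_far, ← add_mul,
      fractionalIntegrationConst]

theorem lintegral_mul_abs_sub_rpow_neg_le_of_le (hq : 2 < q) (hp : q.HolderConjugate p)
    (hf : Measurable f) (hg : Measurable g) (hf_one : ∫⁻ s, f s ^ p ≤ 1)
    (hg_one : ∫⁻ s, g s ^ p ≤ 1) :
    ∫⁻ t, ∫⁻ s in {s | g s ≤ f t}, f t * g s * ENNReal.ofReal (|t - s| ^ (-(2 / q))) ≤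
      ENNReal.ofReal (fractionalIntegrationConst q) := by
  calc ∫⁻ t, ∫⁻ s in {s | g s ≤ f t}, f t * g s * ENNReal.ofReal (|t - s| ^ (-(2 / q)))
      ≤ ∫⁻ t, ENNReal.ofReal (fractionalIntegrationConst q) * f t ^ p := by
        refine lintegral_mono fun t => ?_
        simp only [mul_assoc]
        rw [lintegral_const_mul _ (by fun_prop)]
        refine (mul_le_mul_right
          (setLIntegral_le_mul_abs_sub_rpow_neg_le hq hp hg hg_one (f t) t) _).trans_eq ?_
        rw [mul_left_comm, ← add_sub_cancel 1 p, ENNReal.rpow_add_of_nonneg _ _ zero_le_one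
          hp.symm.sub_one_pos.le, ENNReal.rpow_one, add_sub_cancel]
    _ ≤ ENNReal.ofReal (fractionalIntegrationConst q) := by
        rw [lintegral_const_mul _ (hf.pow_const p)]
        exact mul_le_of_le_one_right zero_le hf_one

theorem lintegral_lintegral_mul_abs_sub_rpow_neg_le_of_le_one (hq : 2 < q)
    (hp : q.HolderConjugate p) (hf : Measurable f) (hg : Measurable g)
    (hf_one : ∫⁻ s, f s ^ p ≤ 1) (hg_one : ∫⁻ s, g s ^ p ≤ 1) :
    ∫⁻ t, ∫⁻ s, f t * g s * ENNReal.ofReal (|t - s| ^ (-(2 / q))) ≤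
      2 * ENNReal.ofReal (fractionalIntegrationConst q) := by
  let K (u v : ℝ → ℝ≥0∞) (t s : ℝ) : ℝ≥0∞ :=
    {s | v s ≤ u t}.indicator (fun s => u t * v s * ENNReal.ofReal (|t - s| ^ (-(2 / q)))) s
  have h_set {u v : ℝ → ℝ≥0∞} (hu : Measurable u) (hv : Measurable v) :
      MeasurableSet {z : ℝ × ℝ | v z.2 ≤ u z.1} := measurableSet_le (by fun_prop) (by fun_prop)
  have hK {u v : ℝ → ℝ≥0∞} (hu : Measurable u) (hv : Measurable v) :
      Measurable (Function.uncurry (K u v)) :=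
    .ite (h_set hu hv) (by fun_prop) measurable_const
  have hK_le {u v : ℝ → ℝ≥0∞} (hu : Measurable u) (hv : Measurable v)
      (hu_one : ∫⁻ s, u s ^ p ≤ 1) (hv_one : ∫⁻ s, v s ^ p ≤ 1) :
      ∫⁻ t, ∫⁻ s, K u v t s ≤ ENNReal.ofReal (fractionalIntegrationConst q) := by
    refine (lintegral_congr fun t => ?_).trans_le
      (lintegral_mul_abs_sub_rpow_neg_le_of_le hq hp hu hv hu_one hv_one)
    exact lintegral_indicator (measurableSet_le hv measurable_const) _
  calc ∫⁻ t, ∫⁻ s, f t * g s * ENNReal.ofReal (|t - s| ^ (-(2 / q)))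
      ≤ ∫⁻ t, ∫⁻ s, (K f g t s + K g f s t) := by
        refine lintegral_mono fun t => lintegral_mono fun s => ?_
        rcases le_total (g s) (f t) with h | h
        · simp [K, h]
        · simp [K, h, abs_sub_comm s t, mul_comm (g s)]
    _ = (∫⁻ t, ∫⁻ s, K f g t s) + ∫⁻ s, ∫⁻ t, K g f s t := by
        simp_rw [lintegral_add_left (hK hf hg).of_uncurry_left]
        rw [lintegral_add_left (hK hf hg).lintegral_prod_right,
          lintegral_lintegral_swap (hK hg hf).aemeasurable]
    _ ≤ 2 * ENNReal.ofReal (fractionalIntegrationConst q) := by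
        rw [two_mul]
        exact add_le_add (hK_le hf hg hf_one hg_one) (hK_le hg hf hg_one hf_one)

theorem lintegral_lintegral_mul_abs_sub_rpow_neg_le_of_ne (hq : 2 < q)
    (hp : q.HolderConjugate p) (hf : Measurable f) (hg : Measurable g)
    (hf_zero : ∫⁻ t, f t ^ p ≠ 0) (hf_top : ∫⁻ t, f t ^ p ≠ ∞)
    (hg_zero : ∫⁻ s, g s ^ p ≠ 0) (hg_top : ∫⁻ s, g s ^ p ≠ ∞) :
    ∫⁻ t, ∫⁻ s, f t * g s * ENNReal.ofReal (|t - s| ^ (-(2 / q))) ≤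
      2 * ENNReal.ofReal (fractionalIntegrationConst q) *
        ((∫⁻ t, f t ^ p) ^ (1 / p) * (∫⁻ s, g s ^ p) ^ (1 / p)) := by
  have hp0 : 0 ≤ 1 / p := one_div_nonneg.2 hp.symm.nonneg
  let f₁ := ENNReal.funMulInvSnorm f p volume
  let g₁ := ENNReal.funMulInvSnorm g p volume
  have h_scale (t s : ℝ) : f t * g s * ENNReal.ofReal (|t - s| ^ (-(2 / q))) =
      (∫⁻ t, f t ^ p) ^ (1 / p) * (∫⁻ s, g s ^ p) ^ (1 / p) *
        (f₁ t * g₁ s * ENNReal.ofReal (|t - s| ^ (-(2 / q)))) := by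
    rw [ENNReal.fun_eq_funMulInvSnorm_mul_eLpNorm f hf_zero hf_top (a := t),
      ENNReal.fun_eq_funMulInvSnorm_mul_eLpNorm g hg_zero hg_top (a := s)]
    ring
  have h_ne_top : (∫⁻ t, f t ^ p) ^ (1 / p) * (∫⁻ s, g s ^ p) ^ (1 / p) ≠ ∞ :=
    ENNReal.mul_ne_top (ENNReal.rpow_ne_top_of_nonneg hp0 hf_top)
      (ENNReal.rpow_ne_top_of_nonneg hp0 hg_top)
  simp_rw [h_scale, lintegral_const_mul' _ _ h_ne_top]
  rw [mul_comm]
  gcongr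
  exact lintegral_lintegral_mul_abs_sub_rpow_neg_le_of_le_one hq hp (hf.mul_const _)
    (hg.mul_const _)
    (ENNReal.lintegral_rpow_funMulInvSnorm_eq_one hp.symm.pos hf_zero hf_top).le
    (ENNReal.lintegral_rpow_funMulInvSnorm_eq_one hp.symm.pos hg_zero hg_top).le

theorem lintegral_lintegral_mul_abs_sub_rpow_neg_le (hq : 2 < q)
    (hp : q.HolderConjugate p) (hf : Measurable f) (hg : Measurable g) :
    ∫⁻ t, ∫⁻ s, f t * g s * ENNReal.ofReal (|t - s| ^ (-(2 / q))) ≤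
      2 * ENNReal.ofReal (fractionalIntegrationConst q) *
        ((∫⁻ t, f t ^ p) ^ (1 / p) * (∫⁻ s, g s ^ p) ^ (1 / p)) := by
  have h_const : 2 * ENNReal.ofReal (fractionalIntegrationConst q) ≠ 0 := by
    simpa using fractionalIntegrationConst_pos hq
  have hp0 : 0 < 1 / p := one_div_pos.2 hp.symm.pos
  have h_ae_zero {u : ℝ → ℝ≥0∞} (hu : Measurable u) (h : ∫⁻ t, u t ^ p = 0) : u =ᵐ[volume] 0 :=
    ((lintegral_eq_zero_iff (hu.pow_const p)).1 h).mono fun t ht =>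
      (ENNReal.rpow_eq_zero_iff_of_pos hp.symm.pos).1 ht
  by_cases hf_zero : ∫⁻ t, f t ^ p = 0
  · have h_zero : ∀ᵐ t, ∫⁻ s, f t * g s * ENNReal.ofReal (|t - s| ^ (-(2 / q))) = 0 :=
      (h_ae_zero hf hf_zero).mono fun t ht => by simp [ht]
    simp [lintegral_congr_ae h_zero]
  by_cases hg_zero : ∫⁻ s, g s ^ p = 0
  · have h_zero (t : ℝ) : ∀ᵐ s, f t * g s * ENNReal.ofReal (|t - s| ^ (-(2 / q))) = 0 :=
      (h_ae_zero hg hg_zero).mono fun s hs => by simp [hs]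
    simp [fun t => lintegral_congr_ae (h_zero t)]
  have h_pow_ne_zero {u : ℝ → ℝ≥0∞} (h : ∫⁻ t, u t ^ p ≠ 0) : (∫⁻ t, u t ^ p) ^ (1 / p) ≠ 0 :=
    fun h' => h ((ENNReal.rpow_eq_zero_iff_of_pos hp0).1 h')
  by_cases hf_top : ∫⁻ t, f t ^ p = ∞
  · rw [hf_top, ENNReal.top_rpow_of_pos hp0, ENNReal.top_mul (h_pow_ne_zero hg_zero),
      ENNReal.mul_top h_const]
    exact le_top
  by_cases hg_top : ∫⁻ s, g s ^ p = ∞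
  · rw [hg_top, ENNReal.top_rpow_of_pos hp0, ENNReal.mul_top (h_pow_ne_zero hf_zero),
      ENNReal.mul_top h_const]
    exact le_top
  exact lintegral_lintegral_mul_abs_sub_rpow_neg_le_of_ne hq hp hf hg hf_zero hf_top hg_zero hg_top

end FractionalIntegration

section MixedNorm

theorem mul_rpow_sub_one {x : ℝ≥0∞} {r : ℝ} (hr : 1 ≤ r) : x * x ^ (r - 1) = x ^ r := by
  nth_rw 1 [← ENNReal.rpow_one x]
  rw [← ENNReal.rpow_add_of_nonneg _ _ zero_le_one (by linarith), add_sub_cancel]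

theorem exists_forall_rpow_le {b c : ℝ≥0∞} (hb : b ≠ 0) (hc : c ≠ ∞) (e : ℝ) :
    ∃ K : ℝ≥0, ∀ x, b ≤ x → x ≤ c → x ^ e ≤ K := by
  rcases le_total 0 e with he | he
  · lift c to ℝ≥0 using hc
    exact ⟨c ^ e, fun x _ hx => by
      rw [ENNReal.coe_rpow_of_nonneg _ he]
      exact ENNReal.rpow_le_rpow hx he⟩
  · have h_ne_top : (b⁻¹) ^ (-e) ≠ ∞ :=
      ENNReal.rpow_ne_top_of_nonneg (by linarith) (ENNReal.inv_ne_top.2 hb)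
    refine ⟨((b⁻¹) ^ (-e)).toNNReal, fun x hx _ => ?_⟩
    rw [ENNReal.coe_toNNReal h_ne_top, ← inv_inv (x ^ e), ← ENNReal.rpow_neg, ← ENNReal.inv_rpow]
    exact ENNReal.rpow_le_rpow (ENNReal.inv_le_inv.2 hx) (by linarith)

variable {T X ε : Type*} [MeasurableSpace T] [MeasurableSpace X] [ENorm ε]

/-- The mixed norm `L^q_τ L^r_μ` of `u : T → X → ε`, with values in `ℝ≥0∞` so that no
integrability has to be carried around. -/
noncomputable def mixedELpNorm (q r : ℝ) (u : T → X → ε) (τ : Measure T) (μ : Measure X) : ℝ≥0∞ :=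
  eLpNorm' (fun t => eLpNorm' (u t) r μ) q τ

theorem mixedELpNorm_eq_lintegral (q r : ℝ) (u : T → X → ε) (τ : Measure T) (μ : Measure X) :
    mixedELpNorm q r u τ μ = (∫⁻ t, (∫⁻ x, ‖u t x‖ₑ ^ r ∂μ) ^ (q / r) ∂τ) ^ (1 / q) := by
  simp only [mixedELpNorm, eLpNorm', enorm_eq_self, ← ENNReal.rpow_mul, one_div_mul_eq_div]

/-- The time slice of the test function on which `L^{q'} L^{r'}` duality recovers the `L^q L^r`
norm of a function with time slice `f`. -/
noncomputable def mixedExtremizer (q r : ℝ) (μ : Measure X) (f : X → ℝ≥0∞) (x : X) : ℝ≥0∞ :=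
  f x ^ (r - 1) * (∫⁻ x, f x ^ r ∂μ) ^ (q / r - 1)

section Extremizer

variable {μ : Measure X} {q q' r r' : ℝ} {f : X → ℝ≥0∞}

theorem lintegral_mul_mixedExtremizer (hq : 0 < q) (hr : 1 < r) (hf : Measurable f)
    (h_top : ∫⁻ x, f x ^ r ∂μ ≠ ∞) :
    ∫⁻ x, f x * mixedExtremizer q r μ f x ∂μ = (∫⁻ x, f x ^ r ∂μ) ^ (q / r) := by
  simp only [mixedExtremizer, ← mul_assoc, mul_rpow_sub_one hr.le]
  rw [lintegral_mul_const _ (hf.pow_const r)]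
  rcases eq_or_ne (∫⁻ x, f x ^ r ∂μ) 0 with h_zero | h_ne
  · rw [h_zero, zero_mul, ENNReal.zero_rpow_of_pos (by positivity)]
  nth_rw 1 [← ENNReal.rpow_one (∫⁻ x, f x ^ r ∂μ)]
  rw [← ENNReal.rpow_add _ _ h_ne h_top, add_sub_cancel]

theorem lintegral_mixedExtremizer_rpow (hq : q.HolderConjugate q') (hr : r.HolderConjugate r')
    (hf : Measurable f) (h_top : ∫⁻ x, f x ^ r ∂μ ≠ ∞) :
    (∫⁻ x, mixedExtremizer q r μ f x ^ r' ∂μ) ^ (q' / r') = (∫⁻ x, f x ^ r ∂μ) ^ (q / r) := by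
  have hr'0 := hr.symm.pos
  simp only [mixedExtremizer, ENNReal.mul_rpow_of_nonneg _ _ hr.symm.nonneg, ← ENNReal.rpow_mul,
    hr.sub_one_mul_conj]
  rw [lintegral_mul_const _ (hf.pow_const r)]
  rcases eq_or_ne (∫⁻ x, f x ^ r ∂μ) 0 with h_zero | h_ne
  · rw [h_zero, zero_mul, ENNReal.zero_rpow_of_pos (div_pos hq.symm.pos hr'0),
      ENNReal.zero_rpow_of_pos (div_pos hq.pos hr.pos)]
  nth_rw 1 [← ENNReal.rpow_one (∫⁻ x, f x ^ r ∂μ)]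
  rw [← ENNReal.rpow_add _ _ h_ne h_top, ← ENNReal.rpow_mul]
  congr 1
  calc (1 + (q / r - 1) * r') * (q' / r') = (r'⁻¹ + (q / r - 1)) * q' := by field_simp
    _ = (q - 1) * q' * r⁻¹ := by
        rw [eq_sub_of_add_eq' hr.inv_add_inv_eq_one]
        ring
    _ = q / r := by rw [hq.sub_one_mul_conj, div_eq_mul_inv]

theorem lintegral_rpow_le_mul_measure (hr : 0 < r) {M : ℝ≥0∞} (hfM : ∀ x, f x ≤ M) {B : Set X}
    (hfB : ∀ x, f x ≠ 0 → x ∈ B) : ∫⁻ x, f x ^ r ∂μ ≤ M ^ r * μ B := by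
  rw [← setLIntegral_eq_of_support_subset (s := B) fun x hx => hfB x fun h => hx (by simp [h, hr])]
  exact (lintegral_mono fun x => ENNReal.rpow_le_rpow (hfM x) hr.le).trans_eq (by simp)

theorem exists_forall_mixedExtremizer_le (q : ℝ) (hr : 1 < r) (M : ℝ≥0) {b : ℝ≥0∞} (hb : b ≠ 0)
    {B : Set X} (hB : μ B ≠ ∞) :
    ∃ K : ℝ≥0, ∀ f : X → ℝ≥0∞, (∀ x, f x ≤ M) → (∀ x, f x ≠ 0 → x ∈ B) →
      (∀ x, f x ≠ 0 → b ≤ ∫⁻ x, f x ^ r ∂μ) → ∀ x, mixedExtremizer q r μ f x ≤ K := by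
  obtain ⟨K, hK⟩ := exists_forall_rpow_le hb
    (ENNReal.mul_ne_top (ENNReal.rpow_ne_top_of_nonneg (show 0 ≤ r by linarith)
      (ENNReal.coe_ne_top (r := M))) hB) (q / r - 1)
  refine ⟨M ^ (r - 1) * K, fun f hfM hfB hfb x => ?_⟩
  rcases eq_or_ne (f x) 0 with h_zero | h_ne
  · simp [mixedExtremizer, h_zero, ENNReal.zero_rpow_of_pos (sub_pos.2 hr)]
  rw [ENNReal.coe_mul, ENNReal.coe_rpow_of_nonneg _ (by linarith)]
  exact mul_le_mul' (ENNReal.rpow_le_rpow (hfM x) (by linarith))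
    (hK _ (hfb x h_ne) (lintegral_rpow_le_mul_measure (by linarith) hfM hfB))

end Extremizer

variable {τ : Measure T} {μ : Measure X} {q q' r r' : ℝ} {J : T → X → ℝ≥0∞} {C : ℝ≥0∞}

theorem rpow_one_div_le_of_le_mul_rpow (hq : q.HolderConjugate q') {S : ℝ≥0∞} (hS : S ≠ ∞)
    (h : S ≤ C * S ^ (1 / q')) : S ^ (1 / q) ≤ C := by
  rcases eq_or_ne S 0 with rfl | h_ne
  · simp [hq.pos]
  have h_ne' : S ^ (1 / q') ≠ 0 := by simp [h_ne, hS]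
  have h_split : S = S ^ (1 / q) * S ^ (1 / q') := by
    rw [← ENNReal.rpow_add _ _ h_ne hS, one_div, one_div, hq.inv_add_inv_eq_one, ENNReal.rpow_one]
  refine (ENNReal.mul_le_mul_iff_left h_ne' ?_).1 (h_split.symm.trans_le h)
  exact ENNReal.rpow_ne_top_of_nonneg (one_div_nonneg.2 hq.symm.nonneg) hS

theorem mixedELpNorm_le_of_lintegral_mul_mixedExtremizer_le (hq : q.HolderConjugate q')
    (hr : r.HolderConjugate r') (hJ : Measurable (Function.uncurry J))
    (hJ_top : ∀ t, ∫⁻ x, J t x ^ r ∂μ ≠ ∞) (hS : ∫⁻ t, (∫⁻ x, J t x ^ r ∂μ) ^ (q / r) ∂τ ≠ ∞)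
    (h_test : ∫⁻ t, ∫⁻ x, J t x * mixedExtremizer q r μ (J t) x ∂μ ∂τ ≤
      C * mixedELpNorm q' r' (fun t => mixedExtremizer q r μ (J t)) τ μ) :
    mixedELpNorm q r J τ μ ≤ C := by
  rw [mixedELpNorm_eq_lintegral]
  simp only [mixedELpNorm_eq_lintegral, enorm_eq_self,
    fun t => lintegral_mul_mixedExtremizer hq.pos hr.lt hJ.of_uncurry_left (hJ_top t),
    fun t => lintegral_mixedExtremizer_rpow hq hr hJ.of_uncurry_left (hJ_top t)] at h_test ⊢
  exact rpow_one_div_le_of_le_mul_rpow hq hS h_test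

/-- The functions against which mixed norms are tested: bounded, with time support in `A` and space
support of finite measure. -/
structure IsTestFunction (A : Set T) (μ : Measure X) (h : T → X → ℝ≥0∞) : Prop where
  measurable : Measurable (Function.uncurry h)
  exists_bound : ∃ K : ℝ≥0, ∀ t x, h t x ≤ K
  mem_of_ne_zero : ∀ t x, h t x ≠ 0 → t ∈ A
  exists_space_support : ∃ B, μ B ≠ ∞ ∧ ∀ t x, h t x ≠ 0 → x ∈ B

variable {A : Set T} {h : T → X → ℝ≥0∞}

theorem IsTestFunction.exists_lintegral_rpow_le (hh : IsTestFunction A μ h) (hr : 0 < r) :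
    ∃ K : ℝ≥0, ∀ t, ∫⁻ x, h t x ^ r ∂μ ≤ K := by
  obtain ⟨K, hK⟩ := hh.exists_bound
  obtain ⟨B, hB, h_supp⟩ := hh.exists_space_support
  refine ⟨(K ^ r * μ B).toNNReal, fun t => ?_⟩
  rw [ENNReal.coe_toNNReal (ENNReal.mul_ne_top
    (ENNReal.rpow_ne_top_of_nonneg hr.le ENNReal.coe_ne_top) hB)]
  exact lintegral_rpow_le_mul_measure hr (hK t) (h_supp t)

theorem IsTestFunction.lintegral_lintegral_rpow_ne_top (hh : IsTestFunction A μ h) (hA : τ A ≠ ∞)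
    (hq : 0 < q) (hr : 0 < r) : ∫⁻ t, (∫⁻ x, h t x ^ r ∂μ) ^ (q / r) ∂τ ≠ ∞ := by
  obtain ⟨K, hK⟩ := hh.exists_lintegral_rpow_le hr
  refine ne_top_of_le_ne_top ?_ (lintegral_rpow_le_mul_measure (div_pos hq hr) hK
    (B := A) fun t ht => ?_)
  · exact ENNReal.mul_ne_top
      (ENNReal.rpow_ne_top_of_nonneg (div_pos hq hr).le ENNReal.coe_ne_top) hA
  · by_contra ht'
    exact ht (by simp [fun x => not_imp_comm.1 (hh.mem_of_ne_zero t x) ht', hr])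

theorem IsTestFunction.mixedExtremizer [SFinite μ] (hh : IsTestFunction A μ h) (q : ℝ) (hr : 1 < r)
    {b : ℝ≥0∞} (hb : b ≠ 0) (h_lower : ∀ t x, h t x ≠ 0 → b ≤ ∫⁻ x, h t x ^ r ∂μ) :
    IsTestFunction A μ fun t => mixedExtremizer q r μ (h t) := by
  obtain ⟨M, hM⟩ := hh.exists_bound
  obtain ⟨B, hB, h_supp⟩ := hh.exists_space_support
  obtain ⟨K, hK⟩ := exists_forall_mixedExtremizer_le q hr M hb hB
  have h_ne_zero (t : T) (x : X) (hx : _root_.mixedExtremizer q r μ (h t) x ≠ 0) : h t x ≠ 0 :=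
    fun h' => hx (by simp [_root_.mixedExtremizer, h', ENNReal.zero_rpow_of_pos (sub_pos.2 hr)])
  refine ⟨?_, ⟨K, fun t => hK (h t) (hM t) (h_supp t) (h_lower t)⟩,
    fun t x hx => hh.mem_of_ne_zero t x (h_ne_zero t x hx),
    B, hB, fun t x hx => h_supp t x (h_ne_zero t x hx)⟩
  have h_meas := hh.measurable.pow_const r
  exact (hh.measurable.pow_const (r - 1)).mul
    ((h_meas.lintegral_prod_right'.comp measurable_fst).pow_const (q / r - 1))

theorem IsTestFunction.mixedELpNorm_le [SFinite μ] (hq : q.HolderConjugate q')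
    (hr : r.HolderConjugate r') (hh : IsTestFunction A μ h) (hA : τ A ≠ ∞) {b : ℝ≥0∞} (hb : b ≠ 0)
    (h_lower : ∀ t x, h t x ≠ 0 → b ≤ ∫⁻ x, h t x ^ r ∂μ) (h_le : ∀ t x, h t x ≤ J t x)
    (h_test : ∀ g, IsTestFunction A μ g →
      ∫⁻ t, ∫⁻ x, J t x * g t x ∂μ ∂τ ≤ C * mixedELpNorm q' r' g τ μ) :
    mixedELpNorm q r h τ μ ≤ C := by
  obtain ⟨K, hK⟩ := hh.exists_lintegral_rpow_le hr.pos
  refine mixedELpNorm_le_of_lintegral_mul_mixedExtremizer_le hq hr hh.measurable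
    (fun t => ne_top_of_le_ne_top ENNReal.coe_ne_top (hK t))
    (hh.lintegral_lintegral_rpow_ne_top hA hq.pos hr.pos) ?_
  refine (lintegral_mono fun t => lintegral_mono fun x => ?_).trans
    (h_test _ (hh.mixedExtremizer q hr.lt hb h_lower))
  gcongr
  exact h_le t x

end MixedNorm

section Truncation

variable {T X : Type*} [MeasurableSpace X]

/-- `J` cut off at height `n` and to `A n × spanningSets μ n`. -/
noncomputable def blockTruncation (A : ℕ → Set T) (μ : Measure X) [SigmaFinite μ]
    (J : T → X → ℝ≥0∞) (n : ℕ) (t : T) (x : X) : ℝ≥0∞ :=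
  (A n ×ˢ spanningSets μ n).indicator (fun p => min (J p.1 p.2) n) (t, x)

/-- The block truncation of `J`, dropped at the times where its slice is too small for the
extremizer to be bounded. -/
noncomputable def testTruncation (r : ℝ) (A : ℕ → Set T) (μ : Measure X) [SigmaFinite μ]
    (J : T → X → ℝ≥0∞) (n : ℕ) (t : T) (x : X) : ℝ≥0∞ :=
  {t | ((n : ℝ≥0∞) + 1)⁻¹ ≤ ∫⁻ x, blockTruncation A μ J n t x ^ r ∂μ}.indicator
    (fun t => blockTruncation A μ J n t x) t

variable {μ : Measure X} [SigmaFinite μ] {q q' r r' : ℝ} {J : T → X → ℝ≥0∞} {A : ℕ → Set T}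

theorem blockTruncation_mono (hA : Monotone A) (t : T) (x : X) :
    Monotone fun n => blockTruncation A μ J n t x := fun m n hmn => by
  refine (indicator_le_indicator ?_).trans (indicator_le_indicator_of_subset
    (prod_mono (hA hmn) (monotone_spanningSets μ hmn)) (fun _ => zero_le) _)
  gcongr

theorem tendsto_blockTruncation (hA : Monotone A) (hA_cover : ∀ t, ∃ n, t ∈ A n) (t : T) (x : X) :
    Tendsto (fun n => blockTruncation A μ J n t x) atTop (𝓝 (J t x)) := by
  obtain ⟨m, hm⟩ := hA_cover t
  have h_lim : Tendsto (fun n : ℕ => min (J t x) n) atTop (𝓝 (J t x)) := by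
    simpa using tendsto_const_nhds.min ENNReal.tendsto_nat_nhds_top
  refine h_lim.congr' ?_
  filter_upwards [eventually_ge_atTop (max m (spanningSetsIndex μ x))] with n hn
  have h_mem : (t, x) ∈ A n ×ˢ spanningSets μ n := ⟨hA (le_of_max_le_left hn) hm,
    monotone_spanningSets μ (le_of_max_le_right hn) (mem_spanningSetsIndex μ x)⟩
  exact Eq.symm (indicator_of_mem h_mem _)

theorem blockTruncation_le (n : ℕ) (t : T) (x : X) :
    blockTruncation A μ J n t x ≤ min (J t x) n :=
  indicator_apply_le' (fun _ => le_rfl) fun _ => zero_le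

theorem testTruncation_le_blockTruncation (r : ℝ) (n : ℕ) (t : T) (x : X) :
    testTruncation r A μ J n t x ≤ blockTruncation A μ J n t x :=
  indicator_apply_le' (fun _ => le_rfl) fun _ => zero_le

theorem testTruncation_le (r : ℝ) (n : ℕ) (t : T) (x : X) :
    testTruncation r A μ J n t x ≤ min (J t x) n :=
  (testTruncation_le_blockTruncation r n t x).trans (blockTruncation_le n t x)

theorem lintegral_testTruncation_rpow (hr : 0 < r) (n : ℕ) (t : T) :
    ∫⁻ x, testTruncation r A μ J n t x ^ r ∂μ =
      {t | ((n : ℝ≥0∞) + 1)⁻¹ ≤ ∫⁻ x, blockTruncation A μ J n t x ^ r ∂μ}.indicator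
        (fun t => ∫⁻ x, blockTruncation A μ J n t x ^ r ∂μ) t := by
  by_cases ht : ((n : ℝ≥0∞) + 1)⁻¹ ≤ ∫⁻ x, blockTruncation A μ J n t x ^ r ∂μ <;>
    simp [testTruncation, indicator, ht, hr]

theorem inv_le_lintegral_testTruncation_rpow (hr : 0 < r) {n : ℕ} {t : T} {x : X}
    (h : testTruncation r A μ J n t x ≠ 0) :
    ((n : ℝ≥0∞) + 1)⁻¹ ≤ ∫⁻ x, testTruncation r A μ J n t x ^ r ∂μ := by
  have h_mem : t ∈ {t | ((n : ℝ≥0∞) + 1)⁻¹ ≤ ∫⁻ x, blockTruncation A μ J n t x ^ r ∂μ} :=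
    mem_of_indicator_ne_zero h
  rwa [lintegral_testTruncation_rpow hr, indicator_of_mem h_mem]

variable [MeasurableSpace T] {τ : Measure T} {C : ℝ≥0∞}

theorem measurable_blockTruncation (hA : ∀ n, MeasurableSet (A n))
    (hJ : Measurable (Function.uncurry J)) (n : ℕ) :
    Measurable (Function.uncurry (blockTruncation A μ J n)) :=
  (hJ.min measurable_const).indicator ((hA n).prod (measurableSet_spanningSets μ n))

theorem tendsto_lintegral_blockTruncation_rpow (hr : 0 ≤ r) (hA : ∀ n, MeasurableSet (A n))
    (hA_mono : Monotone A) (hA_cover : ∀ t, ∃ n, t ∈ A n) (hJ : Measurable (Function.uncurry J))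
    (t : T) : Tendsto (fun n => ∫⁻ x, blockTruncation A μ J n t x ^ r ∂μ) atTop
      (𝓝 (∫⁻ x, J t x ^ r ∂μ)) :=
  lintegral_tendsto_of_tendsto_of_monotone
    (fun n => ((measurable_blockTruncation hA hJ n).of_uncurry_left.pow_const r).aemeasurable)
    (ae_of_all _ fun x _ _ h => ENNReal.rpow_le_rpow (blockTruncation_mono hA_mono t x h) hr)
    (ae_of_all _ fun x => (tendsto_blockTruncation hA_mono hA_cover t x).ennrpow_const r)

theorem tendsto_lintegral_testTruncation_rpow (hr : 0 < r) (hA : ∀ n, MeasurableSet (A n))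
    (hA_mono : Monotone A) (hA_cover : ∀ t, ∃ n, t ∈ A n) (hJ : Measurable (Function.uncurry J))
    (t : T) : Tendsto (fun n => ∫⁻ x, testTruncation r A μ J n t x ^ r ∂μ) atTop
      (𝓝 (∫⁻ x, J t x ^ r ∂μ)) := by
  have h_lim := tendsto_lintegral_blockTruncation_rpow (μ := μ) hr.le hA hA_mono hA_cover hJ t
  simp only [lintegral_testTruncation_rpow hr]
  rcases eq_or_ne (∫⁻ x, J t x ^ r ∂μ) 0 with h_zero | h_ne
  · rw [h_zero] at h_lim ⊢
    exact tendsto_of_tendsto_of_tendsto_of_le_of_le tendsto_const_nhds h_lim (fun _ => zero_le)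
      fun n => indicator_apply_le' (fun _ => le_rfl) fun _ => zero_le
  have h_inv : Tendsto (fun n : ℕ => ((n : ℝ≥0∞) + 1)⁻¹) atTop (𝓝 0) := by
    simpa using (tendsto_add_atTop_iff_nat 1).2 ENNReal.tendsto_inv_nat_nhds_zero
  refine h_lim.congr' ?_
  filter_upwards [h_inv.eventually_lt h_lim (pos_iff_ne_zero.2 h_ne)] with n hn
  rw [indicator_of_mem]
  exact hn.le

theorem isTestFunction_testTruncation (r : ℝ) (hA : ∀ n, MeasurableSet (A n))
    (hJ : Measurable (Function.uncurry J)) (n : ℕ) :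
    IsTestFunction (A n) μ (testTruncation r A μ J n) := by
  have h_meas := measurable_blockTruncation (μ := μ) hA hJ n
  have h_mem (t : T) (x : X) (h : testTruncation r A μ J n t x ≠ 0) :
      (t, x) ∈ A n ×ˢ spanningSets μ n :=
    mem_of_indicator_ne_zero (f := fun p : T × X => min (J p.1 p.2) (n : ℝ≥0∞)) fun h' => h
      (nonpos_iff_eq_zero.1 ((testTruncation_le_blockTruncation r n t x).trans_eq h'))
  refine ⟨?_, ⟨n, fun t x => (testTruncation_le r n t x).trans (min_le_right _ _)⟩,
    fun t x h => (h_mem t x h).1, spanningSets μ n, (measure_spanningSets_lt_top μ n).ne,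
    fun t x h => (h_mem t x h).2⟩
  exact h_meas.indicator (measurable_fst (measurableSet_le measurable_const
    ((h_meas.pow_const r).lintegral_prod_right' (ν := μ))))

theorem mixedELpNorm_le_of_forall_isTestFunction (hq : q.HolderConjugate q')
    (hr : r.HolderConjugate r') (hA : ∀ n, MeasurableSet (A n)) (hA_mono : Monotone A)
    (hA_cover : ∀ t, ∃ n, t ∈ A n) (hA_top : ∀ n, τ (A n) ≠ ∞)
    (hJ : Measurable (Function.uncurry J))
    (h_test : ∀ n g, IsTestFunction (A n) μ g →
      ∫⁻ t, ∫⁻ x, J t x * g t x ∂μ ∂τ ≤ C * mixedELpNorm q' r' g τ μ) :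
    mixedELpNorm q r J τ μ ≤ C := by
  have h_trunc (n : ℕ) :
      ∫⁻ t, (∫⁻ x, testTruncation r A μ J n t x ^ r ∂μ) ^ (q / r) ∂τ ≤ C ^ q := by
    rw [← ENNReal.rpow_le_rpow_iff (one_div_pos.2 hq.pos), ← ENNReal.rpow_mul,
      mul_one_div_cancel hq.ne_zero, ENNReal.rpow_one]
    have h := (isTestFunction_testTruncation r hA hJ n).mixedELpNorm_le hq hr (hA_top n)
      (ENNReal.inv_ne_zero.2 (by finiteness))
      (fun t x => inv_le_lintegral_testTruncation_rpow hr.pos)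
      (fun t x => (testTruncation_le r n t x).trans (min_le_left _ _)) (h_test n)
    simpa only [mixedELpNorm_eq_lintegral, enorm_eq_self] using h
  have h_meas (n : ℕ) :
      Measurable fun t => (∫⁻ x, testTruncation r A μ J n t x ^ r ∂μ) ^ (q / r) :=
    (((isTestFunction_testTruncation (μ := μ) r hA hJ n).measurable.pow_const
      r).lintegral_prod_right').pow_const _
  rw [mixedELpNorm_eq_lintegral, one_div, ENNReal.rpow_inv_le_iff hq.pos]
  calc ∫⁻ t, (∫⁻ x, ‖J t x‖ₑ ^ r ∂μ) ^ (q / r) ∂τ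
      = ∫⁻ t, liminf (fun n => (∫⁻ x, testTruncation r A μ J n t x ^ r ∂μ) ^ (q / r)) atTop ∂τ :=
        lintegral_congr fun t => ((tendsto_lintegral_testTruncation_rpow hr.pos hA hA_mono hA_cover
          hJ t).ennrpow_const _).liminf_eq.symm
    _ ≤ liminf (fun n => ∫⁻ t, (∫⁻ x, testTruncation r A μ J n t x ^ r ∂μ) ^ (q / r) ∂τ) atTop :=
        lintegral_liminf_le h_meas
    _ ≤ C ^ q := liminf_le_of_le (by isBoundedDefault) fun b hb => by
        obtain ⟨n, hn⟩ := hb.exists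
        exact hn.trans (h_trunc n)

end Truncation

section Schrodinger

/-- The Schrödinger kernel `S_a` with `a = 2ν + 1` (see `Skernel_eq_schrodingerKernel`), the Bessel
function being absorbed in the Hankel kernel. It vanishes at `t = 0`. -/
noncomputable def schrodingerKernel (ν t x y : ℝ) : ℂ :=
  2 * (Complex.I * (4 * t : ℝ)) ^ (-(ν + 1) : ℂ) *
    Complex.exp (((x ^ 2 + y ^ 2) / (4 * t) : ℝ) * Complex.I) * hankelKernel ν (1 / (4 * t)) x y

/-- The uniform bound of the Schrödinger kernel at time `t`. -/
noncomputable def schrodingerDecay (ν t : ℝ) : ℝ :=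
  2 * ‖besselClifford ν 0‖ * |4 * t| ^ (-(ν + 1))

variable {ν : ℝ}

theorem norm_I_mul_ofReal_cpow (s e : ℝ) :
    ‖(Complex.I * s) ^ (-(e + 1) : ℂ)‖ = |s| ^ (-(e + 1)) := by
  have h_exp : (-(e + 1) : ℂ) = ((-(e + 1) : ℝ) : ℂ) := by push_cast; rfl
  rw [h_exp, Complex.norm_cpow_real]
  simp

theorem schrodingerKernel_zero (hν : -1 < ν) (x y : ℝ) : schrodingerKernel ν 0 x y = 0 := by
  have h_exp : (-(ν + 1) : ℂ) ≠ 0 := by exact_mod_cast (by linarith : -(ν + 1) ≠ 0)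
  simp only [schrodingerKernel, mul_zero, Complex.ofReal_zero, Complex.zero_cpow h_exp, zero_mul]

theorem measurable_schrodingerKernel (ν : ℝ) {α : Type*} [MeasurableSpace α] {t x y : α → ℝ}
    (ht : Measurable t) (hx : Measurable x) (hy : Measurable y) :
    Measurable fun p => schrodingerKernel ν (t p) (x p) (y p) :=
  (Measurable.mul (by fun_prop) (by fun_prop)).mul
    (measurable_hankelKernel ν (ht.const_mul 4 |>.const_div 1) hx hy)

theorem schrodingerKernel_comm (ν t x y : ℝ) :
    schrodingerKernel ν t x y = schrodingerKernel ν t y x := by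
  rw [schrodingerKernel, schrodingerKernel, hankelKernel_comm, add_comm (x ^ 2)]

theorem conj_schrodingerKernel (ν t x y : ℝ) :
    conj (schrodingerKernel ν t x y) = schrodingerKernel ν (-t) x y := by
  have h_arg : (Complex.I * (4 * t : ℝ)).arg ≠ Real.pi := by
    intro h
    simpa using (Complex.arg_eq_pi_iff.1 h).1
  have h_phase : conj ((Complex.I * (4 * t : ℝ)) ^ (-(ν + 1) : ℂ)) =
      (Complex.I * (4 * -t : ℝ)) ^ (-(ν + 1) : ℂ) := by
    have h := Complex.conj_cpow _ (-(ν + 1) : ℂ) h_arg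
    rw [map_mul, Complex.conj_I, Complex.conj_ofReal, map_neg, map_add, Complex.conj_ofReal,
      map_one] at h
    rw [← h, mul_neg 4, Complex.ofReal_neg, neg_mul_comm]
  have h_exp : conj (Complex.exp (((x ^ 2 + y ^ 2) / (4 * t) : ℝ) * Complex.I)) =
      Complex.exp (((x ^ 2 + y ^ 2) / (4 * -t) : ℝ) * Complex.I) := by
    rw [← Complex.exp_conj, map_mul, Complex.conj_ofReal, Complex.conj_I, mul_neg 4, div_neg,
      Complex.ofReal_neg, mul_neg, neg_mul]
  rw [schrodingerKernel, schrodingerKernel, show 1 / (4 * -t) = -(1 / (4 * t)) by ring,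
    hankelKernel_neg]
  simp only [map_mul, conj_hankelKernel, h_phase, h_exp, Complex.conj_ofNat]

theorem norm_schrodingerKernel_le (hν : -1 / 2 ≤ ν) (t x y : ℝ) :
    ‖schrodingerKernel ν t x y‖ ≤ schrodingerDecay ν t := by
  rw [schrodingerKernel, schrodingerDecay, norm_mul, norm_mul, norm_mul, norm_I_mul_ofReal_cpow,
    Complex.norm_exp_ofReal_mul_I, mul_one, mul_right_comm, Complex.norm_two]
  gcongr
  exact norm_hankelKernel_le hν _ x y

theorem lintegral_enorm_integral_schrodingerKernel_sq_le (hν : -1 / 2 ≤ ν) (t : ℝ) {f : ℝ → ℂ}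
    (hf : Integrable f (powMeasure (2 * ν + 1))) :
    ∫⁻ x, ‖∫ y, schrodingerKernel ν t x y * f y ∂powMeasure (2 * ν + 1)‖ₑ ^ (2 : ℝ)
      ∂powMeasure (2 * ν + 1) ≤ ∫⁻ y, ‖f y‖ₑ ^ (2 : ℝ) ∂powMeasure (2 * ν + 1) := by
  rcases eq_or_ne t 0 with rfl | ht
  · simp [schrodingerKernel_zero (by linarith : -1 < ν)]
  let f' : ℝ → ℂ := fun y => Complex.exp ((y ^ 2 / (4 * t) : ℝ) * Complex.I) * f y
  have h_enorm (y : ℝ) : ‖f' y‖ₑ = ‖f y‖ₑ := by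
    rw [enorm_mul, ← ofReal_norm, Complex.norm_exp_ofReal_mul_I, ENNReal.ofReal_one, one_mul]
  have hf' : Integrable f' (powMeasure (2 * ν + 1)) :=
    hf.bdd_mul (c := 1) (by fun_prop) (ae_of_all _ fun y => (Complex.norm_exp_ofReal_mul_I _).le)
  have h_kernel (x y : ℝ) : schrodingerKernel ν t x y * f y =
      (2 * (Complex.I * (4 * t : ℝ)) ^ (-(ν + 1) : ℂ) *
        Complex.exp ((x ^ 2 / (4 * t) : ℝ) * Complex.I)) *
        (hankelKernel ν (1 / |4 * t|) x y * f' y) := by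
    rw [schrodingerKernel, add_div, Complex.ofReal_add, add_mul, Complex.exp_add]
    rw [← abs_one_div, hankelKernel_abs]
    ring
  have h_factor (x : ℝ) : ‖2 * (Complex.I * (4 * t : ℝ)) ^ (-(ν + 1) : ℂ) *
      Complex.exp ((x ^ 2 / (4 * t) : ℝ) * Complex.I)‖ₑ =
      ENNReal.ofReal (2 * |4 * t| ^ (-(ν + 1))) := by
    rw [← ofReal_norm, norm_mul, norm_mul, norm_I_mul_ofReal_cpow, Complex.norm_exp_ofReal_mul_I,
      mul_one, Complex.norm_two]
  have h_hankel := lintegral_enorm_integral_hankelKernel_sq_le hν (l := 1 / |4 * t|)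
    (by positivity) hf'
  simp only [h_enorm] at h_hankel
  simp only [h_kernel, integral_const_mul, enorm_mul, h_factor,
    ENNReal.mul_rpow_of_nonneg _ _ zero_le_two]
  rw [lintegral_const_mul' _ _ (by finiteness)]
  refine (mul_le_mul_right h_hankel _).trans_eq ?_
  have h_const : (2 * |4 * t| ^ (-(ν + 1))) ^ (2 : ℝ) *
      (1 / 4 * ((1 / |4 * t|) ^ 2) ^ (-(ν + 1))) = 1 := by
    rw [one_div |_|, inv_pow, Real.inv_rpow (by positivity), ← Real.rpow_pow_comm (abs_nonneg _),
      Real.rpow_two]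
    field_simp
    norm_num
  rw [← mul_assoc, ENNReal.ofReal_rpow_of_nonneg (by positivity) zero_le_two,
    ← ENNReal.ofReal_mul (by positivity), h_const, ENNReal.ofReal_one, one_mul]

theorem norm_cexp_mul_besselClifford_le (hν : -1 / 2 ≤ ν) (x y : ℝ) {p : ℂ} (hp : 0 ≤ p.re) :
    ‖Complex.exp (-x ^ 2 / p + -y ^ 2 / p) * besselClifford ν (-x ^ 2 / p * (-y ^ 2 / p))‖ ≤
      ‖besselClifford ν 0‖ := by
  have h_inv : 0 ≤ p⁻¹.re := by
    rw [Complex.inv_re]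
    exact div_nonneg hp (Complex.normSq_nonneg _)
  have h_amgm : 2 * |x * y| ≤ x ^ 2 + y ^ 2 := by
    rw [abs_mul, ← sq_abs x, ← sq_abs y, ← mul_assoc]
    exact two_mul_le_add_sq _ _
  have h_sq : -(x : ℂ) ^ 2 / p * (-y ^ 2 / p) = ((x * y : ℝ) * p⁻¹) ^ 2 := by push_cast; ring
  have h_sum : -(x : ℂ) ^ 2 / p + -y ^ 2 / p = (-(x ^ 2 + y ^ 2) : ℝ) * p⁻¹ := by push_cast; ring
  have h_bessel := norm_besselClifford_sq_le hν ((x * y : ℝ) * p⁻¹)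
  rw [Complex.re_ofReal_mul, abs_mul, abs_of_nonneg h_inv] at h_bessel
  rw [norm_mul, h_sq, h_sum, Complex.norm_exp, Complex.re_ofReal_mul]
  calc _ ≤ Real.exp (-(x ^ 2 + y ^ 2) * p⁻¹.re) *
        (‖besselClifford ν 0‖ * Real.exp (2 * (|x * y| * p⁻¹.re))) := by gcongr
    _ = ‖besselClifford ν 0‖ * Real.exp (-((x ^ 2 + y ^ 2 - 2 * |x * y|) * p⁻¹.re)) := by
        rw [mul_left_comm, ← Real.exp_add]
        ring_nf
    _ ≤ ‖besselClifford ν 0‖ := by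
        refine mul_le_of_le_one_right (norm_nonneg _) (Real.exp_le_one_iff.2 ?_)
        exact neg_nonpos.2 (mul_nonneg (sub_nonneg.2 h_amgm) h_inv)

theorem integral_schrodingerKernel_mul_schrodingerKernel (hν : -1 < ν) {ε : ℝ} (hε : 0 < ε)
    (t s x z : ℝ) {p : ℂ} (hp : p = ε - ((4 * t)⁻¹ + (4 * s)⁻¹ : ℝ) * Complex.I) :
    ∫ y, schrodingerKernel ν t x y * schrodingerKernel ν s y z ∂gaussPowMeasure (2 * ν + 1) ε =
      2 * ((Complex.I * (4 * t : ℝ)) ^ (-(ν + 1) : ℂ) * (Complex.I * (4 * s : ℝ)) ^ (-(ν + 1) : ℂ) *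
        Complex.exp ((x ^ 2 / (4 * t) + z ^ 2 / (4 * s) : ℝ) * Complex.I) * p ^ (-(ν + 1) : ℂ) *
        (Complex.exp (-(x / (4 * t) : ℝ) ^ 2 / p + -(z / (4 * s) : ℝ) ^ 2 / p) *
          besselClifford ν (-(x / (4 * t) : ℝ) ^ 2 / p * (-(z / (4 * s) : ℝ) ^ 2 / p)))) := by
  have h_weber := integral_besselClifford_mul_besselClifford_mul_cexp hν
    (-(x / (4 * t) : ℝ) ^ 2) (-(z / (4 * s) : ℝ) ^ 2) (p := p) (by simpa [hp] using hε)
  have h_integrand (y : ℝ) : schrodingerKernel ν t x y * schrodingerKernel ν s y z *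
      Complex.exp (-ε * y ^ 2) =
      4 * ((Complex.I * (4 * t : ℝ)) ^ (-(ν + 1) : ℂ) * (Complex.I * (4 * s : ℝ)) ^ (-(ν + 1) : ℂ) *
        Complex.exp ((x ^ 2 / (4 * t) + z ^ 2 / (4 * s) : ℝ) * Complex.I)) *
        (besselClifford ν (-(x / (4 * t) : ℝ) ^ 2 * y ^ 2) *
          besselClifford ν (-(z / (4 * s) : ℝ) ^ 2 * y ^ 2) * Complex.exp (-p * y ^ 2)) := by
    have h_exp : Complex.exp (((x ^ 2 + y ^ 2) / (4 * t) : ℝ) * Complex.I) *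
        Complex.exp (((y ^ 2 + z ^ 2) / (4 * s) : ℝ) * Complex.I) * Complex.exp (-ε * y ^ 2) =
        Complex.exp ((x ^ 2 / (4 * t) + z ^ 2 / (4 * s) : ℝ) * Complex.I) *
          Complex.exp (-p * y ^ 2) := by
      simp only [← Complex.exp_add, hp]
      congr 1
      push_cast
      ring
    rw [schrodingerKernel, schrodingerKernel, hankelKernel_comm, hankelKernel_eq, hankelKernel_eq]
    have h_div (c w : ℝ) : ((1 / (4 * c) : ℝ) : ℂ) * w = (w / (4 * c) : ℝ) := by push_cast; ring
    simp only [h_div]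
    linear_combination 4 * (Complex.I * (4 * t : ℝ)) ^ (-(ν + 1) : ℂ) *
      (Complex.I * (4 * s : ℝ)) ^ (-(ν + 1) : ℂ) *
      besselClifford ν (-(x / (4 * t) : ℝ) ^ 2 * y ^ 2) *
      besselClifford ν (-(z / (4 * s) : ℝ) ^ 2 * y ^ 2) * h_exp
  simp only [integral_gaussPowMeasure, h_integrand, integral_const_mul, h_weber]
  ring

/-- Regularised form of the group law `U_t U_s = U_{t+s}`, at the level of the kernel bounds. -/
theorem norm_integral_schrodingerKernel_mul_schrodingerKernel_le (hν : -1 / 2 ≤ ν) {ε : ℝ}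
    (hε : 0 < ε) {t s : ℝ} (hts : t + s ≠ 0) (x z : ℝ) :
    ‖∫ y, schrodingerKernel ν t x y * schrodingerKernel ν s y z ∂gaussPowMeasure (2 * ν + 1) ε‖ ≤
      schrodingerDecay ν (t + s) := by
  have h_nonneg : 0 ≤ schrodingerDecay ν (t + s) := by rw [schrodingerDecay]; positivity
  rcases eq_or_ne t 0 with rfl | ht
  · simpa [schrodingerKernel_zero (by linarith : -1 < ν)] using h_nonneg
  rcases eq_or_ne s 0 with rfl | hs
  · simpa [schrodingerKernel_zero (by linarith : -1 < ν)] using h_nonneg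
  let p : ℂ := ε - ((4 * t)⁻¹ + (4 * s)⁻¹ : ℝ) * Complex.I
  have hp : |(4 * t)⁻¹ + (4 * s)⁻¹| ≤ ‖p‖ := by
    have h_im : p.im = -((4 * t)⁻¹ + (4 * s)⁻¹) := by
      simp only [p, Complex.sub_im, Complex.ofReal_im, Complex.im_ofReal_mul, Complex.I_im]
      ring
    simpa only [h_im, abs_neg] using Complex.abs_im_le_norm p
  have h_pow : |4 * t| ^ (-(ν + 1)) * |4 * s| ^ (-(ν + 1)) * ‖p ^ (-(ν + 1) : ℂ)‖ ≤
      |4 * (t + s)| ^ (-(ν + 1)) := by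
    have h_exp : (-(ν + 1) : ℂ) = ((-(ν + 1) : ℝ) : ℂ) := by push_cast; rfl
    rw [h_exp, Complex.norm_cpow_real, ← Real.mul_rpow (by positivity) (by positivity),
      ← Real.mul_rpow (by positivity) (by positivity)]
    refine Real.rpow_le_rpow_of_nonpos (by positivity) ?_ (by linarith)
    calc |4 * (t + s)| = |4 * t| * |4 * s| * |(4 * t)⁻¹ + (4 * s)⁻¹| := by
          rw [← abs_mul, ← abs_mul]
          congr 1
          field_simp
          ring
      _ ≤ _ := by gcongr
  have h_bessel := norm_cexp_mul_besselClifford_le hν (x / (4 * t)) (z / (4 * s)) (p := p)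
    (by simpa [p] using hε.le)
  rw [integral_schrodingerKernel_mul_schrodingerKernel (by linarith) hε t s x z rfl]
  rw [norm_mul] at h_bessel
  simp only [norm_mul, norm_I_mul_ofReal_cpow, Complex.norm_exp_ofReal_mul_I, Complex.norm_two,
    mul_one]
  calc _ = 2 * (|4 * t| ^ (-(ν + 1)) * |4 * s| ^ (-(ν + 1)) * ‖p ^ (-(ν + 1) : ℂ)‖ * _) := rfl
    _ ≤ 2 * (|4 * (t + s)| ^ (-(ν + 1)) * ‖besselClifford ν 0‖) := by gcongr
    _ = schrodingerDecay ν (t + s) := by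
        rw [schrodingerDecay]
        ring

end Schrodinger

section Propagator

theorem integrable_mul_of_norm_le {Y : Type*} [MeasurableSpace Y] {ρ : Measure Y} {g v : Y → ℂ}
    (hg : Integrable g ρ) (hv : AEStronglyMeasurable v ρ) {M : ℝ}
    (hM : ∀ y, g y ≠ 0 → ‖v y‖ ≤ M) : Integrable (fun y => g y * v y) ρ := by
  refine (hg.norm.mul_const M).mono' (hg.1.mul hv) (ae_of_all _ fun y => ?_)
  rcases eq_or_ne (g y) 0 with h_zero | h_ne
  · simp [h_zero]
  · rw [norm_mul]
    gcongr
    exact hM y h_ne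

theorem integral_mul_integral_kernel_swap {Y Z : Type*} [MeasurableSpace Y] [MeasurableSpace Z]
    {ρ : Measure Y} {σ : Measure Z} [SFinite ρ] [SFinite σ] {k : Y → Z → ℂ}
    (hk : Measurable (Function.uncurry k)) {g : Y → ℂ} (hg : Integrable g ρ) {M : ℝ}
    (hM : ∀ y, g y ≠ 0 → ∀ z, ‖k y z‖ ≤ M) {f : Z → ℂ} (hf : Integrable f σ) :
    ∫ y, g y * ∫ z, k y z * f z ∂σ ∂ρ = ∫ z, (∫ y, g y * k y z ∂ρ) * f z ∂σ := by
  have h_int : Integrable (fun p : Y × Z => g p.1 * f p.2 * k p.1 p.2) (ρ.prod σ) :=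
    integrable_mul_of_norm_le (hg.mul_prod hf) hk.aestronglyMeasurable
      fun p hp => hM p.1 (left_ne_zero_of_mul hp) p.2
  simp only [← integral_const_mul, ← integral_mul_const, ← mul_assoc]
  exact integral_integral_swap (h_int.congr (ae_of_all _ fun p => mul_right_comm _ _ _))

variable {ν : ℝ}

/-- The propagator `U_t` of the free Schrödinger equation with respect to `x ^ (2ν + 1) dx`. -/
noncomputable def schrodingerOp (ν t : ℝ) (f : ℝ → ℂ) (x : ℝ) : ℂ :=
  ∫ y, schrodingerKernel ν t x y * f y ∂powMeasure (2 * ν + 1)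

theorem measurable_schrodingerOp (ν : ℝ) {α : Type*} [MeasurableSpace α] {t x : α → ℝ}
    {f : α → ℝ → ℂ} (ht : Measurable t) (hx : Measurable x)
    (hf : Measurable (Function.uncurry f)) :
    Measurable fun p => schrodingerOp ν (t p) (f p) (x p) :=
  (StronglyMeasurable.integral_prod_right' (f := fun p : α × ℝ =>
    schrodingerKernel ν (t p.1) (x p.1) p.2 * f p.1 p.2)
    ((measurable_schrodingerKernel ν (ht.comp measurable_fst) (hx.comp measurable_fst)
      measurable_snd).mul hf).stronglyMeasurable).measurable

theorem measurable_schrodingerOp_of_aestronglyMeasurable {α : Type*} [MeasurableSpace α]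
    {t x : α → ℝ} (ht : Measurable t) (hx : Measurable x) {f : ℝ → ℂ}
    (hf : AEStronglyMeasurable f (powMeasure (2 * ν + 1))) :
    Measurable fun p => schrodingerOp ν (t p) f (x p) := by
  have h_congr (p : α) : schrodingerOp ν (t p) f (x p) = schrodingerOp ν (t p) (hf.mk f) (x p) :=
    integral_congr_ae (hf.ae_eq_mk.mono fun y hy => by simp only [hy])
  simp only [h_congr]
  exact measurable_schrodingerOp ν ht hx (hf.stronglyMeasurable_mk.measurable.comp measurable_snd)

theorem conj_schrodingerOp (ν t : ℝ) (f : ℝ → ℂ) (x : ℝ) :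
    conj (schrodingerOp ν t f x) = schrodingerOp ν (-t) (fun y => conj (f y)) x := by
  simp only [schrodingerOp, ← integral_conj, map_mul, conj_schrodingerKernel]

theorem enorm_schrodingerOp_le (hν : -1 / 2 ≤ ν) (t : ℝ) {f : ℝ → ℂ}
    (hf : AEStronglyMeasurable f (powMeasure (2 * ν + 1))) (x : ℝ) :
    ‖schrodingerOp ν t f x‖ₑ ≤
      ENNReal.ofReal (schrodingerDecay ν t) * ∫⁻ y, ‖f y‖ₑ ∂powMeasure (2 * ν + 1) :=
  enorm_integral_mul_le (fun y => by
    rw [← ofReal_norm]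
    exact ENNReal.ofReal_le_ofReal (norm_schrodingerKernel_le hν t x y)) hf

theorem exists_forall_norm_schrodingerOp_le (hν : -1 / 2 ≤ ν) (t : ℝ) {f : ℝ → ℂ}
    (hf : Integrable f (powMeasure (2 * ν + 1))) : ∃ M, ∀ x, ‖schrodingerOp ν t f x‖ ≤ M := by
  refine ⟨(ENNReal.ofReal (schrodingerDecay ν t) *
    ∫⁻ y, ‖f y‖ₑ ∂powMeasure (2 * ν + 1)).toReal, fun x => ?_⟩
  rw [← toReal_enorm]
  exact ENNReal.toReal_mono (ENNReal.mul_ne_top ENNReal.ofReal_ne_top hf.2.ne)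
    (enorm_schrodingerOp_le hν t hf.1 x)

end Propagator

section Dispersive

variable {ν r p : ℝ}

/-- The constant in the `L^{r'} → L^r` dispersive estimate. -/
noncomputable def dispersiveConst (ν r : ℝ) : ℝ :=
  interpolationConst r * (2 * ‖besselClifford ν 0‖ * 4 ^ (-(ν + 1))) ^ (1 - 2 / r)

theorem interpolationConst_mul_schrodingerDecay_rpow (ν r t : ℝ) :
    interpolationConst r * schrodingerDecay ν t ^ (1 - 2 / r) =
      dispersiveConst ν r * |t| ^ (-((ν + 1) * (1 - 2 / r))) := by
  rw [schrodingerDecay, dispersiveConst, abs_mul, Nat.abs_ofNat,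
    Real.mul_rpow zero_le_four (abs_nonneg t), ← mul_assoc (2 * ‖besselClifford ν 0‖),
    Real.mul_rpow (by positivity) (by positivity), ← Real.rpow_mul (abs_nonneg t), neg_mul,
    mul_assoc (interpolationConst r)]

theorem schrodingerDecay_pos (hν : -1 < ν) {t : ℝ} (ht : t ≠ 0) : 0 < schrodingerDecay ν t := by
  have h_norm : 0 < ‖besselClifford ν 0‖ := by
    rw [besselClifford_zero, norm_pos_iff]
    refine one_div_ne_zero (Complex.Gamma_ne_zero_of_re_pos ?_)
    simpa using by linarith
  rw [schrodingerDecay]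
  positivity

theorem eLpNorm'_schrodingerOp_le (hν : -1 / 2 ≤ ν) (hr : 2 < r) (hp : r.HolderConjugate p) (t : ℝ)
    {f : ℝ → ℂ} (hf : Integrable f (powMeasure (2 * ν + 1))) :
    eLpNorm' (schrodingerOp ν t f) r (powMeasure (2 * ν + 1)) ≤
      ENNReal.ofReal (dispersiveConst ν r * |t| ^ (-((ν + 1) * (1 - 2 / r)))) *
        eLpNorm' f p (powMeasure (2 * ν + 1)) := by
  rcases eq_or_ne t 0 with rfl | ht
  · have h_zero : schrodingerOp ν 0 f = 0 := funext fun x => by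
      simp [schrodingerOp, schrodingerKernel_zero (by linarith : -1 < ν)]
    simp [h_zero, eLpNorm'_zero hp.pos]
  rw [← interpolationConst_mul_schrodingerDecay_rpow]
  exact eLpNorm'_integral_kernel_le hr hp (schrodingerDecay_pos (by linarith) ht)
    (measurable_schrodingerKernel ν measurable_const measurable_fst measurable_snd)
    (norm_schrodingerKernel_le hν t)
    (fun g hg => lintegral_enorm_integral_schrodingerKernel_sq_le hν t hg) hf

theorem lintegral_enorm_integral_schrodingerKernel_mul_schrodingerOp_sq_le (hν : -1 / 2 ≤ ν) {ε : ℝ}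
    (hε : 0 < ε) (t s : ℝ) {f : ℝ → ℂ} (hf : Integrable f (powMeasure (2 * ν + 1))) :
    ∫⁻ x, ‖∫ y, schrodingerKernel ν t x y * schrodingerOp ν s f y
        ∂gaussPowMeasure (2 * ν + 1) ε‖ₑ ^ (2 : ℝ) ∂powMeasure (2 * ν + 1) ≤
      ∫⁻ y, ‖f y‖ₑ ^ (2 : ℝ) ∂powMeasure (2 * ν + 1) := by
  obtain ⟨M, hM⟩ := exists_forall_norm_schrodingerOp_le hν s hf
  have h_weight (y : ℝ) : ‖Complex.exp (-ε * y ^ 2)‖ₑ ≤ 1 := by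
    rw [← ofReal_norm, Complex.norm_exp, ENNReal.ofReal_le_one, Real.exp_le_one_iff]
    norm_cast
    nlinarith [sq_nonneg y]
  have h_int : Integrable (fun y => schrodingerOp ν s f y * Complex.exp (-ε * y ^ 2))
      (powMeasure (2 * ν + 1)) := by
    refine Integrable.bdd_mul ?_
      (measurable_schrodingerOp_of_aestronglyMeasurable measurable_const measurable_id
        hf.1).aestronglyMeasurable
      (ae_of_all _ hM)
    simpa using (integrable_exp_neg_mul_sq_powMeasure (by linarith : -1 < 2 * ν + 1) hε).ofReal
      (𝕜 := ℂ)
  simp only [integral_gaussPowMeasure, mul_assoc]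
  refine (lintegral_enorm_integral_schrodingerKernel_sq_le hν t h_int).trans ?_
  refine le_trans (lintegral_mono fun y => ?_)
    (lintegral_enorm_integral_schrodingerKernel_sq_le hν s hf)
  rw [enorm_mul]
  gcongr
  exact mul_le_of_le_one_right zero_le (h_weight y)

/-- The dispersive estimate for `U_t U_s = U_{t+s}`, through the Gaussian regularisation that makes
the composition of the two kernels an absolutely convergent integral. -/
theorem eLpNorm'_integral_schrodingerKernel_mul_schrodingerOp_le (hν : -1 / 2 ≤ ν) (hr : 2 < r)
    (hp : r.HolderConjugate p) {ε : ℝ} (hε : 0 < ε) {t s : ℝ} (hts : t + s ≠ 0) {f : ℝ → ℂ}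
    (hf : Integrable f (powMeasure (2 * ν + 1))) :
    eLpNorm' (fun x => ∫ y, schrodingerKernel ν t x y * schrodingerOp ν s f y
        ∂gaussPowMeasure (2 * ν + 1) ε) r (powMeasure (2 * ν + 1)) ≤
      ENNReal.ofReal (dispersiveConst ν r * |t + s| ^ (-((ν + 1) * (1 - 2 / r)))) *
        eLpNorm' f p (powMeasure (2 * ν + 1)) := by
  have h_finite := isFiniteMeasure_gaussPowMeasure (by linarith : -1 < 2 * ν + 1) hε
  have h_kernel {g : ℝ → ℂ} (hg : Integrable g (powMeasure (2 * ν + 1))) (x : ℝ) :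
      ∫ y, schrodingerKernel ν t x y * schrodingerOp ν s g y ∂gaussPowMeasure (2 * ν + 1) ε =
        ∫ z, (∫ y, schrodingerKernel ν t x y * schrodingerKernel ν s y z
          ∂gaussPowMeasure (2 * ν + 1) ε) * g z ∂powMeasure (2 * ν + 1) :=
    integral_mul_integral_kernel_swap
      (measurable_schrodingerKernel ν measurable_const measurable_fst measurable_snd)
      (Integrable.of_bound (measurable_schrodingerKernel ν measurable_const measurable_const
        measurable_id).aestronglyMeasurable _ (ae_of_all _ (norm_schrodingerKernel_le hν t x)))
      (fun y _ => norm_schrodingerKernel_le hν s y) hg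
  simp only [h_kernel hf, ← interpolationConst_mul_schrodingerDecay_rpow]
  refine eLpNorm'_integral_kernel_le hr hp (schrodingerDecay_pos (by linarith) hts) ?_
    (norm_integral_schrodingerKernel_mul_schrodingerKernel_le hν hε hts) (fun g hg => ?_) hf
  · refine (StronglyMeasurable.integral_prod_right' (f := fun p : (ℝ × ℝ) × ℝ =>
      schrodingerKernel ν t p.1.1 p.2 * schrodingerKernel ν s p.2 p.1.2) ?_).measurable
    exact ((measurable_schrodingerKernel ν measurable_const measurable_fst.fst
      measurable_snd).mul (measurable_schrodingerKernel ν measurable_const measurable_snd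
      measurable_fst.snd)).stronglyMeasurable
  · simp only [← h_kernel hg]
    exact lintegral_enorm_integral_schrodingerKernel_mul_schrodingerOp_sq_le hν hε t s hg

end Dispersive

section MixedNormHoelder

variable {T X ε ε' : Type*} [MeasurableSpace T] [MeasurableSpace X] {τ : Measure T} {μ : Measure X}
  [TopologicalSpace ε] [ContinuousENorm ε] [MeasurableSpace ε] [OpensMeasurableSpace ε]
  [TopologicalSpace ε'] [ContinuousENorm ε'] [MeasurableSpace ε'] [OpensMeasurableSpace ε']
  {q r r' : ℝ}

theorem measurable_eLpNorm'_slice [SFinite μ] {u : T → X → ε}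
    (hu : Measurable (Function.uncurry u)) (r : ℝ) : Measurable fun t => eLpNorm' (u t) r μ :=
  (Measurable.lintegral_prod_right' (f := fun p : T × X => ‖u p.1 p.2‖ₑ ^ r)
    (hu.enorm.pow_const r)).pow_const (1 / r)

theorem lintegral_enorm_mul_enorm_le (hr : r.HolderConjugate r') {u : X → ε} {v : X → ε'}
    (hu : AEMeasurable u μ) (hv : AEMeasurable v μ) :
    ∫⁻ x, ‖u x‖ₑ * ‖v x‖ₑ ∂μ ≤ eLpNorm' u r μ * eLpNorm' v r' μ :=
  ENNReal.lintegral_mul_le_Lp_mul_Lq μ hr hu.enorm hv.enorm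

theorem exists_measurable_enorm_eq_and_mul_eq_norm {h : T → X → ℝ≥0∞}
    (hh : Measurable (Function.uncurry h)) (h_top : ∀ t x, h t x ≠ ∞) {u : T → X → ℂ}
    (hu : Measurable (Function.uncurry u)) :
    ∃ G : T → X → ℂ, Measurable (Function.uncurry G) ∧ (∀ t x, ‖G t x‖ₑ = h t x) ∧
      ∀ t x, G t x * u t x = ‖G t x * u t x‖ := by
  refine ⟨fun t x => (h t x).toReal * Complex.exp (-(u t x).arg * Complex.I), ?_, fun t x => ?_,
    fun t x => ?_⟩
  · exact (Complex.measurable_ofReal.comp hh.ennreal_toReal).mul (Complex.measurable_exp.comp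
      ((Complex.measurable_ofReal.comp (Complex.measurable_arg.comp hu)).neg.mul_const _))
  · dsimp only
    rw [← Complex.ofReal_neg, ← ofReal_norm, norm_mul, Complex.norm_exp_ofReal_mul_I, mul_one,
      Complex.norm_real, Real.norm_of_nonneg ENNReal.toReal_nonneg,
      ENNReal.ofReal_toReal (h_top t x)]
  · have h_phase : (h t x).toReal * Complex.exp (-(u t x).arg * Complex.I) * u t x =
        ((h t x).toReal * ‖u t x‖ : ℝ) := by
      nth_rw 2 [← Complex.norm_mul_exp_arg_mul_I (u t x)]
      rw [mul_assoc, mul_left_comm (Complex.exp _), ← Complex.exp_add, neg_mul, neg_add_cancel,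
        Complex.exp_zero, mul_one, Complex.ofReal_mul]
    rw [h_phase, Complex.norm_of_nonneg (by positivity)]

variable {A : Set T} {G : T → X → ℂ}

theorem IsTestFunction.integrable (hG : Measurable (Function.uncurry G))
    (h : IsTestFunction A μ fun t x => ‖G t x‖ₑ) (t : T) : Integrable (G t) μ := by
  obtain ⟨K, hK⟩ := h.exists_lintegral_rpow_le one_pos
  simp only [ENNReal.rpow_one] at hK
  exact ⟨hG.of_uncurry_left.aestronglyMeasurable, (hK t).trans_lt ENNReal.coe_lt_top⟩

theorem IsTestFunction.integrable_uncurry [SFinite μ] (hG : Measurable (Function.uncurry G))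
    (h : IsTestFunction A μ fun t x => ‖G t x‖ₑ) (hA : τ A ≠ ∞) :
    Integrable (Function.uncurry G) (τ.prod μ) := by
  have h_top := h.lintegral_lintegral_rpow_ne_top hA one_pos one_pos
  simp only [ENNReal.rpow_one, div_one] at h_top
  refine ⟨hG.aestronglyMeasurable, ?_⟩
  rw [HasFiniteIntegral, lintegral_prod _ hG.enorm.aemeasurable]
  exact h_top.lt_top

end MixedNormHoelder

section Strichartz

/-- The constant of the inhomogeneous Strichartz estimate; its square root is the constant of the
homogeneous one. -/
noncomputable def strichartzConst (ν q r : ℝ) : ℝ :=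
  2 * dispersiveConst ν r * fractionalIntegrationConst q

variable {ν q q' r r' : ℝ}

theorem lintegral_lintegral_dispersiveConst_mul_le (ν r : ℝ) (hq2 : 2 < q)
    (hq : q.HolderConjugate q') {f g : ℝ → ℝ≥0∞} (hf : Measurable f) (hg : Measurable g) :
    ∫⁻ t, ∫⁻ s, ENNReal.ofReal (dispersiveConst ν r * |t - s| ^ (-(2 / q))) * (f t * g s) ≤
      ENNReal.ofReal (strichartzConst ν q r) *
        (eLpNorm' f q' volume * eLpNorm' g q' volume) := by
  have h_split (t s : ℝ) :
      ENNReal.ofReal (dispersiveConst ν r * |t - s| ^ (-(2 / q))) * (f t * g s) =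
        ENNReal.ofReal (dispersiveConst ν r) *
          (f t * g s * ENNReal.ofReal (|t - s| ^ (-(2 / q)))) := by
    rw [ENNReal.ofReal_mul' (by positivity)]
    ring
  have h_const : ENNReal.ofReal (strichartzConst ν q r) =
      ENNReal.ofReal (dispersiveConst ν r) *
        (2 * ENNReal.ofReal (fractionalIntegrationConst q)) := by
    rw [strichartzConst, ENNReal.ofReal_mul' (fractionalIntegrationConst_pos hq2).le,
      ENNReal.ofReal_mul zero_le_two, ENNReal.ofReal_ofNat]
    ring
  simp only [h_split, lintegral_const_mul' _ _ ENNReal.ofReal_ne_top]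
  rw [h_const, mul_assoc]
  exact mul_le_mul_right (by
    simpa only [eLpNorm', enorm_eq_self] using
      lintegral_lintegral_mul_abs_sub_rpow_neg_le hq2 hq hf hg) _

theorem integral_schrodingerOp_mul_schrodingerOp (hν : -1 / 2 ≤ ν) {ε : ℝ} (hε : 0 < ε) (t s : ℝ)
    {f g : ℝ → ℂ} (hf : Integrable f (powMeasure (2 * ν + 1)))
    (hg : Integrable g (powMeasure (2 * ν + 1))) :
    ∫ y, schrodingerOp ν t f y * schrodingerOp ν s g y ∂gaussPowMeasure (2 * ν + 1) ε =
      ∫ x, (∫ y, schrodingerKernel ν t x y * schrodingerOp ν s g y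
        ∂gaussPowMeasure (2 * ν + 1) ε) * f x ∂powMeasure (2 * ν + 1) := by
  have h_finite := isFiniteMeasure_gaussPowMeasure (by linarith : -1 < 2 * ν + 1) hε
  obtain ⟨M, hM⟩ := exists_forall_norm_schrodingerOp_le hν s hg
  have h_int : Integrable (schrodingerOp ν s g) (gaussPowMeasure (2 * ν + 1) ε) :=
    Integrable.of_bound (measurable_schrodingerOp_of_aestronglyMeasurable measurable_const
      measurable_id hg.1).aestronglyMeasurable M (ae_of_all _ hM)
  have h_swap := integral_mul_integral_kernel_swap (k := schrodingerKernel ν t)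
    (measurable_schrodingerKernel ν measurable_const measurable_fst measurable_snd) h_int
    (fun y _ => norm_schrodingerKernel_le hν t y) hf
  simp only [mul_comm (schrodingerOp ν t f _)]
  refine h_swap.trans (integral_congr_ae (ae_of_all _ fun x => ?_))
  simp only [mul_comm (schrodingerOp _ _ _ _), schrodingerKernel_comm ν t x]

theorem enorm_integral_schrodingerOp_mul_conj_le (hν : -1 / 2 ≤ ν) (hr2 : 2 < r)
    (hr : r.HolderConjugate r') {ε : ℝ} (hε : 0 < ε) {t s : ℝ} (hts : t ≠ s) {f g : ℝ → ℂ}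
    (hf : Integrable f (powMeasure (2 * ν + 1))) (hg : Integrable g (powMeasure (2 * ν + 1))) :
    ‖∫ y, schrodingerOp ν t f y * conj (schrodingerOp ν s g y)
        ∂gaussPowMeasure (2 * ν + 1) ε‖ₑ ≤
      ENNReal.ofReal (dispersiveConst ν r * |t - s| ^ (-((ν + 1) * (1 - 2 / r)))) *
        (eLpNorm' f r' (powMeasure (2 * ν + 1)) * eLpNorm' g r' (powMeasure (2 * ν + 1))) := by
  have hg' : Integrable (fun y => conj (g y)) (powMeasure (2 * ν + 1)) :=
    Complex.conjCLE.toContinuousLinearMap.integrable_comp hg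
  have h_finite := isFiniteMeasure_gaussPowMeasure (by linarith : -1 < 2 * ν + 1) hε
  let P (x : ℝ) : ℂ := ∫ y, schrodingerKernel ν t x y *
    schrodingerOp ν (-s) (fun y => conj (g y)) y ∂gaussPowMeasure (2 * ν + 1) ε
  have hP : AEMeasurable P (powMeasure (2 * ν + 1)) :=
    (aestronglyMeasurable_integral_kernel
      (measurable_schrodingerKernel ν measurable_const measurable_fst measurable_snd)
      (measurable_schrodingerOp_of_aestronglyMeasurable measurable_const measurable_id
        hg'.1).aestronglyMeasurable).aemeasurable
  have h_dispersive := eLpNorm'_integral_schrodingerKernel_mul_schrodingerOp_le hν hr2 hr hε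
    (by rwa [← sub_eq_add_neg, sub_ne_zero] : t + -s ≠ 0) hg'
  rw [← sub_eq_add_neg] at h_dispersive
  simp only [conj_schrodingerOp, integral_schrodingerOp_mul_schrodingerOp hν hε t (-s) hf hg']
  calc ‖∫ x, P x * f x ∂powMeasure (2 * ν + 1)‖ₑ
      ≤ ∫⁻ x, ‖P x‖ₑ * ‖f x‖ₑ ∂powMeasure (2 * ν + 1) := by
        simpa only [enorm_mul] using enorm_integral_le_lintegral_enorm (fun x => P x * f x)
    _ ≤ _ := lintegral_enorm_mul_enorm_le hr hP hf.1.aemeasurable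
    _ ≤ _ := mul_le_mul_left h_dispersive _
    _ = _ := by
        simp only [eLpNorm', RCLike.enorm_conj]
        ring

variable {A : Set ℝ} {G : ℝ → ℝ → ℂ}

theorem IsTestFunction.schrodingerOp_eq_zero {μ : Measure ℝ}
    (h : IsTestFunction A μ fun t x => ‖G t x‖ₑ) {t : ℝ} (ht : t ∉ A) (ν y : ℝ) :
    schrodingerOp ν t (G t) y = 0 := by
  have h_zero (x : ℝ) : G t x = 0 := by
    simpa using not_imp_comm.1 (h.mem_of_ne_zero t x) ht
  simp [schrodingerOp, h_zero]

theorem IsTestFunction.exists_forall_norm_schrodingerOp_le (hν : -1 / 2 ≤ ν) {M : ℝ}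
    (hM : ∀ t ∈ A, schrodingerDecay ν t ≤ M) (hG : Measurable (Function.uncurry G))
    (h : IsTestFunction A (powMeasure (2 * ν + 1)) fun t x => ‖G t x‖ₑ) :
    ∃ K, ∀ y t, ‖schrodingerOp ν t (G t) y‖ ≤ K := by
  obtain ⟨L, hL⟩ := h.exists_lintegral_rpow_le one_pos
  simp only [ENNReal.rpow_one] at hL
  refine ⟨(ENNReal.ofReal M * L).toReal, fun y t => ?_⟩
  by_cases ht : t ∈ A
  · rw [← toReal_enorm]
    refine ENNReal.toReal_mono (ENNReal.mul_ne_top ENNReal.ofReal_ne_top ENNReal.coe_ne_top) ?_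
    exact (enorm_schrodingerOp_le hν t (h.integrable hG t).1 y).trans
      (mul_le_mul' (ENNReal.ofReal_le_ofReal (hM t ht)) (hL t))
  · rw [h.schrodingerOp_eq_zero ht, norm_zero]
    positivity

theorem measurable_integral_schrodingerOp (ν : ℝ) (hG : Measurable (Function.uncurry G)) :
    Measurable fun y => ∫ t, schrodingerOp ν t (G t) y :=
  (measurable_schrodingerOp ν (f := fun p : ℝ × ℝ => G p.2) measurable_snd measurable_fst
    (hG.comp (measurable_fst.snd.prodMk measurable_snd))).stronglyMeasurable
    |>.integral_prod_right'.measurable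

/-- Duality turns this `TT*` bound into the homogeneous Strichartz estimate. -/
theorem lintegral_enorm_integral_schrodingerOp_sq_le (hν : -1 / 2 ≤ ν) (hq2 : 2 < q)
    (hq : q.HolderConjugate q') (hr2 : 2 < r) (hr : r.HolderConjugate r')
    (hqr : 2 / q = (ν + 1) * (1 - 2 / r)) (hA : MeasurableSet A) (hA_top : volume A ≠ ∞) {M : ℝ}
    (hM : ∀ t ∈ A, schrodingerDecay ν t ≤ M) (hG : Measurable (Function.uncurry G))
    (hGA : IsTestFunction A (powMeasure (2 * ν + 1)) fun t x => ‖G t x‖ₑ) :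
    ∫⁻ y, ‖∫ t, schrodingerOp ν t (G t) y‖ₑ ^ (2 : ℝ) ∂powMeasure (2 * ν + 1) ≤
      ENNReal.ofReal (strichartzConst ν q r) *
        mixedELpNorm q' r' G volume (powMeasure (2 * ν + 1)) ^ (2 : ℝ) := by
  let U (y t : ℝ) : ℂ := schrodingerOp ν t (G t) y
  have hU : Measurable (Function.uncurry U) :=
    measurable_schrodingerOp ν measurable_snd measurable_fst
      (hG.comp (measurable_fst.snd.prodMk measurable_snd))
  obtain ⟨K, hK⟩ := hGA.exists_forall_norm_schrodingerOp_le hν hM hG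
  let N (t : ℝ) : ℝ≥0∞ := eLpNorm' (G t) r' (powMeasure (2 * ν + 1))
  have hN : Measurable N := measurable_eLpNorm'_slice hG r'
  refine lintegral_powMeasure_le_of_forall_gaussPowMeasure
    ((measurable_integral_schrodingerOp ν hG).enorm.pow_const 2).aemeasurable fun ε hε => ?_
  have h_finite := isFiniteMeasure_gaussPowMeasure (by linarith : -1 < 2 * ν + 1) hε
  calc _ ≤ ∫⁻ t, ∫⁻ s, ‖∫ y, U y t * conj (U y s) ∂gaussPowMeasure (2 * ν + 1) ε‖ₑ :=
        lintegral_enorm_integral_sq_le_of_eq_zero hU hK hA hA_top fun y t ht =>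
          hGA.schrodingerOp_eq_zero ht ν y
    _ ≤ ∫⁻ t, ∫⁻ s, ENNReal.ofReal (dispersiveConst ν r * |t - s| ^ (-(2 / q))) * (N t * N s) := by
        refine lintegral_mono fun t => lintegral_mono_ae ?_
        filter_upwards [Measure.ae_ne volume t] with s hs
        rw [hqr]
        exact enorm_integral_schrodingerOp_mul_conj_le hν hr2 hr hε hs.symm (hGA.integrable hG t)
          (hGA.integrable hG s)
    _ ≤ _ := lintegral_lintegral_dispersiveConst_mul_le ν r hq2 hq hN hN
    _ = _ := by
        rw [ENNReal.rpow_two, sq]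
        rfl

theorem IsTestFunction.norm_schrodingerKernel_le (hν : -1 / 2 ≤ ν) {M : ℝ}
    (hM : ∀ t ∈ A, schrodingerDecay ν t ≤ M) {μ : Measure ℝ}
    (h : IsTestFunction A μ fun t x => ‖G t x‖ₑ) {t x : ℝ} (h_ne : G t x ≠ 0) (y : ℝ) :
    ‖schrodingerKernel ν t x y‖ ≤ M :=
  (_root_.norm_schrodingerKernel_le hν t x y).trans
    (hM t (h.mem_of_ne_zero t x (by simpa using h_ne)))

theorem IsTestFunction.integrable_mul_schrodingerOp (hν : -1 / 2 ≤ ν) (hA_top : volume A ≠ ∞)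
    {M : ℝ} (hM : ∀ t ∈ A, schrodingerDecay ν t ≤ M) (hG : Measurable (Function.uncurry G))
    (h : IsTestFunction A (powMeasure (2 * ν + 1)) fun t x => ‖G t x‖ₑ) {f : ℝ → ℂ}
    (hf : Integrable f (powMeasure (2 * ν + 1))) :
    Integrable (fun p : ℝ × ℝ => G p.1 p.2 * schrodingerOp ν p.1 f p.2)
      (volume.prod (powMeasure (2 * ν + 1))) := by
  refine integrable_mul_of_norm_le (h.integrable_uncurry hG hA_top)
    (measurable_schrodingerOp_of_aestronglyMeasurable measurable_fst measurable_snd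
      hf.1).aestronglyMeasurable
    (M := (ENNReal.ofReal M * ∫⁻ y, ‖f y‖ₑ ∂powMeasure (2 * ν + 1)).toReal) fun p hp => ?_
  rw [← toReal_enorm]
  refine ENNReal.toReal_mono (ENNReal.mul_ne_top ENNReal.ofReal_ne_top hf.2.ne)
    (enorm_integral_mul_le (fun y => ?_) hf.1)
  rw [← ofReal_norm]
  exact ENNReal.ofReal_le_ofReal (h.norm_schrodingerKernel_le hν hM hp y)

theorem IsTestFunction.integral_mul_schrodingerOp_eq (hν : -1 / 2 ≤ ν) (hA_top : volume A ≠ ∞)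
    {M : ℝ} (hM : ∀ t ∈ A, schrodingerDecay ν t ≤ M) (hG : Measurable (Function.uncurry G))
    (h : IsTestFunction A (powMeasure (2 * ν + 1)) fun t x => ‖G t x‖ₑ) {f : ℝ → ℂ}
    (hf : Integrable f (powMeasure (2 * ν + 1))) :
    ∫ p : ℝ × ℝ, G p.1 p.2 * schrodingerOp ν p.1 f p.2 ∂volume.prod (powMeasure (2 * ν + 1)) =
      ∫ y, (∫ t, schrodingerOp ν t (G t) y) * f y ∂powMeasure (2 * ν + 1) := by
  have hG_int := h.integrable_uncurry hG hA_top
  have h_swap := integral_mul_integral_kernel_swap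
    (k := fun (p : ℝ × ℝ) y => schrodingerKernel ν p.1 p.2 y)
    (measurable_schrodingerKernel ν measurable_fst.fst measurable_fst.snd measurable_snd)
    hG_int (fun p hp => h.norm_schrodingerKernel_le hν hM hp) hf
  refine h_swap.trans (integral_congr_ae (ae_of_all _ fun y => ?_))
  have h_int := integrable_mul_of_norm_le hG_int (measurable_schrodingerKernel ν measurable_fst
    measurable_snd (measurable_const (a := y))).aestronglyMeasurable
    fun p hp => h.norm_schrodingerKernel_le hν hM hp y
  dsimp only
  rw [integral_prod _ h_int]
  simp only [Function.uncurry, schrodingerOp, schrodingerKernel_comm ν _ y, mul_comm (G _ _)]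

theorem eLpNorm'_integral_schrodingerOp_le (hν : -1 / 2 ≤ ν) (hq2 : 2 < q)
    (hq : q.HolderConjugate q') (hr2 : 2 < r) (hr : r.HolderConjugate r')
    (hqr : 2 / q = (ν + 1) * (1 - 2 / r)) (hA : MeasurableSet A) (hA_top : volume A ≠ ∞) {M : ℝ}
    (hM : ∀ t ∈ A, schrodingerDecay ν t ≤ M) (hG : Measurable (Function.uncurry G))
    (hGA : IsTestFunction A (powMeasure (2 * ν + 1)) fun t x => ‖G t x‖ₑ) :
    eLpNorm' (fun y => ∫ t, schrodingerOp ν t (G t) y) 2 (powMeasure (2 * ν + 1)) ≤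
      ENNReal.ofReal (strichartzConst ν q r) ^ (1 / 2 : ℝ) *
        mixedELpNorm q' r' G volume (powMeasure (2 * ν + 1)) := by
  rw [eLpNorm', one_div, ENNReal.rpow_inv_le_iff two_pos,
    ENNReal.mul_rpow_of_nonneg _ _ zero_le_two, ENNReal.rpow_inv_rpow two_ne_zero]
  exact lintegral_enorm_integral_schrodingerOp_sq_le hν hq2 hq hr2 hr hqr hA hA_top hM hG hGA

theorem lintegral_lintegral_enorm_schrodingerOp_mul_le (hν : -1 / 2 ≤ ν) (hq2 : 2 < q)
    (hq : q.HolderConjugate q') (hr2 : 2 < r) (hr : r.HolderConjugate r')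
    (hqr : 2 / q = (ν + 1) * (1 - 2 / r)) (hA : MeasurableSet A) (hA_top : volume A ≠ ∞) {M : ℝ}
    (hM : ∀ t ∈ A, schrodingerDecay ν t ≤ M) {h : ℝ → ℝ → ℝ≥0∞}
    (hh : IsTestFunction A (powMeasure (2 * ν + 1)) h) {f : ℝ → ℂ}
    (hf : Integrable f (powMeasure (2 * ν + 1))) :
    ∫⁻ t, ∫⁻ x, ‖schrodingerOp ν t f x‖ₑ * h t x ∂powMeasure (2 * ν + 1) ≤
      ENNReal.ofReal (strichartzConst ν q r) ^ (1 / 2 : ℝ) *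
        eLpNorm' f 2 (powMeasure (2 * ν + 1)) *
        mixedELpNorm q' r' h volume (powMeasure (2 * ν + 1)) := by
  have hU : Measurable fun p : ℝ × ℝ => schrodingerOp ν p.1 f p.2 :=
    measurable_schrodingerOp_of_aestronglyMeasurable measurable_fst measurable_snd hf.1
  obtain ⟨L, hL⟩ := hh.exists_bound
  -- Turning `h` by the phase of `U_t f` makes the pairing with `U_t f` a nonnegative integral.
  obtain ⟨G, hG, h_enorm, h_phase⟩ := exists_measurable_enorm_eq_and_mul_eq_norm hh.measurable
    (fun t x => ne_top_of_le_ne_top ENNReal.coe_ne_top (hL t x))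
    (u := fun t => schrodingerOp ν t f) hU
  have hGA : IsTestFunction A (powMeasure (2 * ν + 1)) fun t x => ‖G t x‖ₑ := by
    simpa only [h_enorm] using hh
  have h_int := hGA.integrable_mul_schrodingerOp hν hA_top hM hG hf
  calc ∫⁻ t, ∫⁻ x, ‖schrodingerOp ν t f x‖ₑ * h t x ∂powMeasure (2 * ν + 1)
      = ∫⁻ p : ℝ × ℝ, ‖G p.1 p.2 * schrodingerOp ν p.1 f p.2‖ₑ
          ∂volume.prod (powMeasure (2 * ν + 1)) := by
        rw [lintegral_prod _ h_int.1.enorm]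
        simp only [enorm_mul, h_enorm, mul_comm]
    _ = ‖∫ p : ℝ × ℝ, G p.1 p.2 * schrodingerOp ν p.1 f p.2
          ∂volume.prod (powMeasure (2 * ν + 1))‖ₑ :=
        lintegral_enorm_eq_enorm_integral h_int fun p => h_phase p.1 p.2
    _ ≤ ∫⁻ y, ‖∫ t, schrodingerOp ν t (G t) y‖ₑ * ‖f y‖ₑ
          ∂powMeasure (2 * ν + 1) := by
        rw [hGA.integral_mul_schrodingerOp_eq hν hA_top hM hG hf]
        simpa only [enorm_mul] using enorm_integral_le_lintegral_enorm
          fun y => (∫ t, schrodingerOp ν t (G t) y) * f y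
    _ ≤ _ := lintegral_enorm_mul_enorm_le Real.HolderConjugate.two_two
          (measurable_integral_schrodingerOp ν hG).aemeasurable hf.1.aemeasurable
    _ ≤ _ := mul_le_mul_left
          (eLpNorm'_integral_schrodingerOp_le hν hq2 hq hr2 hr hqr hA hA_top hM hG hGA) _
    _ = _ := by
        simp only [mixedELpNorm_eq_lintegral, h_enorm, enorm_eq_self, mul_right_comm]

theorem lintegral_lintegral_lintegral_enorm_schrodingerOp_sub_mul_le (hν : -1 / 2 ≤ ν)
    (hq2 : 2 < q) (hq : q.HolderConjugate q') (hr2 : 2 < r) (hr : r.HolderConjugate r')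
    (hqr : 2 / q = (ν + 1) * (1 - 2 / r)) {h : ℝ → ℝ → ℝ≥0∞}
    (hh : Measurable (Function.uncurry h)) {F : ℝ → ℝ → ℂ} (hF : Measurable (Function.uncurry F))
    (hF_int : ∀ᵐ s, Integrable (F s) (powMeasure (2 * ν + 1))) :
    ∫⁻ t, ∫⁻ x, (∫⁻ s, ‖schrodingerOp ν (t - s) (F s) x‖ₑ) * h t x ∂powMeasure (2 * ν + 1) ≤
      ENNReal.ofReal (strichartzConst ν q r) *
        mixedELpNorm q' r' F volume (powMeasure (2 * ν + 1)) *
        mixedELpNorm q' r' h volume (powMeasure (2 * ν + 1)) := by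
  have h_meas (t : ℝ) : Measurable fun p : ℝ × ℝ => schrodingerOp ν (t - p.2) (F p.2) p.1 :=
    measurable_schrodingerOp ν (measurable_const.sub measurable_snd) measurable_fst
      (hF.comp (measurable_fst.snd.prodMk measurable_snd))
  calc ∫⁻ t, ∫⁻ x, (∫⁻ s, ‖schrodingerOp ν (t - s) (F s) x‖ₑ) * h t x ∂powMeasure (2 * ν + 1)
      = ∫⁻ t, ∫⁻ s, ∫⁻ x, ‖schrodingerOp ν (t - s) (F s) x‖ₑ * h t x
          ∂powMeasure (2 * ν + 1) := by
        refine lintegral_congr fun t => ?_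
        have h_swap := lintegral_lintegral_swap (μ := powMeasure (2 * ν + 1)) (ν := volume)
          (f := fun x s => ‖schrodingerOp ν (t - s) (F s) x‖ₑ * h t x)
          ((h_meas t).enorm.mul (hh.of_uncurry_left.comp measurable_fst)).aemeasurable
        rw [← h_swap]
        exact lintegral_congr fun x =>
          (lintegral_mul_const _ (h_meas t |>.comp measurable_prodMk_left).enorm).symm
    _ ≤ ∫⁻ t, ∫⁻ s, ENNReal.ofReal (dispersiveConst ν r * |t - s| ^ (-(2 / q))) *
          (eLpNorm' (h t) r' (powMeasure (2 * ν + 1)) *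
            eLpNorm' (F s) r' (powMeasure (2 * ν + 1))) := by
        refine lintegral_mono fun t => lintegral_mono_ae ?_
        filter_upwards [hF_int] with s hs
        have h_slice := (h_meas t).comp (measurable_prodMk_right (y := s))
        refine (lintegral_enorm_mul_enorm_le hr h_slice.aemeasurable
          hh.of_uncurry_left.aemeasurable).trans ?_
        rw [hqr, mul_comm (eLpNorm' (h t) _ _), ← mul_assoc]
        exact mul_le_mul_left (eLpNorm'_schrodingerOp_le hν hr2 hr (t - s) hs) _
    _ ≤ _ := lintegral_lintegral_dispersiveConst_mul_le ν r hq2 hq (measurable_eLpNorm'_slice hh r')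
          (measurable_eLpNorm'_slice hF r')
    _ = _ := by
        rw [mul_comm (eLpNorm' _ _ _), ← mul_assoc]
        rfl

end Strichartz

section StrichartzMixedNorm

variable {ν q q' r r' : ℝ}

/-- A majorant of the Duhamel formula for data `f` and source term `F`. -/
noncomputable def duhamelMajorant (ν : ℝ) (f : ℝ → ℂ) (F : ℝ → ℝ → ℂ) (t x : ℝ) : ℝ≥0∞ :=
  ‖schrodingerOp ν t f x‖ₑ + ∫⁻ s, ‖schrodingerOp ν (t - s) (F s) x‖ₑ

theorem measurable_duhamelMajorant {f : ℝ → ℂ}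
    (hf : AEStronglyMeasurable f (powMeasure (2 * ν + 1))) {F : ℝ → ℝ → ℂ}
    (hF : Measurable (Function.uncurry F)) :
    Measurable (Function.uncurry (duhamelMajorant ν f F)) := by
  refine (measurable_schrodingerOp_of_aestronglyMeasurable measurable_fst
    measurable_snd hf).enorm.add (Measurable.lintegral_prod_right'
      (f := fun p : (ℝ × ℝ) × ℝ => ‖schrodingerOp ν (p.1.1 - p.2) (F p.2) p.1.2‖ₑ) ?_)
  exact (measurable_schrodingerOp ν (f := fun p : (ℝ × ℝ) × ℝ => F p.2)
    (measurable_fst.fst.sub measurable_snd) measurable_fst.snd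
    (hF.comp (measurable_fst.snd.prodMk measurable_snd))).enorm

theorem exists_exhaustion_schrodingerDecay_le (ν : ℝ) :
    ∃ A : ℕ → Set ℝ, (∀ n, MeasurableSet (A n)) ∧ Monotone A ∧ (∀ t, ∃ n, t ∈ A n) ∧
      (∀ n, volume (A n) ≠ ∞) ∧ ∀ n, ∀ t ∈ A n, schrodingerDecay ν t ≤ n := by
  refine ⟨fun n => Metric.closedBall 0 n ∩ {t | schrodingerDecay ν t ≤ n}, fun n => ?_,
    fun m n hmn => ?_, fun t => ?_, fun n => ?_, fun n t ht => ht.2⟩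
  · refine measurableSet_closedBall.inter (measurableSet_le ?_ measurable_const)
    unfold schrodingerDecay
    fun_prop
  · exact inter_subset_inter (Metric.closedBall_subset_closedBall (Nat.cast_le.2 hmn))
      fun t (ht : schrodingerDecay ν t ≤ m) => ht.trans (Nat.cast_le.2 hmn)
  · obtain ⟨n, hn⟩ := exists_nat_ge (max |t| (schrodingerDecay ν t))
    exact ⟨n, by simpa using le_of_max_le_left hn, le_of_max_le_right hn⟩
  · exact ((measure_mono inter_subset_left).trans_lt measure_closedBall_lt_top).ne

theorem mixedELpNorm_duhamelMajorant_le (hν : -1 / 2 ≤ ν) (hq2 : 2 < q)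
    (hq : q.HolderConjugate q') (hr2 : 2 < r) (hr : r.HolderConjugate r')
    (hqr : 2 / q = (ν + 1) * (1 - 2 / r)) {f : ℝ → ℂ} (hf : Integrable f (powMeasure (2 * ν + 1)))
    {F : ℝ → ℝ → ℂ} (hF : Measurable (Function.uncurry F))
    (hF_int : ∀ᵐ s, Integrable (F s) (powMeasure (2 * ν + 1))) :
    mixedELpNorm q r (duhamelMajorant ν f F) volume (powMeasure (2 * ν + 1)) ≤
      ENNReal.ofReal (strichartzConst ν q r) ^ (1 / 2 : ℝ) *
          eLpNorm' f 2 (powMeasure (2 * ν + 1)) +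
        ENNReal.ofReal (strichartzConst ν q r) *
          mixedELpNorm q' r' F volume (powMeasure (2 * ν + 1)) := by
  obtain ⟨A, hA, hA_mono, hA_cover, hA_top, hA_decay⟩ := exists_exhaustion_schrodingerDecay_le ν
  refine mixedELpNorm_le_of_forall_isTestFunction hq hr hA hA_mono hA_cover hA_top
    (measurable_duhamelMajorant hf.1 hF) fun n h hh => ?_
  have hU : Measurable fun p : ℝ × ℝ => ‖schrodingerOp ν p.1 f p.2‖ₑ * h p.1 p.2 :=
    (measurable_schrodingerOp_of_aestronglyMeasurable measurable_fst
      measurable_snd hf.1).enorm.mul hh.measurable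
  have h_split (t : ℝ) : ∫⁻ x, duhamelMajorant ν f F t x * h t x ∂powMeasure (2 * ν + 1) =
      ∫⁻ x, ‖schrodingerOp ν t f x‖ₑ * h t x ∂powMeasure (2 * ν + 1) +
        ∫⁻ x, (∫⁻ s, ‖schrodingerOp ν (t - s) (F s) x‖ₑ) * h t x ∂powMeasure (2 * ν + 1) := by
    simp only [duhamelMajorant, add_mul]
    exact lintegral_add_left (hU.comp measurable_prodMk_left) _
  simp only [h_split]
  refine (lintegral_add_left hU.lintegral_prod_right' _).trans_le ?_
  rw [add_mul]
  exact add_le_add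
    (lintegral_lintegral_enorm_schrodingerOp_mul_le hν hq2 hq hr2 hr hqr (hA n) (hA_top n)
      (hA_decay n) hh hf)
    (lintegral_lintegral_lintegral_enorm_schrodingerOp_sub_mul_le hν hq2 hq hr2 hr hqr
      hh.measurable hF hF_int)

end StrichartzMixedNorm

section BesselKernel

variable {ν : ℝ}

theorem besselJ_eq_besselClifford (ν : ℂ) {z : ℝ} (hz : z ≠ 0) :
    besselJ ν z = (z / 2 : ℂ) ^ ν * besselClifford ν (-(z / 2 : ℂ) ^ 2) := by
  have h_ne : (z / 2 : ℂ) ≠ 0 := div_ne_zero (Complex.ofReal_ne_zero.2 hz) two_ne_zero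
  rw [besselJ, ← (hasSum_besselClifford _ _).tsum_eq, ← tsum_mul_left]
  refine tsum_congr fun k => ?_
  rw [Complex.cpow_add _ _ h_ne, Complex.Gamma_nat_eq_factorial,
    neg_pow ((z / 2 : ℂ) ^ 2), ← pow_mul, ← Complex.cpow_natCast _ (2 * k), add_right_comm]
  push_cast
  ring

theorem rpow_neg_mul_besselJ (ν : ℝ) {l x y : ℝ} (h : 0 < 2 * (l * x * y)) :
    ((2 * (l * x * y)) ^ (-ν) : ℝ) * besselJ ν (2 * (l * x * y)) =
      (2 ^ (-ν) : ℝ) * hankelKernel ν l x y := by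
  have h_pos : 0 < l * x * y := by linarith
  have h_half : ((2 * (l * x * y) : ℝ) / 2 : ℂ) = (l * x * y : ℝ) := by push_cast; ring
  rw [besselJ_eq_besselClifford _ h.ne', h_half, hankelKernel, ← Complex.ofReal_cpow h_pos.le,
    ← mul_assoc, ← Complex.ofReal_mul, Real.mul_rpow zero_le_two h_pos.le, mul_assoc (2 ^ (-ν)),
    ← Real.rpow_add h_pos, neg_add_cancel, Real.rpow_zero, mul_one]
  push_cast
  rfl

theorem two_mul_mul_ofReal_cpow (ν : ℝ) {s : ℝ} (hs : 0 < s) {u : ℂ} (hu : u ≠ 0) :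
    2 * (u * (4 * s : ℝ)) ^ (-(ν + 1) : ℂ) =
      Complex.exp (-(ν + 1) * Complex.log u) * ((2 * s) ^ (-(ν + 1)) : ℝ) * (2 ^ (-ν) : ℝ) := by
  have h_real : 2 * (4 * s) ^ (-(ν + 1)) = (2 * s) ^ (-(ν + 1)) * 2 ^ (-ν) := by
    rw [show 4 * s = 2 * (2 * s) by ring, Real.mul_rpow zero_le_two (by positivity),
      neg_add ν, Real.rpow_add two_pos, Real.rpow_neg_one]
    ring
  have h_cpow : (u * (4 * s : ℝ)) ^ (-(ν + 1) : ℂ) =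
      Complex.exp (-(ν + 1) * Complex.log u) * ((4 * s) ^ (-(ν + 1)) : ℝ) := by
    rw [Complex.cpow_def_of_ne_zero (by simp [hu, hs.ne']),
      Complex.log_mul_ofReal _ (by positivity) _ hu, add_mul, Complex.exp_add,
      Real.rpow_def_of_pos (by positivity), mul_comm (Complex.exp _), mul_comm (-(ν + 1) : ℂ)]
    push_cast
    rfl
  rw [h_cpow, mul_left_comm, mul_assoc]
  congr 1
  exact_mod_cast h_real

theorem Skernel_eq_schrodingerKernel {a : ℝ} (hν : a = 2 * ν + 1) (hν' : -1 < ν) {x y : ℝ}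
    (hx : 0 < x) (hy : 0 < y) (t : ℝ) : Skernel a x y t = schrodingerKernel ν t x y := by
  have h_order : (a - 1) / 2 = ν := by rw [hν]; ring
  have h_phase : (a + 1) * Real.pi / 4 = (ν + 1) * (Real.pi / 2) := by rw [hν]; ring
  have h_decay : -(a + 1) / 2 = -(ν + 1) := by rw [hν]; ring
  have h_power : (1 - a) / 2 = -ν := by rw [hν]; ring
  rw [Skernel, h_order, h_phase, h_decay, h_power]
  rcases eq_or_ne t 0 with rfl | ht
  · have h_exp : -(ν + 1) ≠ 0 := by linarith
    simp only [schrodingerKernel_zero hν', abs_zero, mul_zero, Real.zero_rpow h_exp,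
      Complex.ofReal_zero, zero_mul, ite_self]
  have h_arg : x * y / (2 * |t|) = 2 * (1 / (4 * |t|) * x * y) := by
    field_simp
    norm_num
  have h_abs : hankelKernel ν (1 / (4 * |t|)) x y = hankelKernel ν (1 / (4 * t)) x y := by
    rw [← hankelKernel_abs ν (1 / (4 * t)), abs_one_div, abs_mul, Nat.abs_ofNat]
  have h_bessel (c d : ℂ) :
      c * ((x * y / (2 * |t|)) ^ (-ν) : ℝ) * besselJ ν (x * y / (2 * |t|)) * d =
        c * (2 ^ (-ν) : ℝ) * d * hankelKernel ν (1 / (4 * t)) x y := by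
    rw [h_arg, mul_assoc c, rpow_neg_mul_besselJ ν (by positivity), h_abs]
    ring
  simp only [h_bessel, schrodingerKernel]
  rcases ht.lt_or_gt with ht | ht
  · have h_neg : Complex.I * (4 * t : ℝ) = -Complex.I * (4 * -t : ℝ) := by push_cast; ring
    have h_gauss : -Complex.I * ((x ^ 2 + y ^ 2) / (4 * -t) : ℝ) =
        ((x ^ 2 + y ^ 2) / (4 * t) : ℝ) * Complex.I := by
      rw [mul_neg (4 : ℝ), div_neg]
      push_cast
      ring
    rw [if_neg ht.not_gt, abs_of_neg ht, h_neg, two_mul_mul_ofReal_cpow ν (neg_pos.2 ht)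
      (neg_ne_zero.2 Complex.I_ne_zero), Complex.log_neg_I, h_gauss]
    push_cast
    ring_nf
  · rw [if_pos ht, abs_of_pos ht, two_mul_mul_ofReal_cpow ν ht Complex.I_ne_zero, Complex.log_I,
      mul_comm Complex.I (((x ^ 2 + y ^ 2) / (4 * t) : ℝ) : ℂ)]
    push_cast
    ring_nf

theorem integral_Skernel_eq_schrodingerOp {a : ℝ} (hν : a = 2 * ν + 1) (hν' : -1 < ν) {x : ℝ}
    (hx : 0 < x) (t : ℝ) (f : ℝ → ℂ) :
    ∫ y in Ioi (0 : ℝ), Skernel a x y t * f y * ((y ^ a : ℝ) : ℂ) = schrodingerOp ν t f x := by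
  rw [schrodingerOp, integral_powMeasure, ← hν]
  refine setIntegral_congr_fun measurableSet_Ioi fun y hy => ?_
  simp only [Complex.real_smul, Skernel_eq_schrodingerKernel hν hν' hx hy t, mul_comm]

end BesselKernel

section RealNorms

variable {X E : Type*} [MeasurableSpace X] {μ : Measure X} [NormedAddCommGroup E] {f : X → E}
  {r : ℝ}

theorem ofReal_integral_norm_rpow_of_integrable (hr : 0 < r)
    (hf : Integrable (fun x => ‖f x‖ ^ r) μ) :
    ENNReal.ofReal ((∫ x, ‖f x‖ ^ r ∂μ) ^ (1 / r)) = eLpNorm' f r μ := by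
  rw [← ENNReal.ofReal_rpow_of_nonneg (by positivity) (by positivity), eLpNorm',
    ofReal_integral_eq_lintegral_ofReal hf (ae_of_all _ fun x => by positivity)]
  simp only [ofReal_norm_rpow _ hr.le]

theorem ofReal_integral_norm_rpow_le (hr : 0 < r) (f : X → E) :
    ENNReal.ofReal ((∫ x, ‖f x‖ ^ r ∂μ) ^ (1 / r)) ≤ eLpNorm' f r μ := by
  by_cases hf : Integrable (fun x => ‖f x‖ ^ r) μ
  · exact (ofReal_integral_norm_rpow_of_integrable hr hf).le
  · rw [integral_undef hf, Real.zero_rpow (by positivity), ENNReal.ofReal_zero]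
    exact zero_le

theorem ofReal_integral_norm_rpow_eq (hr : 0 < r) (hf : AEStronglyMeasurable f μ)
    (h_top : eLpNorm' f r μ ≠ ∞) :
    ENNReal.ofReal ((∫ x, ‖f x‖ ^ r ∂μ) ^ (1 / r)) = eLpNorm' f r μ := by
  refine ofReal_integral_norm_rpow_of_integrable hr
    ⟨(hf.norm.aemeasurable.pow_const r).aestronglyMeasurable, ?_⟩
  simp only [HasFiniteIntegral,
    Real.enorm_of_nonneg (Real.rpow_nonneg (norm_nonneg _) r)]
  simpa only [ofReal_norm_rpow _ hr.le] using
    lintegral_rpow_enorm_lt_top_of_eLpNorm'_lt_top hr h_top.lt_top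

end RealNorms

section WeightedNorms

variable {a q r : ℝ}

theorem LrA_eq_integral_powMeasure (a r : ℝ) (f : ℝ → ℂ) :
    LrA a r f = (∫ x, ‖f x‖ ^ r ∂powMeasure a) ^ (1 / r) := by
  simp only [LrA, integral_powMeasure, smul_eq_mul, mul_comm]

theorem LrA_nonneg (a r : ℝ) (f : ℝ → ℂ) : 0 ≤ LrA a r f := by
  rw [LrA_eq_integral_powMeasure]
  positivity

theorem ofReal_LrA_le (hr : 0 < r) (f : ℝ → ℂ) :
    ENNReal.ofReal (LrA a r f) ≤ eLpNorm' f r (powMeasure a) :=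
  LrA_eq_integral_powMeasure a r f ▸ ofReal_integral_norm_rpow_le hr f

theorem ofReal_LrA_eq (hr : 0 < r) {f : ℝ → ℂ} (hf : AEStronglyMeasurable f (powMeasure a))
    (h_top : eLpNorm' f r (powMeasure a) ≠ ∞) :
    ENNReal.ofReal (LrA a r f) = eLpNorm' f r (powMeasure a) :=
  LrA_eq_integral_powMeasure a r f ▸ ofReal_integral_norm_rpow_eq hr hf h_top

theorem mixedNorm_eq_integral_norm (a q r : ℝ) (u : ℝ → ℝ → ℂ) :
    mixedNorm a q r u = (∫ t, ‖LrA a r (fun x => u x t)‖ ^ q) ^ (1 / q) := by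
  simp only [mixedNorm, Real.norm_of_nonneg (LrA_nonneg _ _ _)]

theorem mixedNorm_nonneg (a q r : ℝ) (u : ℝ → ℝ → ℂ) : 0 ≤ mixedNorm a q r u := by
  rw [mixedNorm_eq_integral_norm]
  positivity

theorem ofReal_mixedNorm_le (hq : 0 < q) (hr : 0 < r) (u : ℝ → ℝ → ℂ) :
    ENNReal.ofReal (mixedNorm a q r u) ≤
      mixedELpNorm q r (fun t x => u x t) volume (powMeasure a) := by
  rw [mixedNorm_eq_integral_norm]
  refine (ofReal_integral_norm_rpow_le hq _).trans
    (eLpNorm'_mono_enorm_ae hq.le (ae_of_all _ fun t => ?_))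
  rw [Real.enorm_of_nonneg (LrA_nonneg _ _ _), enorm_eq_self]
  exact ofReal_LrA_le hr _

theorem ofReal_mixedNorm_eq (hq : 0 < q) (hr : 0 < r) {F G : ℝ → ℝ → ℂ}
    (hG : Measurable (Function.uncurry G))
    (hFG : ∀ᵐ t, (fun x => F x t) =ᵐ[powMeasure a] G t)
    (h_top : mixedELpNorm q r G volume (powMeasure a) ≠ ∞) :
    ENNReal.ofReal (mixedNorm a q r F) = mixedELpNorm q r G volume (powMeasure a) := by
  have h_meas : Measurable fun t => eLpNorm' (G t) r (powMeasure a) :=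
    measurable_eLpNorm'_slice hG r
  have h_finite : ∀ᵐ t, eLpNorm' (G t) r (powMeasure a) < ∞ := by
    have h := ae_lt_top (h_meas.enorm.pow_const q)
      (lintegral_rpow_enorm_lt_top_of_eLpNorm'_lt_top hq h_top.lt_top).ne
    filter_upwards [h] with t ht
    exact (ENNReal.rpow_lt_top_iff_of_pos hq).1 ht
  have h_slice : ∀ᵐ t,
      ENNReal.ofReal (LrA a r fun x => F x t) = eLpNorm' (G t) r (powMeasure a) := by
    filter_upwards [hFG, h_finite] with t ht h_lt
    rw [← eLpNorm'_congr_ae ht]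
    exact ofReal_LrA_eq hr (hG.of_uncurry_left.aestronglyMeasurable.congr ht.symm)
      (by rwa [eLpNorm'_congr_ae ht, ← lt_top_iff_ne_top])
  have h_norm : eLpNorm' (fun t => LrA a r fun x => F x t) q volume =
      mixedELpNorm q r G volume (powMeasure a) := by
    refine eLpNorm'_congr_enorm_ae ?_
    filter_upwards [h_slice] with t ht
    rw [Real.enorm_of_nonneg (LrA_nonneg _ _ _), ht, enorm_eq_self]
  have h_LrA : AEStronglyMeasurable (fun t => LrA a r fun x => F x t) volume := by
    refine h_meas.ennreal_toReal.aestronglyMeasurable.congr ?_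
    filter_upwards [h_slice] with t ht
    rw [← ht, ENNReal.toReal_ofReal (LrA_nonneg _ _ _)]
  rw [mixedNorm_eq_integral_norm, ofReal_integral_norm_rpow_eq hq h_LrA (h_norm ▸ h_top), h_norm]

end WeightedNorms

section DuhamelFormula

variable {a ν : ℝ}

theorem enorm_intervalIntegral_le_lintegral_enorm {E : Type*} [NormedAddCommGroup E]
    [NormedSpace ℝ E] (f : ℝ → E) (b c : ℝ) : ‖∫ s in b..c, f s‖ₑ ≤ ∫⁻ s, ‖f s‖ₑ := by
  rw [← ofReal_norm, intervalIntegral.norm_intervalIntegral_eq, ofReal_norm]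
  exact (enorm_integral_le_lintegral_enorm _).trans (setLIntegral_le_lintegral _ _)

theorem enorm_duhamel_le (hν : a = 2 * ν + 1) (hν' : -1 < ν) {φ : ℝ → ℂ} {F G : ℝ → ℝ → ℂ}
    (hFG : ∀ᵐ s, (fun y => F y s) =ᵐ[powMeasure a] G s) {x : ℝ} (hx : 0 < x) (t : ℝ) :
    ‖Sop a t φ x + ∫ s in (0 : ℝ)..t, ∫ y in Ioi (0 : ℝ),
      Skernel a x y (t - s) * F y s * ((y ^ a : ℝ) : ℂ)‖ₑ ≤ duhamelMajorant ν φ G t x := by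
  simp only [Sop, integral_Skernel_eq_schrodingerOp hν hν' hx _ φ,
    integral_Skernel_eq_schrodingerOp hν hν' hx _ fun y => F y _]
  refine (enorm_add_le _ _).trans (add_le_add_right
    ((enorm_intervalIntegral_le_lintegral_enorm _ _ _).trans_eq (lintegral_congr_ae ?_)) _)
  filter_upwards [hFG] with s hs
  rw [schrodingerOp, schrodingerOp, ← hν]
  refine congrArg _ (integral_congr_ae ?_)
  filter_upwards [hs] with y hy
  rw [hy]

theorem Admissible.two_lt {q r : ℝ} (ha : 0 ≤ a) (h : Admissible a q r) : 2 < q := by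
  obtain ⟨hr, hr_lt, hqr⟩ := h
  have h_inv : 0 < 1 / r := by positivity
  have h_pos : 0 < 1 / 2 - 1 / r := sub_pos.2 (one_div_lt_one_div_of_lt two_pos hr)
  have hq : 0 < q := (div_pos_iff_of_pos_left two_pos).1 (hqr ▸ by positivity)
  suffices (a + 1) * (1 / 2 - 1 / r) < 1 by rwa [← hqr, div_lt_one hq] at this
  rcases le_or_gt a 1 with ha1 | ha1
  · nlinarith
  · have h_upper : (a - 1) / (2 * (a + 1)) < 1 / r := by
      rw [← one_div_div]
      exact one_div_lt_one_div_of_lt (by positivity) (hr_lt ha1)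
    rw [div_lt_iff₀ (by positivity)] at h_upper
    linarith

end DuhamelFormula

section SchwartzClasses

variable {a : ℝ}

theorem eLpNorm'_ne_top_of_integrable_of_norm_le {X E : Type*} [MeasurableSpace X]
    [NormedAddCommGroup E] {μ : Measure X} {f : X → E} (hf : Integrable f μ) {C : ℝ}
    (hC : ∀ᵐ x ∂μ, ‖f x‖ ≤ C) {p : ℝ} (hp : 1 ≤ p) : eLpNorm' f p μ ≠ ∞ := by
  have h_le : ∀ᵐ x ∂μ, ‖f x‖ₑ ^ p ≤ ENNReal.ofReal C ^ (p - 1) * ‖f x‖ₑ := by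
    filter_upwards [hC] with x hx
    calc ‖f x‖ₑ ^ p = ‖f x‖ₑ ^ (p - 1) * ‖f x‖ₑ := by
          conv_lhs => rw [← sub_add_cancel p 1]
          rw [ENNReal.rpow_add_of_nonneg _ _ (sub_nonneg.2 hp) zero_le_one, ENNReal.rpow_one]
      _ ≤ ENNReal.ofReal C ^ (p - 1) * ‖f x‖ₑ := by
          rw [← ofReal_norm]
          gcongr
  have h_top : ENNReal.ofReal C ^ (p - 1) ≠ ∞ :=
    ENNReal.rpow_ne_top_of_nonneg (sub_nonneg.2 hp) ENNReal.ofReal_ne_top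
  refine ENNReal.rpow_ne_top_of_nonneg (by positivity)
    (ne_top_of_le_ne_top ?_ (lintegral_mono_ae h_le))
  rw [lintegral_const_mul' _ _ h_top]
  exact ENNReal.mul_ne_top h_top hf.2.ne

/-- A decaying weight, integrable against `x ^ a` on the half-line. -/
noncomputable def decayWeight (a x : ℝ) : ℝ :=
  ((1 + x ^ 2) ^ (⌈a⌉₊ + 1))⁻¹

theorem decayWeight_nonneg (a x : ℝ) : 0 ≤ decayWeight a x := by
  unfold decayWeight
  positivity

theorem decayWeight_le_one (a x : ℝ) : decayWeight a x ≤ 1 :=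
  inv_le_one_of_one_le₀ (one_le_pow₀ (le_add_of_nonneg_right (sq_nonneg x)))

theorem integrable_decayWeight (ha : 0 ≤ a) : Integrable (decayWeight a) (powMeasure a) := by
  rw [integrable_powMeasure_iff]
  refine integrable_inv_one_add_sq.integrableOn.mono'
    (by unfold decayWeight; fun_prop) ?_
  filter_upwards [ae_restrict_mem measurableSet_Ioi] with x (hx : 0 < x)
  have h_growth : x ^ a ≤ (1 + x ^ 2) ^ ⌈a⌉₊ := by
    calc x ^ a ≤ (1 + x ^ 2) ^ a :=
          Real.rpow_le_rpow hx.le (by nlinarith [sq_nonneg (x - 1)]) ha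
      _ ≤ (1 + x ^ 2) ^ (⌈a⌉₊ : ℝ) :=
          Real.rpow_le_rpow_of_exponent_le (le_add_of_nonneg_right (sq_nonneg x)) (Nat.le_ceil a)
      _ = (1 + x ^ 2) ^ ⌈a⌉₊ := Real.rpow_natCast _ _
  rw [smul_eq_mul, Real.norm_of_nonneg (mul_nonneg (by positivity) (decayWeight_nonneg a x)),
    decayWeight, pow_succ, mul_inv, ← mul_assoc]
  exact mul_le_of_le_one_left (by positivity) (mul_inv_le_one_of_le₀ h_growth (by positivity))

theorem eLpNorm'_decayWeight_ne_top (ha : 0 ≤ a) {p : ℝ} (hp : 1 ≤ p) :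
    eLpNorm' (decayWeight a) p (powMeasure a) ≠ ∞ :=
  eLpNorm'_ne_top_of_integrable_of_norm_le (integrable_decayWeight ha) (C := 1)
    (ae_of_all _ fun x => by
      rw [Real.norm_of_nonneg (decayWeight_nonneg a x)]
      exact decayWeight_le_one a x) hp

theorem eLpNorm'_le_of_norm_le_mul_decayWeight {f : ℝ → ℂ} {C : ℝ}
    (hf : ∀ x > 0, ‖f x‖ ≤ C * decayWeight a x) {p : ℝ} (hp : 0 < p) :
    eLpNorm' f p (powMeasure a) ≤ ‖C‖ₑ * eLpNorm' (decayWeight a) p (powMeasure a) := by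
  rw [← eLpNorm'_const_smul C hp]
  refine eLpNorm'_mono_ae hp.le ?_
  filter_upwards [ae_powMeasure_pos a] with x hx
  exact (hf x hx).trans (le_abs_self _)

theorem integrable_of_norm_le_mul_decayWeight (ha : 0 ≤ a) {f : ℝ → ℂ}
    (hf : AEStronglyMeasurable f (powMeasure a)) {C : ℝ}
    (hC : ∀ x > 0, ‖f x‖ ≤ C * decayWeight a x) : Integrable f (powMeasure a) :=
  ((integrable_decayWeight ha).const_mul C).mono' hf ((ae_powMeasure_pos a).mono hC)

theorem powMeasure_absolutelyContinuous (a : ℝ) : powMeasure a ≪ volume.restrict (Ioi 0) :=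
  withDensity_absolutelyContinuous _ _

theorem SPlus.aestronglyMeasurable {φ : ℝ → ℂ} (hφ : SPlus φ) (a : ℝ) :
    AEStronglyMeasurable φ (powMeasure a) :=
  (hφ.1.continuousOn.aestronglyMeasurable measurableSet_Ioi).mono_ac
    (powMeasure_absolutelyContinuous a)

theorem SPlus.exists_norm_le_mul_decayWeight {φ : ℝ → ℂ} (hφ : SPlus φ) (a : ℝ) :
    ∃ C, ∀ x > 0, ‖φ x‖ ≤ C * decayWeight a x := by
  let n := ⌈a⌉₊ + 1
  obtain ⟨C₀, h₀⟩ := hφ.2 0 0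
  obtain ⟨C₁, h₁⟩ := hφ.2 (2 * n) 0
  simp only [DIter, norm_mul, norm_pow, Complex.norm_real, pow_zero, one_mul] at h₀ h₁
  refine ⟨2 ^ (n - 1) * (C₀ + C₁), fun x hx => ?_⟩
  have h_pow : (1 + x ^ 2) ^ n ≤ 2 ^ (n - 1) * (1 + x ^ (2 * n)) := by
    simpa only [one_pow, ← pow_mul] using add_pow_le zero_le_one (sq_nonneg x) n
  have h_moment := h₁ x hx
  rw [Real.norm_of_nonneg hx.le] at h_moment
  rw [decayWeight, ← div_eq_mul_inv, le_div_iff₀ (by positivity)]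
  calc ‖φ x‖ * (1 + x ^ 2) ^ n ≤ ‖φ x‖ * (2 ^ (n - 1) * (1 + x ^ (2 * n))) := by gcongr
    _ = 2 ^ (n - 1) * (‖φ x‖ + x ^ (2 * n) * ‖φ x‖) := by ring
    _ ≤ 2 ^ (n - 1) * (C₀ + C₁) := by gcongr; exact h₀ x hx

theorem SPlus.integrable {φ : ℝ → ℂ} (hφ : SPlus φ) (ha : 0 ≤ a) : Integrable φ (powMeasure a) :=
  let ⟨_, hC⟩ := hφ.exists_norm_le_mul_decayWeight a
  integrable_of_norm_le_mul_decayWeight ha (hφ.aestronglyMeasurable a) hC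

theorem SPlus.eLpNorm'_ne_top {φ : ℝ → ℂ} (hφ : SPlus φ) (ha : 0 ≤ a) {p : ℝ} (hp : 1 ≤ p) :
    eLpNorm' φ p (powMeasure a) ≠ ∞ :=
  let ⟨_, hC⟩ := hφ.exists_norm_le_mul_decayWeight a
  ne_top_of_le_ne_top (ENNReal.mul_ne_top enorm_ne_top (eLpNorm'_decayWeight_ne_top ha hp))
    (eLpNorm'_le_of_norm_le_mul_decayWeight hC (by linarith))

variable {F : ℝ → ℝ → ℂ}

theorem SPlusT.aestronglyMeasurable (hF : SPlusT F) (a : ℝ) :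
    AEStronglyMeasurable (Function.uncurry F) ((powMeasure a).prod volume) := by
  have h_ac : (powMeasure a).prod (volume : Measure ℝ) ≪
      ((volume : Measure ℝ).prod volume).restrict (Ioi 0 ×ˢ univ) := by
    rw [← Measure.prod_restrict, Measure.restrict_univ]
    exact (powMeasure_absolutelyContinuous a).prod Measure.AbsolutelyContinuous.rfl
  exact (hF.1.continuousOn.aestronglyMeasurable
    (measurableSet_Ioi.prod MeasurableSet.univ)).mono_ac h_ac

theorem SPlusT.aestronglyMeasurable_slice (hF : SPlusT F) (a s : ℝ) :
    AEStronglyMeasurable (fun x => F x s) (powMeasure a) :=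
  ((hF.1.continuousOn.comp (f := fun x => (x, s)) (by fun_prop)
    fun _ hx => ⟨hx, mem_univ s⟩).aestronglyMeasurable measurableSet_Ioi).mono_ac
      (powMeasure_absolutelyContinuous a)

theorem SPlusT.exists_norm_le_mul_decayWeight (hF : SPlusT F) (a : ℝ) :
    ∃ C, ∀ s, ∀ x > 0, ‖F x s‖ ≤ C * (1 + s ^ 2)⁻¹ * decayWeight a x := by
  let n := ⌈a⌉₊ + 1
  obtain ⟨C, hC⟩ := hF.2 (2 * (n + 1))
  refine ⟨C, fun s x hx => ?_⟩
  have h_exp : ((2 * (n + 1) : ℕ) : ℝ) / 2 = (n + 1 : ℕ) := by push_cast; ring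
  have h_decay := hC 0 0 (Nat.zero_le _) x hx s
  simp only [DxIter, DtIter, iteratedDeriv_zero, h_exp, Real.rpow_natCast] at h_decay
  rw [decayWeight, ← div_eq_mul_inv, ← div_eq_mul_inv, le_div_iff₀ (by positivity),
    le_div_iff₀ (by positivity)]
  calc ‖F x s‖ * (1 + x ^ 2) ^ n * (1 + s ^ 2)
      ≤ ‖F x s‖ * (1 + x ^ 2 + s ^ 2) ^ n * (1 + x ^ 2 + s ^ 2) := by
        have h_space : 1 + x ^ 2 ≤ 1 + x ^ 2 + s ^ 2 := le_add_of_nonneg_right (sq_nonneg s)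
        have h_time : 1 + s ^ 2 ≤ 1 + x ^ 2 + s ^ 2 := by linarith [sq_nonneg x]
        gcongr
    _ = (1 + x ^ 2 + s ^ 2) ^ (n + 1) * ‖F x s‖ := by ring
    _ ≤ C := h_decay

theorem SPlusT.integrable (hF : SPlusT F) (ha : 0 ≤ a) (s : ℝ) :
    Integrable (fun x => F x s) (powMeasure a) :=
  let ⟨_, hC⟩ := hF.exists_norm_le_mul_decayWeight a
  integrable_of_norm_le_mul_decayWeight ha (hF.aestronglyMeasurable_slice a s) (hC s)

theorem SPlusT.mixedELpNorm_ne_top (hF : SPlusT F) (ha : 0 ≤ a) {p r : ℝ} (hp : 1 ≤ p)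
    (hr : 1 ≤ r) : mixedELpNorm p r (fun s x => F x s) volume (powMeasure a) ≠ ∞ := by
  obtain ⟨C, hC⟩ := hF.exists_norm_le_mul_decayWeight a
  let K := (eLpNorm' (decayWeight a) r (powMeasure a)).toReal
  have hK : ‖K‖ₑ = eLpNorm' (decayWeight a) r (powMeasure a) :=
    Real.enorm_toReal (eLpNorm'_decayWeight_ne_top ha hr)
  have h_slice (s : ℝ) :
      ‖eLpNorm' (fun x => F x s) r (powMeasure a)‖ₑ ≤ ‖(C * K) • (1 + s ^ 2)⁻¹‖ₑ := by
    rw [enorm_eq_self, smul_eq_mul, mul_right_comm, enorm_mul, hK]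
    exact eLpNorm'_le_of_norm_le_mul_decayWeight (hC s) (by linarith)
  refine ne_top_of_le_ne_top ?_ (eLpNorm'_mono_enorm_ae (by linarith) (ae_of_all _ h_slice))
  refine eLpNorm'_ne_top_of_integrable_of_norm_le (integrable_inv_one_add_sq.smul (C * K))
    (C := ‖C * K‖) (ae_of_all _ fun s => ?_) hp
  rw [Pi.smul_apply, norm_smul, norm_inv, Real.norm_of_nonneg (by positivity : 0 ≤ 1 + s ^ 2)]
  exact mul_le_of_le_one_right (norm_nonneg _)
    (inv_le_one_of_one_le₀ (le_add_of_nonneg_right (sq_nonneg s)))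

end SchwartzClasses

section StrichartzEstimate

variable {a ν q q' r r' : ℝ}

theorem one_le_div_sub_one (hq : 1 < q) : 1 ≤ q / (q - 1) :=
  (one_le_div (sub_pos.2 hq)).2 (sub_le_self q zero_le_one)

theorem strichartzConst_nonneg (ν : ℝ) (hq : 2 < q) (hr : 2 < r) : 0 ≤ strichartzConst ν q r := by
  have h_interpolation := interpolationConst_nonneg hr
  have h_integration := fractionalIntegrationConst_pos hq
  unfold strichartzConst dispersiveConst
  positivity

theorem mixedNorm_duhamel_le (hν : a = 2 * ν + 1) (hν' : -1 / 2 ≤ ν) (hq2 : 2 < q)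
    (hq : q.HolderConjugate q') (hr2 : 2 < r) (hr : r.HolderConjugate r')
    (hqr : 2 / q = (ν + 1) * (1 - 2 / r)) {φ : ℝ → ℂ} (hφ : Integrable φ (powMeasure a))
    (hφ_top : eLpNorm' φ 2 (powMeasure a) ≠ ∞) {F G : ℝ → ℝ → ℂ}
    (hG : Measurable (Function.uncurry G)) (hFG : ∀ᵐ s, (fun x => F x s) =ᵐ[powMeasure a] G s)
    (hG_int : ∀ᵐ s, Integrable (G s) (powMeasure a))
    (hG_top : mixedELpNorm q' r' G volume (powMeasure a) ≠ ∞) :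
    mixedNorm a q r (fun x t => Sop a t φ x + ∫ s in (0 : ℝ)..t, ∫ y in Ioi (0 : ℝ),
        Skernel a x y (t - s) * F y s * ((y ^ a : ℝ) : ℂ)) ≤
      √(strichartzConst ν q r) * LrA a 2 φ + strichartzConst ν q r * mixedNorm a q' r' F := by
  have h_const := strichartzConst_nonneg ν hq2 hr2
  have h_source := mixedNorm_nonneg a q' r' F
  have h_data := LrA_nonneg a 2 φ
  rw [← ENNReal.ofReal_le_ofReal_iff (by positivity)]
  calc _ ≤ _ := ofReal_mixedNorm_le hq.pos hr.pos _
    _ ≤ mixedELpNorm q r (duhamelMajorant ν φ G) volume (powMeasure a) := by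
        refine eLpNorm'_mono_enorm_ae hq.nonneg (ae_of_all _ fun t =>
          eLpNorm'_mono_enorm_ae hr.nonneg ?_)
        filter_upwards [ae_powMeasure_pos a] with x hx
        exact enorm_duhamel_le hν (by linarith) hFG hx t
    _ ≤ ENNReal.ofReal (strichartzConst ν q r) ^ (1 / 2 : ℝ) * eLpNorm' φ 2 (powMeasure a) +
          ENNReal.ofReal (strichartzConst ν q r) * mixedELpNorm q' r' G volume (powMeasure a) := by
        subst hν
        exact mixedELpNorm_duhamelMajorant_le hν' hq2 hq hr2 hr hqr hφ hG hG_int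
    _ = _ := by
        rw [ENNReal.ofReal_add (by positivity) (by positivity), ENNReal.ofReal_mul (by positivity),
          ENNReal.ofReal_mul h_const, Real.sqrt_eq_rpow,
          ← ENNReal.ofReal_rpow_of_nonneg h_const (by positivity),
          ofReal_LrA_eq two_pos hφ.1 hφ_top,
          ofReal_mixedNorm_eq hq.symm.pos hr.symm.pos hG hFG hG_top]

theorem strichartz_estimate_general (a q r : ℝ) (ha : 0 ≤ a) (hadm : Admissible a q r) :
    ∃ C > (0 : ℝ), ∀ φ : ℝ → ℂ, Integrable φ (powMeasure a) →
      eLpNorm' φ 2 (powMeasure a) ≠ ∞ → ∀ F : ℝ → ℝ → ℂ,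
      AEStronglyMeasurable (Function.uncurry F) ((powMeasure a).prod volume) →
      (∀ᵐ s, Integrable (fun x => F x s) (powMeasure a)) →
      mixedELpNorm (q / (q - 1)) (r / (r - 1)) (fun s x => F x s) volume (powMeasure a) ≠ ∞ →
      mixedNorm a q r (fun x t => Sop a t φ x + ∫ s in (0 : ℝ)..t, ∫ y in Ioi (0 : ℝ),
          Skernel a x y (t - s) * F y s * ((y ^ a : ℝ) : ℂ)) ≤
        C * (LrA a 2 φ + mixedNorm a (q / (q - 1)) (r / (r - 1)) F) := by
  have hq2 := hadm.two_lt ha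
  obtain ⟨hr2, -, hqr⟩ := hadm
  obtain ⟨ν, hν⟩ : ∃ ν, a = 2 * ν + 1 := ⟨(a - 1) / 2, by ring⟩
  have h_const := strichartzConst_nonneg ν hq2 hr2
  refine ⟨√(strichartzConst ν q r) + strichartzConst ν q r + 1, by positivity,
    fun φ hφ hφ_top F hF hF_int hF_top => ?_⟩
  let G (s x : ℝ) : ℂ := hF.prod_swap.mk _ (s, x)
  have hG : Measurable (Function.uncurry G) := hF.prod_swap.stronglyMeasurable_mk.measurable
  have hFG : ∀ᵐ s, (fun x => F x s) =ᵐ[powMeasure a] G s :=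
    Measure.ae_ae_of_ae_prod hF.prod_swap.ae_eq_mk
  have h_norm : mixedELpNorm (q / (q - 1)) (r / (r - 1)) (fun s x => F x s) volume (powMeasure a) =
      mixedELpNorm (q / (q - 1)) (r / (r - 1)) G volume (powMeasure a) :=
    eLpNorm'_congr_ae (hFG.mono fun s hs => eLpNorm'_congr_ae hs)
  have h_estimate := mixedNorm_duhamel_le hν (by linarith) hq2
    (Real.HolderConjugate.conjExponent (by linarith)) hr2
    (Real.HolderConjugate.conjExponent (by linarith)) (by rw [hqr, hν]; ring) hφ hφ_top
    hG hFG (by filter_upwards [hFG, hF_int] with s hs h_int using h_int.congr hs) (h_norm ▸ hF_top)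
  refine h_estimate.trans ?_
  have h_source := mixedNorm_nonneg a (q / (q - 1)) (r / (r - 1)) F
  have h_data := LrA_nonneg a 2 φ
  have h_sqrt := Real.sqrt_nonneg (strichartzConst ν q r)
  rw [mul_add]
  exact add_le_add (mul_le_mul_of_nonneg_right (by linarith) h_data)
    (mul_le_mul_of_nonneg_right (by linarith) h_source)

end StrichartzEstimate

/-- Strichartz estimate for the Cauchy problem: for `a ≥ 0` and an `a`-admissible pair `(q,r)`,
`‖u‖_{L^q_t L^r_a} ≤ C(a,r)(‖φ‖_{L²_a} + ‖F‖_{L^{q'}_t L^{r'}_a})`. -/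
theorem strichartz_estimate (a q r : ℝ) (ha : 0 ≤ a) (hadm : Admissible a q r) :
    ∃ C > (0:ℝ), ∀ φ : ℝ → ℂ, SPlus φ → ∀ F : ℝ → ℝ → ℂ, SPlusT F →
      mixedNorm a q r (fun x t =>
          Sop a t φ x +
            ∫ s in (0:ℝ)..t, ∫ y in Ioi (0:ℝ),
              Skernel a x y (t - s) * F y s * ((y ^ a : ℝ) : ℂ)) ≤
        C * (LrA a 2 φ + mixedNorm a (q / (q - 1)) (r / (r - 1)) F) := by
  obtain ⟨C, hC, h⟩ := strichartz_estimate_general a q r ha hadm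
  exact ⟨C, hC, fun φ hφ F hF => h φ (hφ.integrable ha) (hφ.eLpNorm'_ne_top ha one_le_two) F
    (hF.aestronglyMeasurable a) (ae_of_all _ (hF.integrable ha))
    (hF.mixedELpNorm_ne_top ha (one_le_div_sub_one (one_lt_two.trans (hadm.two_lt ha)))
      (one_le_div_sub_one (one_lt_two.trans hadm.1)))⟩
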